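/- arXiv:1407.6149 — 7 statements merged into one kernel-verified Lean document; each statement's English description precedes it below -/
import Mathlib

section
/- Let q be an odd prime power, n ≥ 2 an integer, and let M be an invertible symmetric (2n+1)×(2n+1) matrix over F_q. Then there exists a nonzero antisymmetric (2n+1)×(2n+1) matrix S over F_q such that the number of 2-dimensional subspaces of F_q^{2n+1} that are totally singular for M and totally isotropic for S equals f_max(n,q) := (q^{n-1}−1)·(q^{3n-2}+q^{3n-3}−q^{3n-4}+q^{2n}−q^{n-1}−1)/((q−1)²·(q+1)). -/
open Matrix

/-!
Write `B` for the bilinear form of `M` and take the alternating form of rank two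
`φ(x, y) = B u x * B z y - B z x * B u y`, where `u ≠ 0` is singular, `z` is nonsingular,
`z ⊥ u`, and the orthogonal complement of `z` is a hyperbolic space. The number of totally singular
planes that are isotropic for `φ` is the number of all totally singular planes minus the number of
those on which `φ` does not vanish.

* All planes (`card_singular_planes`): with `n = m + 1` there are `q ^ (2m + 2)` singular vectors,
  and `q ^ (2m + 1)` of them are orthogonal to a given nonzero singular vector, so there are
  `(q ^ (2m + 2) - 1) (q ^ (2m + 1) - q)` ordered bases of totally singular planes, and
  `(q² - 1) (q² - q)` for each plane.
* Planes with `φ ≠ 0`: such a plane has a unique basis `p, r` with `B u p = 1`, `B z p = 0`,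
  `B u r = 0`, `B z r = B z z` (`card_nonisotropic_planes`). Complete `u` to a hyperbolic pair
  `(u, w)` with `w ⊥ z` and put `K = ⟨u, w⟩^⊥`. Then `(p, r)` is determined by the
  `K`-components, which are an arbitrary vector of `K` orthogonal to `z` and a singular vector
  `k'` of `K` with `B z k' = B z z` (`card_adapted_pairs`). This gives
  `q ^ (2m) * (q ^ (2m - 1) - q ^ (m - 1))` planes.

The number of singular vectors and the existence of `z` with the right number of vectors `k'` are
proved together by splitting off hyperbolic planes (`counts`).
-/

namespace PolarLines

set_option linter.unusedSectionVars false

open Module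

/-! ### Elementary counts -/

lemma card_split {α : Type*} [Finite α] (p r : α → Prop) :
    Nat.card {a // p a} = Nat.card {a // p a ∧ r a} + Nat.card {a // p a ∧ ¬ r a} := by
  classical
  rw [← Nat.card_sum]
  exact Nat.card_congr ((Equiv.sumCompl (fun x : {a // p a} => r x.1)).symm.trans
    (Equiv.sumCongr (Equiv.subtypeSubtypeEquivSubtypeInter p r)
      (Equiv.subtypeSubtypeEquivSubtypeInter p (fun a => ¬ r a))))

variable {F : Type*} [Field F] [Finite F]

lemma card_ne_zero_add_one : Nat.card {x : F // x ≠ 0} + 1 = Nat.card F := by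
  have h := Nat.card_units F
  rw [Nat.card_congr unitsEquivNeZero] at h
  have := Nat.card_pos (α := F)
  omega

/-- Over a finite set `K` of parameters, `2xy + g k = 0` has one solution `x` for each `k` and each
`y ≠ 0`, while for `y = 0` it forces `g k = 0` and leaves `x` free. -/
lemma card_hyperbolic (h2 : (2 : F) ≠ 0) {K : Type*} [Finite K] (g : K → F) :
    Nat.card {t : F × F × K // 2 * t.1 * t.2.1 + g t.2.2 = 0} + Nat.card K =
      Nat.card F * Nat.card K + Nat.card F * Nat.card {k // g k = 0} := by
  rw [card_split _ (fun t => t.2.1 = 0)]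
  have e0 : {t : F × F × K // 2 * t.1 * t.2.1 + g t.2.2 = 0 ∧ t.2.1 = 0} ≃
      F × {k // g k = 0} :=
    { toFun := fun t => (t.1.1, ⟨t.1.2.2, by simpa [t.2.2] using t.2.1⟩)
      invFun := fun s => ⟨(s.1, 0, s.2.1), by simp [s.2.2]⟩
      left_inv := by
        rintro ⟨⟨x, y, k⟩, h, hy⟩
        simp only at hy
        simp [hy]
      right_inv := by
        rintro ⟨x, k, hk⟩
        simp }
  have e1 : {t : F × F × K // 2 * t.1 * t.2.1 + g t.2.2 = 0 ∧ ¬ t.2.1 = 0} ≃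
      {y : F // y ≠ 0} × K :=
    { toFun := fun t => (⟨t.1.2.1, t.2.2⟩, t.1.2.2)
      invFun := fun s => ⟨(- g s.2 / (2 * s.1.1), s.1.1, s.2), by
        have := s.1.2
        refine ⟨?_, this⟩
        field_simp
        ring⟩
      left_inv := by
        rintro ⟨⟨x, y, k⟩, h, hy⟩
        simp only at hy h
        simp only [Subtype.mk.injEq, Prod.mk.injEq, and_true]
        field_simp
        linear_combination -h
      right_inv := by
        rintro ⟨⟨y, hy⟩, k⟩
        simp }
  rw [Nat.card_congr e0, Nat.card_congr e1, Nat.card_prod, Nat.card_prod,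
    ← card_ne_zero_add_one (F := F)]
  ring

variable {V : Type*} [AddCommGroup V] [Module F V]

lemma card_fiber_mul (f : V →ₗ[F] F) (hf : ∃ v, f v ≠ 0) (c : F) :
    Nat.card {v // f v = c} * Nat.card F = Nat.card V := by
  obtain ⟨v, hv⟩ := hf
  obtain ⟨e, he⟩ : ∃ e, f e = 1 := ⟨(f v)⁻¹ • v, by simp [hv]⟩
  rw [← Nat.card_prod]
  exact Nat.card_congr
    { toFun := fun p => p.1.1 + p.2 • e
      invFun := fun v => (⟨v - (f v - c) • e, by simp [he]⟩, f v - c)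
      left_inv := by
        rintro ⟨⟨v, hv⟩, t⟩
        simp [he, hv]
      right_inv := by
        intro v
        simp }

/-! ### Hyperbolic pairs -/

variable [FiniteDimensional F V] (B : LinearMap.BilinForm F V)

lemma exists_ne_zero_of_finrank_lt {k : Type*} [AddCommGroup k] [Module F k]
    [FiniteDimensional F k] (f : V →ₗ[F] k) (h : finrank F k < finrank F V) :
    ∃ v, v ≠ 0 ∧ f v = 0 := by
  obtain ⟨v, hv, hv0⟩ := (Submodule.ne_bot_iff _).1 (LinearMap.ker_ne_bot_of_finrank_lt (f := f) h)
  exact ⟨v, hv0, hv⟩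

/-- Three pairwise orthogonal nonsingular vectors span a singular vector, because
`α a² + β b² + γ` has a zero over a finite field of odd order. -/
lemma exists_singular (h2 : (2 : F) ≠ 0) (hs : ∀ x y, B x y = B y x) (hd : 3 ≤ finrank F V) :
    ∃ u, u ≠ 0 ∧ B u u = 0 := by
  classical
  have := Fintype.ofFinite F
  by_contra! hcon
  obtain ⟨v1, h1, -⟩ := exists_ne_zero_of_finrank_lt (0 : V →ₗ[F] F)
    (by rw [finrank_self]; omega)
  obtain ⟨v2, h2', h12⟩ := exists_ne_zero_of_finrank_lt (B v1)
    (by rw [finrank_self]; omega)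
  obtain ⟨v3, h3, h123⟩ := exists_ne_zero_of_finrank_lt ((B v1).prod (B v2))
    (by rw [finrank_prod, finrank_self]; omega)
  simp only [LinearMap.prod_apply, Function.prod, Prod.mk_eq_zero] at h123
  obtain ⟨h13, h23⟩ := h123
  have hodd : Fintype.card F % 2 = 1 :=
    FiniteField.odd_card_of_char_ne_two fun h =>
      h2 (by exact_mod_cast h ▸ ringChar.Nat.cast_ringChar (R := F))
  obtain ⟨a, b, hab⟩ := FiniteField.exists_root_sum_quadratic
    (f := Polynomial.C (B v1 v1) * Polynomial.X ^ 2 + Polynomial.C 0 * Polynomial.X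
      + Polynomial.C 0)
    (g := Polynomial.C (B v2 v2) * Polynomial.X ^ 2 + Polynomial.C 0 * Polynomial.X
      + Polynomial.C (B v3 v3))
    (Polynomial.degree_quadratic (hcon v1 h1)) (Polynomial.degree_quadratic (hcon v2 h2')) hodd
  simp only [Polynomial.eval_add, Polynomial.eval_mul, Polynomial.eval_C, Polynomial.eval_pow,
    Polynomial.eval_X] at hab
  refine hcon (a • v1 + b • v2 + v3) ?_ ?_
  · intro h0
    have := congrArg (B v3) h0
    simp [hs v3 v1, hs v3 v2, h13, h23] at this
    exact hcon v3 h3 this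
  · simp only [map_add, map_smul, LinearMap.add_apply, LinearMap.smul_apply, smul_eq_mul,
      hs v2 v1, hs v3 v1, hs v3 v2, h12, h13, h23]
    linear_combination hab

lemma exists_hyperbolic_pair (h2 : (2 : F) ≠ 0) (hs : ∀ x y, B x y = B y x)
    (hnd : ∀ x, (∀ y, B x y = 0) → x = 0) (hd : 3 ≤ finrank F V) :
    ∃ u w, B u u = 0 ∧ B w w = 0 ∧ B u w = 1 := by
  obtain ⟨u, hu, huu⟩ := exists_singular B h2 hs hd
  have : ∃ y, B u y ≠ 0 := by
    by_contra! h
    exact hu (hnd u h)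
  obtain ⟨y, hy⟩ := this
  refine ⟨u, (B u y)⁻¹ • y - ((B u y)⁻¹ ^ 2 * B y y / 2) • u, huu, ?_, ?_⟩
  · simp only [map_sub, map_smul, LinearMap.sub_apply, LinearMap.smul_apply, smul_eq_mul, huu,
      hs y u]
    field_simp
    ring
  · simp [huu, hy]

/-- The orthogonal complement of the plane spanned by `u` and `w`. -/
abbrev perp (u w : V) : Submodule F V := LinearMap.ker ((B u).prod (B w))

lemma mem_perp {u w v : V} : v ∈ perp B u w ↔ B u v = 0 ∧ B w v = 0 := by
  simp [perp, LinearMap.mem_ker]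

/-- Coordinates `v = x u + y w + k` attached to a hyperbolic pair `(u, w)`. -/
def splitEquiv (hs : ∀ x y, B x y = B y x) {u w : V} (hu : B u u = 0) (hw : B w w = 0)
    (huw : B u w = 1) : F × F × perp B u w ≃ V where
  toFun t := t.1 • u + t.2.1 • w + t.2.2.1
  invFun v := (B w v, B u v, ⟨v - B w v • u - B u v • w, by
    rw [mem_perp]
    simp [hu, hw, huw, hs w u]⟩)
  left_inv := by
    rintro ⟨x, y, k, hk⟩
    rw [mem_perp] at hk
    have h1 : B w (x • u + y • w + k) = x := by simp [hk, hw, hs w u, huw]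
    have h2 : B u (x • u + y • w + k) = y := by simp [hk, hu, huw]
    simp only [h1, h2, Prod.mk.injEq, true_and, Subtype.mk.injEq]
    abel
  right_inv v := by
    simp only
    abel

lemma finrank_perp (hs : ∀ x y, B x y = B y x) {u w : V} (hu : B u u = 0) (hw : B w w = 0)
    (huw : B u w = 1) : finrank F (perp B u w) + 2 = finrank F V := by
  have h := LinearMap.finrank_range_add_finrank_ker ((B u).prod (B w))
  have hr : LinearMap.range ((B u).prod (B w)) = ⊤ := by
    rw [LinearMap.range_eq_top]
    rintro ⟨a, b⟩
    exact ⟨b • u + a • w, by simp [hu, hw, huw, hs w u]⟩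
  rw [hr, finrank_top, finrank_prod, finrank_self] at h
  change 1 + 1 + finrank F (perp B u w) = _ at h
  omega

lemma restrict_nondeg (hs : ∀ x y, B x y = B y x)
    (hnd : ∀ x, (∀ y, B x y = 0) → x = 0) {u w : V} (hu : B u u = 0) (hw : B w w = 0)
    (huw : B u w = 1) (k : perp B u w) (hk : ∀ k', (B.restrict (perp B u w)) k k' = 0) :
    k = 0 := by
  apply Subtype.ext
  apply hnd
  intro y
  obtain ⟨⟨a, b, k'⟩, rfl⟩ := (splitEquiv B hs hu hw huw).surjective y
  have h1 := (mem_perp B).1 k.2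
  have h2 := hk k'
  simp only [LinearMap.BilinForm.restrict_apply, LinearMap.domRestrict_apply] at h2
  simp [splitEquiv, hs k.1 u, hs k.1 w, h1, h2]

lemma form_split (hs : ∀ x y, B x y = B y x) {u w : V} (hu : B u u = 0) (hw : B w w = 0)
    (huw : B u w = 1) (x y x' y' : F) {k k' : V} (hk : k ∈ perp B u w) (hk' : k' ∈ perp B u w) :
    B (x • u + y • w + k) (x' • u + y' • w + k') = x * y' + y * x' + B k k' := by
  rw [mem_perp] at hk hk'
  simp only [map_add, map_smul, LinearMap.add_apply, LinearMap.smul_apply, smul_eq_mul,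
    hs w u, hs k u, hs k w, hk, hk', hu, hw, huw]
  ring

/-! ### Singular vectors -/

/-- Inductive count. A nondegenerate space of dimension `2m + 1` has `q ^ (2m)` singular vectors,
and there is a nonsingular `z` such that exactly `q ^ (2m - 1) - q ^ (m - 1)` singular vectors have
orthogonal projection `z` on the line `F z` (this says that the complement of `z` is hyperbolic).
Both counts pass from the complement of a hyperbolic plane to the whole space by
`card_hyperbolic`. -/
theorem counts (h2 : (2 : F) ≠ 0) (m : ℕ) : ∀ (V : Type) [AddCommGroup V] [Module F V]
    [FiniteDimensional F V] (B : LinearMap.BilinForm F V), (∀ x y, B x y = B y x) →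
    (∀ x, (∀ y, B x y = 0) → x = 0) → finrank F V = 2 * m + 1 →
    Nat.card {v // B v v = 0} = Nat.card F ^ (2 * m) ∧
    ∃ z, B z z ≠ 0 ∧
      Nat.card F * Nat.card {v // B z v = B z z ∧ B v v = 0} + Nat.card F ^ m =
        Nat.card F ^ (2 * m) := by
  induction m with
  | zero =>
    intro V _ _ _ B hs hnd hd
    obtain ⟨e, he, hspan⟩ := finrank_eq_one_iff'.1 hd
    have hee : B e e ≠ 0 := by
      intro h
      apply he
      apply hnd
      intro y
      obtain ⟨c, rfl⟩ := hspan y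
      simp [h]
    have hz : ∀ v, B v v = 0 → v = 0 := by
      intro v hv
      obtain ⟨c, rfl⟩ := hspan v
      simp [hee] at hv
      simp [hv]
    refine ⟨?_, e, hee, ?_⟩
    · have : Unique {v // B v v = 0} :=
        { default := ⟨0, by simp⟩
          uniq := fun v => Subtype.ext (hz v.1 v.2) }
      simp
    · have : IsEmpty {v // B e v = B e e ∧ B v v = 0} := by
        constructor
        rintro ⟨v, hv, hv'⟩
        rw [hz v hv'] at hv
        simp at hv
        exact hee hv.symm
      simp
  | succ m ih =>
    intro V _ _ _ B hs hnd hd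
    obtain ⟨u, w, hu, hw, huw⟩ := exists_hyperbolic_pair B h2 hs hnd (by omega)
    have hK : finrank F (perp B u w) = 2 * m + 1 := by
      have := finrank_perp B hs hu hw huw
      omega
    set K := perp B u w
    obtain ⟨hN, z, hz, hA⟩ := ih K (B.restrict K)
      (fun x y => hs x y) (restrict_nondeg B hs hnd hu hw huw) hK
    have : Finite V := Module.finite_of_finite F
    have hcK : Nat.card K = Nat.card F ^ (2 * m + 1) := by
      rw [Module.natCard_eq_pow_finrank (K := F), hK]
    have hzK := (mem_perp B).1 z.2
    have hq := Nat.card_pos (α := F)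
    have hsq : ∀ t : F × F × K, B (splitEquiv B hs hu hw huw t) (splitEquiv B hs hu hw huw t)
        = 2 * t.1 * t.2.1 + B.restrict K t.2.2 t.2.2 := by
      rintro ⟨x, y, k⟩
      refine (form_split B hs hu hw huw x y x y k.2 k.2).trans ?_
      simp only [LinearMap.BilinForm.restrict_apply, LinearMap.domRestrict_apply]
      ring
    have hzt : ∀ t : F × F × K, B z (splitEquiv B hs hu hw huw t) = B.restrict K z t.2.2 := by
      rintro ⟨x, y, k⟩
      simp [splitEquiv, hs z u, hs z w, hzK]
    constructor
    · have h := card_hyperbolic h2 (fun k : K => B.restrict K k k)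
      rw [hN, hcK] at h
      have e : {t : F × F × K // 2 * t.1 * t.2.1 + B.restrict K t.2.2 t.2.2 = 0} ≃
          {v // B v v = 0} :=
        (splitEquiv B hs hu hw huw).subtypeEquiv (fun t => by rw [hsq])
      rw [Nat.card_congr e] at h
      have h3 : Nat.card F ^ (2 * (m + 1)) = Nat.card F * Nat.card F ^ (2 * m + 1) := by ring
      have h4 : Nat.card F ^ (2 * m + 1) = Nat.card F * Nat.card F ^ (2 * m) := by ring
      omega
    · refine ⟨z, hz, ?_⟩
      have h := card_hyperbolic h2
        (fun k : {k : K // B.restrict K z k = B.restrict K z z} => B.restrict K k.1 k.1)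
      have hf := card_fiber_mul (B.restrict K z) ⟨z, hz⟩ (B.restrict K z z)
      rw [hcK, pow_succ] at hf
      have hf' := Nat.eq_of_mul_eq_mul_right hq hf
      rw [hf', Nat.card_congr (Equiv.subtypeSubtypeEquivSubtypeInter
        (fun k => B.restrict K z k = B.restrict K z z) (fun k => B.restrict K k k = 0))] at h
      have e : {t : F × F × {k : K // B.restrict K z k = B.restrict K z z} //
          2 * t.1 * t.2.1 + B.restrict K t.2.2.1 t.2.2.1 = 0} ≃
          {v // B z v = B z z ∧ B v v = 0} := by
        refine Equiv.trans ?_ ((splitEquiv B hs hu hw huw).subtypeEquiv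
          (p := fun t => B.restrict K z t.2.2 = B.restrict K z z ∧
            2 * t.1 * t.2.1 + B.restrict K t.2.2 t.2.2 = 0) (fun t => by rw [hsq, hzt]; rfl))
        exact
          { toFun := fun t => ⟨(t.1.1, t.1.2.1, t.1.2.2.1), t.1.2.2.2, t.2⟩
            invFun := fun t => ⟨(t.1.1, t.1.2.1, ⟨t.1.2.2, t.2.1⟩), t.2.2⟩
            left_inv := fun _ => rfl
            right_inv := fun _ => rfl }
      rw [Nat.card_congr e] at h
      generalize Nat.card {v // B z v = B z z ∧ B v v = 0} = A' at *
      generalize Nat.card {k // B.restrict K z k = B.restrict K z z ∧ B.restrict K k k = 0} = A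
        at *
      have h5 : Nat.card F ^ (2 * (m + 1)) = Nat.card F * (Nat.card F * Nat.card F ^ (2 * m)) := by
        ring
      have h6 : Nat.card F ^ (m + 1) = Nat.card F * Nat.card F ^ m := by ring
      rw [h5, h6, ← mul_add]
      congr 1
      omega

/-- For singular `v`, each line `w + F v` with `w` not orthogonal to `v` contains exactly one
singular vector. -/
lemma card_singular_not_orthogonal (h2 : (2 : F) ≠ 0) (hs : ∀ x y, B x y = B y x) {v : V}
    (hvv : B v v = 0) :
    Nat.card {w // B w w = 0 ∧ ¬ B v w = 0} * Nat.card F = Nat.card {w // ¬ B v w = 0} := by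
  rw [← Nat.card_prod]
  exact Nat.card_congr
    { toFun := fun p => ⟨p.1.1 + p.2 • v, by simpa [hvv] using p.1.2.2⟩
      invFun := fun w => (⟨w.1 - (B w.1 w.1 / (2 * B v w.1)) • v, by
          have := w.2
          simp only [map_sub, map_smul, LinearMap.sub_apply, LinearMap.smul_apply, smul_eq_mul,
            hvv, hs w.1 v]
          field_simp
          ring, by simpa [hvv] using w.2⟩, B w.1 w.1 / (2 * B v w.1))
      left_inv := by
        rintro ⟨⟨w, hw, hvw⟩, t⟩
        have ht : B (w + t • v) (w + t • v) / (2 * B v (w + t • v)) = t := by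
          simp only [map_add, map_smul, LinearMap.add_apply, LinearMap.smul_apply, smul_eq_mul,
            hvv, hs w v, hw, mul_zero, add_zero, zero_add]
          field_simp
          ring
        simp only [ht, Prod.mk.injEq, Subtype.mk.injEq, and_true]
        abel
      right_inv := by
        rintro ⟨w, hw⟩
        simp }

lemma card_singular_orthogonal (h2 : (2 : F) ≠ 0) (hs : ∀ x y, B x y = B y x)
    (hnd : ∀ x, (∀ y, B x y = 0) → x = 0) {m : ℕ} (hd : finrank F V = 2 * m + 3)
    (hN : Nat.card {v // B v v = 0} = Nat.card F ^ (2 * m + 2)) {v : V} (hv : v ≠ 0)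
    (hvv : B v v = 0) :
    Nat.card {w // B w w = 0 ∧ B v w = 0} = Nat.card F ^ (2 * m + 1) := by
  have : Finite V := Module.finite_of_finite F
  have hq := Nat.card_pos (α := F)
  have hne : ∃ y, B v y ≠ 0 := by
    by_contra! h
    exact hv (hnd v h)
  have hV : Nat.card V = Nat.card F ^ (2 * m + 3) := by
    rw [Module.natCard_eq_pow_finrank (K := F), hd]
  have h1 := card_split (fun w => B w w = 0) (fun w => B v w = 0)
  have h3 := card_singular_not_orthogonal B h2 hs hvv
  have h4 := card_fiber_mul (B v) hne 0
  have h5 := card_split (fun _ : V => True) (fun w => B v w = 0)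
  simp only [true_and] at h5
  rw [Nat.card_congr (Equiv.subtypeUnivEquiv (fun _ => trivial))] at h5
  rw [hN] at h1
  rw [hV] at h4 h5
  rw [← h3] at h5
  generalize Nat.card {w // B w w = 0 ∧ ¬ B v w = 0} = R at *
  generalize Nat.card {w // B w w = 0 ∧ B v w = 0} = P at *
  generalize Nat.card {w // B v w = 0} = Y at *
  rw [pow_succ] at h4
  have h6 := Nat.eq_of_mul_eq_mul_right hq h4
  subst h6
  apply Nat.eq_of_mul_eq_mul_right hq
  have h7 : (P + R) * Nat.card F = Nat.card F ^ (2 * m + 3) := by rw [← h1]; ring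
  have h8 : Nat.card F ^ (2 * m + 1) * Nat.card F = Nat.card F ^ (2 * m + 2) := by ring
  rw [h8]
  rw [add_mul] at h7
  omega

/-! ### Totally singular planes -/

/-- The count of ordered bases of totally singular planes. -/
lemma card_singular_pairs (h2 : (2 : F) ≠ 0) (hs : ∀ x y, B x y = B y x)
    (hnd : ∀ x, (∀ y, B x y = 0) → x = 0) {m : ℕ} (hd : finrank F V = 2 * m + 3)
    (hN : Nat.card {v // B v v = 0} = Nat.card F ^ (2 * m + 2)) :
    Nat.card {s : Fin 2 → V // LinearIndependent F s ∧ B (s 0) (s 0) = 0 ∧ B (s 1) (s 1) = 0 ∧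
      B (s 0) (s 1) = 0} =
    (Nat.card F ^ (2 * m + 2) - 1) * (Nat.card F ^ (2 * m + 1) - Nat.card F) := by
  have : Finite V := Module.finite_of_finite F
  have := Fintype.ofFinite {v // B v v = 0 ∧ ¬ v = 0}
  have e : {s : Fin 2 → V // LinearIndependent F s ∧ B (s 0) (s 0) = 0 ∧ B (s 1) (s 1) = 0 ∧
      B (s 0) (s 1) = 0} ≃ Σ v : {v // B v v = 0 ∧ ¬ v = 0},
        {w // (B w w = 0 ∧ B v.1 w = 0) ∧ ¬ ∃ a : F, a • v.1 = w} :=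
    { toFun := fun s => ⟨⟨s.1 0, s.2.2.1, s.2.1.ne_zero 0⟩, s.1 1, ⟨s.2.2.2.1, s.2.2.2.2⟩, by
        have h := s.2.1
        have h' : s.1 = ![s.1 0, s.1 1] := by
          ext i; fin_cases i <;> rfl
        rw [h', LinearIndependent.pair_iff' (s.2.1.ne_zero 0)] at h
        simpa using h⟩
      invFun := fun t => ⟨![t.1.1, t.2.1], by
        have h := t.2.2.2
        refine ⟨?_, t.1.2.1, t.2.2.1.1, t.2.2.1.2⟩
        rw [LinearIndependent.pair_iff' t.1.2.2]
        simpa using h⟩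
      left_inv := by
        rintro ⟨s, hs⟩
        apply Subtype.ext
        ext i; fin_cases i <;> rfl
      right_inv := by
        rintro ⟨⟨v, hv⟩, ⟨w, hw⟩⟩
        rfl }
  rw [Nat.card_congr e, Nat.card_sigma]
  have hw : ∀ v : {v // B v v = 0 ∧ ¬ v = 0},
      Nat.card {w // (B w w = 0 ∧ B v.1 w = 0) ∧ ¬ ∃ a : F, a • v.1 = w} =
        Nat.card F ^ (2 * m + 1) - Nat.card F := by
    rintro ⟨v, hvv, hv⟩
    have h := card_split (fun w => B w w = 0 ∧ B v w = 0) (fun w => ∃ a : F, a • v = w)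
    rw [card_singular_orthogonal B h2 hs hnd hd hN hv hvv] at h
    have hF : Nat.card {w // (B w w = 0 ∧ B v w = 0) ∧ ∃ a : F, a • v = w} = Nat.card F := by
      symm
      apply Nat.card_eq_of_bijective
        (fun a : F => ⟨a • v, by simp [hvv], a, rfl⟩)
      constructor
      · intro a b hab
        exact smul_left_injective F hv (congrArg Subtype.val hab)
      · rintro ⟨w, hw, a, rfl⟩
        exact ⟨a, rfl⟩
    rw [hF] at h
    simp only
    omega
  rw [Finset.sum_congr rfl (fun v _ => hw v), Finset.sum_const, smul_eq_mul, Finset.card_univ,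
    ← Nat.card_eq_fintype_card]
  congr 1
  have h := card_split (fun v => B v v = 0) (fun v => v = 0)
  have h1 : Nat.card {v // B v v = 0 ∧ v = 0} = 1 := by
    have : Unique {v // B v v = 0 ∧ v = 0} :=
      { default := ⟨0, by simp⟩
        uniq := fun v => Subtype.ext v.2.2 }
    simp
  rw [hN, h1] at h
  omega

lemma bilin_eq_zero_of_singular (h2 : (2 : F) ≠ 0) (hs : ∀ x y, B x y = B y x)
    {W : Submodule F V} (hW : ∀ v ∈ W, B v v = 0) {x y : V} (hx : x ∈ W) (hy : y ∈ W) :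
    B x y = 0 := by
  have h := hW _ (W.add_mem hx hy)
  simp only [map_add, LinearMap.add_apply, hW x hx, hW y hy, hs y x] at h
  have : 2 * B x y = 0 := by linear_combination h
  exact (mul_eq_zero.1 this).resolve_left h2

lemma span_singular (hs : ∀ x y, B x y = B y x) {p r : V} (hp : B p p = 0) (hr : B r r = 0)
    (hpr : B p r = 0) : ∀ v ∈ Submodule.span F {p, r}, B v v = 0 := by
  intro v hv
  obtain ⟨a, b, rfl⟩ := Submodule.mem_span_pair.1 hv
  simp [hp, hr, hpr, hs r p]

lemma finrank_span_two {s : Fin 2 → V} (h : LinearIndependent F s) :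
    finrank F (Submodule.span F (Set.range s)) = 2 := by
  rw [finrank_span_eq_card h, Fintype.card_fin]

lemma range_fin_two (s : Fin 2 → V) : Set.range s = {s 0, s 1} := by
  ext x
  simp [Fin.exists_fin_two, eq_comm]

/-- Each totally singular plane has `(q² - 1)(q² - q)` ordered bases. -/
lemma card_singular_planes (h2 : (2 : F) ≠ 0) (hs : ∀ x y, B x y = B y x)
    (hnd : ∀ x, (∀ y, B x y = 0) → x = 0) {m : ℕ} (hd : finrank F V = 2 * m + 3)
    (hN : Nat.card {v // B v v = 0} = Nat.card F ^ (2 * m + 2)) :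
    Nat.card {W : Submodule F V // finrank F W = 2 ∧ ∀ v ∈ W, B v v = 0} *
      ((Nat.card F ^ 2 - 1) * (Nat.card F ^ 2 - Nat.card F)) =
    (Nat.card F ^ (2 * m + 2) - 1) * (Nat.card F ^ (2 * m + 1) - Nat.card F) := by
  classical
  have : Finite V := Module.finite_of_finite F
  have := Fintype.ofFinite F
  have := Fintype.ofFinite {W : Submodule F V // finrank F W = 2 ∧ ∀ v ∈ W, B v v = 0}
  rw [← card_singular_pairs B h2 hs hnd hd hN]
  have hb : ∀ W : {W : Submodule F V // finrank F W = 2 ∧ ∀ v ∈ W, B v v = 0},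
      Nat.card {s : Fin 2 → W.1 // LinearIndependent F s} =
        (Nat.card F ^ 2 - 1) * (Nat.card F ^ 2 - Nat.card F) := by
    intro W
    rw [card_linearIndependent (by rw [W.2.1]), W.2.1, Fin.prod_univ_two]
    simp
  have hsig : Nat.card (Σ W : {W : Submodule F V // finrank F W = 2 ∧ ∀ v ∈ W, B v v = 0},
      {s : Fin 2 → W.1 // LinearIndependent F s}) =
      Nat.card {W : Submodule F V // finrank F W = 2 ∧ ∀ v ∈ W, B v v = 0} *
      ((Nat.card F ^ 2 - 1) * (Nat.card F ^ 2 - Nat.card F)) := by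
    rw [Nat.card_sigma, Finset.sum_congr rfl (fun W _ => hb W), Finset.sum_const, smul_eq_mul,
      Finset.card_univ, ← Nat.card_eq_fintype_card]
  rw [← hsig]
  have hLI : ∀ (W : Submodule F V) (s : Fin 2 → W), LinearIndependent F s →
      LinearIndependent F (fun i => (s i : V)) := fun W s h =>
    h.map' W.subtype W.ker_subtype
  have hspan : ∀ (W : Submodule F V) (s : Fin 2 → W), finrank F W = 2 → LinearIndependent F s →
      Submodule.span F (Set.range fun i => (s i : V)) = W := by
    intro W s hW h
    apply Submodule.eq_of_le_of_finrank_eq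
    · rw [Submodule.span_le]
      rintro _ ⟨i, rfl⟩
      exact (s i).2
    · rw [finrank_span_two (hLI W s h), hW]
  apply Nat.card_eq_of_bijective (fun t => ⟨fun i => (t.2.1 i : V), hLI _ _ t.2.2,
    t.1.2.2 _ (t.2.1 0).2, t.1.2.2 _ (t.2.1 1).2,
    bilin_eq_zero_of_singular B h2 hs t.1.2.2 (t.2.1 0).2 (t.2.1 1).2⟩)
  constructor
  · rintro ⟨⟨W, hW, hW'⟩, s, hsi⟩ ⟨⟨W₁, hW₁, hW₁'⟩, s₁, hs₁⟩ h
    have h' : (fun i => (s i : V)) = fun i => (s₁ i : V) := congrArg Subtype.val h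
    have hWW : W = W₁ := by
      rw [← hspan W s hW hsi, ← hspan W₁ s₁ hW₁ hs₁, h']
    subst hWW
    have : s = s₁ := by
      ext i
      exact congrFun h' i
    subst this
    rfl
  · rintro ⟨s, hsi, h0, h1, h01⟩
    refine ⟨⟨⟨Submodule.span F (Set.range s), finrank_span_two hsi, ?_⟩,
      fun i => ⟨s i, Submodule.subset_span ⟨i, rfl⟩⟩, ?_⟩, rfl⟩
    · rw [range_fin_two]
      exact span_singular B hs h0 h1 h01
    · exact LinearIndependent.of_comp (Submodule.subtype _) hsi

/-! ### Planes on which the alternating form does not vanish -/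

/-- For linear forms `a` and `b`, a totally singular plane on which the alternating
form `a ∧ b` does not vanish is mapped isomorphically onto `F²` by `(a, b)`, so it has a unique
basis `p, r` with `(a, b)`-values `(1, 0)` and `(0, c)`. -/
lemma card_nonisotropic_planes (h2 : (2 : F) ≠ 0) (hs : ∀ x y, B x y = B y x) (a b : V →ₗ[F] F)
    {c : F} (hc : c ≠ 0) :
    Nat.card {W : Submodule F V // (finrank F W = 2 ∧ ∀ v ∈ W, B v v = 0) ∧
      ¬ ∀ x ∈ W, ∀ y ∈ W, a x * b y - b x * a y = 0} =
    Nat.card {p : V × V // (B p.1 p.1 = 0 ∧ a p.1 = 1 ∧ b p.1 = 0) ∧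
      (B p.2 p.2 = 0 ∧ a p.2 = 0 ∧ b p.2 = c) ∧ B p.1 p.2 = 0} := by
  have hLI : ∀ p r : V, a p = 1 → b p = 0 → a r = 0 → b r = c → LinearIndependent F ![p, r] := by
    intro p r hap hbp har hbr
    rw [LinearIndependent.pair_iff]
    intro s t h
    have h1 := congrArg a h
    have h2 := congrArg b h
    simp [hap, hbp, har, hbr, hc] at h1 h2
    exact ⟨h1, h2⟩
  symm
  apply Nat.card_eq_of_bijective (fun p => ⟨Submodule.span F {p.1.1, p.1.2}, ⟨by
      have := finrank_span_two (hLI p.1.1 p.1.2 p.2.1.2.1 p.2.1.2.2 p.2.2.1.2.1 p.2.2.1.2.2)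
      rwa [range_fin_two] at this,
    span_singular B hs p.2.1.1 p.2.2.1.1 p.2.2.2⟩, fun h => hc (by
      have := h p.1.1 (Submodule.subset_span (by simp)) p.1.2 (Submodule.subset_span (by simp))
      simpa [p.2.1.2.1, p.2.1.2.2, p.2.2.1.2.1, p.2.2.1.2.2] using this)⟩)
  constructor
  · rintro ⟨⟨p, r⟩, ⟨_, hap, hbp⟩, ⟨_, har, hbr⟩, _⟩
      ⟨⟨p', r'⟩, ⟨_, hap', hbp'⟩, ⟨_, har', hbr'⟩, _⟩ h
    have h' : Submodule.span F {p, r} = Submodule.span F {p', r'} := congrArg Subtype.val h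
    simp only at hap hbp har hbr hap' hbp' har' hbr'
    have hp : p' ∈ Submodule.span F {p, r} := h' ▸ Submodule.subset_span (by simp)
    have hr : r' ∈ Submodule.span F {p, r} := h' ▸ Submodule.subset_span (by simp)
    obtain ⟨s, t, rfl⟩ := Submodule.mem_span_pair.1 hp
    obtain ⟨s', t', rfl⟩ := Submodule.mem_span_pair.1 hr
    simp [hap, hbp, har, hbr, hc] at hap' hbp' har' hbr'
    simp [hap', hbp', har', hbr']
  · rintro ⟨W, ⟨hW, hsing⟩, hne⟩
    push Not at hne
    obtain ⟨x, hx, y, hy, hxy⟩ := hne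
    set d := a x * b y - b x * a y with hd
    have hpW : d⁻¹ • (b y • x - b x • y) ∈ W :=
      W.smul_mem _ (W.sub_mem (W.smul_mem _ hx) (W.smul_mem _ hy))
    have hrW : (c * d⁻¹) • (a x • y - a y • x) ∈ W :=
      W.smul_mem _ (W.sub_mem (W.smul_mem _ hy) (W.smul_mem _ hx))
    have hap : a (d⁻¹ • (b y • x - b x • y)) = 1 := by
      simp only [map_smul, map_sub, smul_eq_mul]
      rw [mul_comm (b y), ← hd, inv_mul_cancel₀ hxy]
    have hbp : b (d⁻¹ • (b y • x - b x • y)) = 0 := by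
      simp only [map_smul, map_sub, smul_eq_mul]
      ring
    have har : a ((c * d⁻¹) • (a x • y - a y • x)) = 0 := by
      simp only [map_smul, map_sub, smul_eq_mul]
      ring
    have hbr : b ((c * d⁻¹) • (a x • y - a y • x)) = c := by
      simp only [map_smul, map_sub, smul_eq_mul]
      rw [mul_comm (a y), ← hd, mul_assoc, inv_mul_cancel₀ hxy, mul_one]
    refine ⟨⟨(_, _), ⟨hsing _ hpW, hap, hbp⟩, ⟨hsing _ hrW, har, hbr⟩,
      bilin_eq_zero_of_singular B h2 hs hsing hpW hrW⟩, ?_⟩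
    apply Subtype.ext
    apply Submodule.eq_of_le_of_finrank_eq
    · rw [Submodule.span_le]
      rintro v (rfl | rfl)
      · exact hpW
      · exact hrW
    · have := finrank_span_two (hLI _ _ hap hbp har hbr)
      rw [range_fin_two] at this
      exact this.trans hW.symm

/-- In the coordinates `v = x u + y w + k` of a hyperbolic pair, with `z ⊥ u, w`, the vectors
`p`, `r` of `card_nonisotropic_planes` are `p = x u + w + k` and `r = x' u + k'`; the singularity of
`p` determines `x` and its orthogonality to `r` determines `x'`. -/
lemma card_adapted_pairs (h2 : (2 : F) ≠ 0) (hs : ∀ x y, B x y = B y x) {u w : V}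
    (hu : B u u = 0) (hw : B w w = 0) (huw : B u w = 1) {z : V} (hz : z ∈ perp B u w) (c : F) :
    Nat.card {p : V × V // (B p.1 p.1 = 0 ∧ B u p.1 = 1 ∧ B z p.1 = 0) ∧
      (B p.2 p.2 = 0 ∧ B u p.2 = 0 ∧ B z p.2 = c) ∧ B p.1 p.2 = 0} =
    Nat.card {k : perp B u w // B z k = 0} *
      Nat.card {k : perp B u w // B z k = c ∧ B (k : V) k = 0} := by
  have hz' := (mem_perp B).1 hz
  rw [← Nat.card_prod]
  symm
  have hmem : ∀ (x y : F) {k : V}, k ∈ perp B u w →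
      B u (x • u + y • w + k) = y ∧ B z (x • u + y • w + k) = B z k := by
    intro x y k hk
    have := (mem_perp B).1 hk
    simp [hu, huw, this, hs z u, hs z w, hz']
  apply Nat.card_eq_of_bijective (fun t => ⟨
    ((-(B (t.1.1 : V) t.1.1) / 2) • u + (1 : F) • w + (t.1.1 : V),
     (-(B (t.1.1 : V) t.2.1)) • u + (0 : F) • w + (t.2.1 : V)), by
    obtain ⟨⟨⟨k, hk⟩, hk0⟩, ⟨⟨k', hk'⟩, hkc, hkk⟩⟩ := t
    simp only at hk0 hkc hkk
    simp only [form_split B hs hu hw huw _ _ _ _ hk hk, form_split B hs hu hw huw _ _ _ _ hk' hk',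
      form_split B hs hu hw huw _ _ _ _ hk hk', hmem _ _ hk, hmem _ _ hk', hk0, hkc, hkk]
    refine ⟨⟨?_, trivial, trivial⟩, ⟨?_, trivial, trivial⟩, ?_⟩
    · field_simp
      ring
    · ring
    · ring⟩)
  have hinj := (splitEquiv B hs hu hw huw).injective
  constructor
  · rintro ⟨⟨k, hk⟩, ⟨k', hk'⟩⟩ ⟨⟨l, hl⟩, ⟨l', hl'⟩⟩ h
    have h' := congrArg Subtype.val h
    simp only [Prod.mk.injEq] at h'
    have e1 := @hinj (_, _, k) (_, _, l) h'.1
    have e2 := @hinj (_, _, k') (_, _, l') h'.2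
    simp only [Prod.mk.injEq] at e1 e2
    simp [e1.2.2, e2.2.2]
  · rintro ⟨⟨p, r⟩, ⟨hpp, hup, hzp⟩, ⟨hrr, hur, hzr⟩, hpr⟩
    obtain ⟨⟨x, y, k, hk⟩, rfl⟩ := (splitEquiv B hs hu hw huw).surjective p
    obtain ⟨⟨x', y', k', hk'⟩, rfl⟩ := (splitEquiv B hs hu hw huw).surjective r
    simp only [splitEquiv, Equiv.coe_fn_mk] at hpp hup hzp hrr hur hzr hpr ⊢
    simp only [form_split B hs hu hw huw _ _ _ _ hk hk, form_split B hs hu hw huw _ _ _ _ hk' hk',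
      form_split B hs hu hw huw _ _ _ _ hk hk', (hmem _ _ hk).1, (hmem _ _ hk').1]
      at hpp hup hrr hur hpr
    subst hup hur
    refine ⟨(⟨⟨k, hk⟩, (hmem _ _ hk).2.symm.trans hzp⟩,
      ⟨⟨k', hk'⟩, (hmem _ _ hk').2.symm.trans hzr, by simpa using hrr⟩), ?_⟩
    have hx : -(B k k) / 2 = x := by
      field_simp
      linear_combination -hpp
    have hx' : -(B k k') = x' := by linear_combination -hpr
    simp only [hx, hx']

/-- The count for `B u ∧ B z`: `T` is the number of all totally singular planes and
`q ^ (2m) * A` the number of those on which the alternating form does not vanish. -/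
theorem exists_planes_count (h2 : (2 : F) ≠ 0) {V : Type} [AddCommGroup V] [Module F V]
    [FiniteDimensional F V] (B : LinearMap.BilinForm F V) (hs : ∀ x y, B x y = B y x)
    (hnd : ∀ x, (∀ y, B x y = 0) → x = 0) {m : ℕ} (hd : finrank F V = 2 * m + 3) :
    ∃ u z : V, (∃ x y, B u x * B z y - B z x * B u y ≠ 0) ∧ ∃ T A : ℕ,
      Nat.card {W : Submodule F V // (finrank F W = 2 ∧ ∀ v ∈ W, B v v = 0) ∧
        ∀ x ∈ W, ∀ y ∈ W, B u x * B z y - B z x * B u y = 0} + Nat.card F ^ (2 * m) * A = T ∧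
      T * ((Nat.card F ^ 2 - 1) * (Nat.card F ^ 2 - Nat.card F)) =
        (Nat.card F ^ (2 * m + 2) - 1) * (Nat.card F ^ (2 * m + 1) - Nat.card F) ∧
      Nat.card F * A + Nat.card F ^ m = Nat.card F ^ (2 * m) := by
  have : Finite V := Module.finite_of_finite F
  have hN := (counts h2 (m + 1) V B hs hnd (by omega)).1
  obtain ⟨u, w, hu, hw, huw⟩ := exists_hyperbolic_pair B h2 hs hnd (by omega)
  have hK : finrank F (perp B u w) = 2 * m + 1 := by
    have := finrank_perp B hs hu hw huw
    omega
  obtain ⟨-, z, hz, hA⟩ := counts h2 m (perp B u w) (B.restrict (perp B u w))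
    (fun x y => hs x y) (restrict_nondeg B hs hnd hu hw huw) hK
  have hzK := (mem_perp B).1 z.2
  have hcK : Nat.card {k : perp B u w // B z k = 0} = Nat.card F ^ (2 * m) := by
    have hf := card_fiber_mul (B.restrict (perp B u w) z) ⟨z, hz⟩ 0
    rw [Module.natCard_eq_pow_finrank (K := F) (V := perp B u w), hK, pow_succ] at hf
    exact Nat.eq_of_mul_eq_mul_right Nat.card_pos hf
  refine ⟨u, z, ⟨w, z, ?_⟩, _, _, ?_, card_singular_planes B h2 hs hnd hd hN, hA⟩
  · rw [huw, hzK.1]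
    simpa using hz
  · rw [card_split (fun W : Submodule F V => finrank F W = 2 ∧ ∀ v ∈ W, B v v = 0)
      (fun W => ∀ x ∈ W, ∀ y ∈ W, B u x * B z y - B z x * B u y = 0),
      card_nonisotropic_planes B h2 hs (B u) (B z) hz,
      card_adapted_pairs B h2 hs hu hw huw z.2, hcK]
    rfl

end PolarLines

/-- There exists a nonzero antisymmetric matrix `S` attaining the maximum
number `f_max(n,q) = (q^{n-1}−1)(q^{3n-2}+q^{3n-3}−q^{3n-4}+q^{2n}−q^{n-1}−1)/((q−1)²(q+1))`
of 2-dimensional subspaces totally singular for `M` and totally isotropic for `S`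
(stated multiplied through by the positive denominator). -/
theorem stmt_1 (q : ℕ) (F : Type) [Field F] [Fintype F]
    (hcard : Fintype.card F = q) (hodd : Odd q)
    (n : ℕ) (hn : 2 ≤ n)
    (M : Matrix (Fin (2 * n + 1)) (Fin (2 * n + 1)) F)
    (hMsymm : M.IsSymm) (hMinv : IsUnit M) :
    ∃ S : Matrix (Fin (2 * n + 1)) (Fin (2 * n + 1)) F, S ≠ 0 ∧ Sᵀ = -S ∧
    (Nat.card {W : Submodule F (Fin (2 * n + 1) → F) //
        Module.finrank F W = 2 ∧
        (∀ v ∈ W, v ⬝ᵥ M.mulVec v = 0) ∧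
        (∀ u ∈ W, ∀ v ∈ W, u ⬝ᵥ S.mulVec v = 0)} : ℤ) *
      (((q : ℤ) - 1) ^ 2 * ((q : ℤ) + 1)) =
    ((q : ℤ) ^ (n - 1) - 1) *
      ((q : ℤ) ^ (3 * n - 2) + (q : ℤ) ^ (3 * n - 3) - (q : ℤ) ^ (3 * n - 4)
        + (q : ℤ) ^ (2 * n) - (q : ℤ) ^ (n - 1) - 1) := by
  obtain ⟨m, rfl⟩ : ∃ m, n = m + 1 := ⟨n - 1, by omega⟩
  have h2 : (2 : F) ≠ 0 := by
    intro h
    have h' : Fintype.card F % 2 = 0 :=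
      FiniteField.even_card_of_char_two (CharP.ringChar_of_prime_eq_zero Nat.prime_two
        (by exact_mod_cast h))
    rw [hcard] at h'
    exact (Nat.not_even_iff_odd.2 hodd) (Nat.even_iff.2 h')
  have hq : Nat.card F = q := by rw [Nat.card_eq_fintype_card, hcard]
  set B := Matrix.toBilin' M with hB
  have hBa : ∀ v w, B v w = v ⬝ᵥ M.mulVec w := Matrix.toBilin'_apply' M
  have hs : ∀ x y, B x y = B y x := by
    intro x y
    rw [hBa, hBa, Matrix.dotProduct_mulVec, ← Matrix.mulVec_transpose, hMsymm.eq,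
      dotProduct_comm]
  have hnd : ∀ x, (∀ y, B x y = 0) → x = 0 := by
    intro x hx
    have : M.mulVec x = 0 := by
      rw [← dotProduct_eq_zero_iff]
      intro y
      rw [dotProduct_comm, ← hBa, hs, hx]
    exact Matrix.mulVec_injective_of_isUnit hMinv (by rw [this, Matrix.mulVec_zero])
  obtain ⟨u, z, ⟨x₀, y₀, hne⟩, T, A, hT, hTq, hA⟩ :=
    PolarLines.exists_planes_count h2 B hs hnd (m := m) (by simp; ring)
  have hS : ∀ x y, x ⬝ᵥ (Matrix.vecMulVec (M.mulVec u) (M.mulVec z) -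
      Matrix.vecMulVec (M.mulVec z) (M.mulVec u)).mulVec y = B u x * B z y - B z x * B u y := by
    intro x y
    rw [hs u x, hs z y, hs z x, hs u y]
    simp only [hBa, Matrix.sub_mulVec, dotProduct_sub, Matrix.vecMulVec_mulVec,
      dotProduct_smul, MulOpposite.smul_eq_mul_unop, MulOpposite.unop_op,
      dotProduct_comm (M.mulVec _) y]
  refine ⟨Matrix.vecMulVec (M.mulVec u) (M.mulVec z) - Matrix.vecMulVec (M.mulVec z) (M.mulVec u),
    ?_, ?_, ?_⟩
  · intro h0
    apply hne
    rw [← hS, h0]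
    simp
  · rw [Matrix.transpose_sub, Matrix.transpose_vecMulVec, Matrix.transpose_vecMulVec, neg_sub]
  · simp only [hS, ← hBa, ← and_assoc]
    simp only [and_assoc] at hT ⊢
    generalize Nat.card {W : Submodule F (Fin (2 * (m + 1) + 1) → F) // _} = N at hT ⊢
    rw [hq] at hT hTq hA
    have hq1 : 1 < q := hcard ▸ Fintype.one_lt_card
    obtain ⟨k, rfl⟩ : ∃ k, m = k + 1 := ⟨m - 1, by omega⟩
    have hp : ∀ j, 1 ≤ q ^ j := fun j => Nat.one_le_pow _ _ (by omega)
    have hp1 : ∀ j, q ≤ q ^ (j + 1) := fun j => Nat.le_self_pow (by omega) q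
    have hTz : (T : ℤ) * (((q : ℤ) ^ 2 - 1) * ((q : ℤ) ^ 2 - q)) =
        ((q : ℤ) ^ (2 * (k + 1) + 2) - 1) * ((q : ℤ) ^ (2 * (k + 1) + 1) - q) := by
      have := congrArg (Nat.cast (R := ℤ)) hTq
      push_cast [Nat.cast_sub (hp _), Nat.cast_sub (hp1 _)] at this
      exact this
    have hAz : (q : ℤ) * A + (q : ℤ) ^ (k + 1) = (q : ℤ) ^ (2 * (k + 1)) := by exact_mod_cast hA
    have hNz : (N : ℤ) + (q : ℤ) ^ (2 * (k + 1)) * A = T := by exact_mod_cast hT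
    have hq0 : (q : ℤ) ≠ 0 := by positivity
    rw [show 3 * (k + 1 + 1) - 2 = 3 * k + 4 by omega, show 3 * (k + 1 + 1) - 3 = 3 * k + 3 by omega,
      show 3 * (k + 1 + 1) - 4 = 3 * k + 2 by omega, show k + 1 + 1 - 1 = k + 1 by omega]
    -- The factor `q` is the one in `(q² - 1)(q² - q) = q (q - 1)² (q + 1)`.
    apply mul_left_cancel₀ hq0
    have hkey : (N : ℤ) * (((q : ℤ) ^ 2 - 1) * ((q : ℤ) ^ 2 - q)) =
        ((q : ℤ) ^ (2 * (k + 1) + 2) - 1) * ((q : ℤ) ^ (2 * (k + 1) + 1) - q) -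
        (q : ℤ) ^ (2 * (k + 1)) * ((q : ℤ) ^ (2 * (k + 1)) - (q : ℤ) ^ (k + 1)) *
          (((q : ℤ) ^ 2 - 1) * ((q : ℤ) - 1)) := by
      linear_combination hTz + ((q : ℤ) ^ 2 - 1) * ((q : ℤ) ^ 2 - q) * hNz -
        (q : ℤ) ^ (2 * (k + 1)) * (((q : ℤ) ^ 2 - 1) * ((q : ℤ) - 1)) * hAz
    linear_combination hkey
end

section
/- Let q be an odd prime power, n ≥ 2 an integer, and let M be an invertible symmetric (2n+1)×(2n+1) matrix over F_q. Then the minimum, over all nonzero antisymmetric (2n+1)×(2n+1) matrices S over F_q, of the quantity (number of 2-dimensional totally singular subspaces of F_q^{2n+1}) minus (number of 2-dimensional subspaces that are totally singular for M and totally isotropic for S) equals q^{4n-5} − q^{3n-4}. -/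
/-!
Let `q = |F|`, `B(x, y) = xᵀMy`, and let `A = M⁻¹Sᵀ`, so that `B(Ax, y) = xᵀSy` and
`B(Ax, x) = 0`. The weight of `S` is the number of totally singular lines on which `S` does not
vanish. Every such line has `(q² - 1)(q² - q)` ordered bases `(x, y)`, and these are exactly the
pairs of orthogonal singular vectors with `B(Ax, y) ≠ 0` (`sum_fiberCount_eq_lines`, `weight_eq`).

For a fixed singular `x`, the number of such `y` is `0` if `x` is an eigenvector of `A`, it is
`q^(2n-1) - q^(2n-2)` if `Ax` is singular and not a multiple of `x`, and it is at least
`q^(2n-1) - q^(2n-2) - (q^n - q^(n-1))` if `Ax` is nonsingular (`sum_fiberCount_ge`). This rests on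
the number of singular vectors of a nondegenerate space (`nsing_odd`, `nsing_even_le`), obtained by
splitting off hyperbolic planes; the basic fact is `nsing_perp`: if `a` is singular and
`B(a, x) ≠ 0`, then the line `x + Fa` carries exactly one singular vector.

Let `E` be the number of singular eigenvectors of `A` (zero included) and `N` the number of
singular `x` with `Ax` nonsingular. The lower bound becomes
`q^(n-1) (E - q^(2n-2)) ≤ q^(2n) - q^(2n-2) - N` (`KeyIneq`). As `E + N ≤ q^(2n)`, this is immediate
when `E ≤ q^(2n-2)`.

* If `A` has rank at least four, its kernel has dimension at most `2n - 3`, and the eigenspaces for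
  nonzero eigenvalues are totally singular, hence of dimension at most `n`. So `E ≤ q^(2n-2)` unless
  `n = 2` and some nonzero eigenvalue has a totally singular eigenplane; then both counts are
  estimated directly (`keyIneq_special`).
* If `A` has rank two, then `Ax = B(a, x) b - B(b, x) a`, and the inequality follows by cases on the
  restriction of `B` to the span of `a` and `b` (`keyIneq_of_rank_two`).

Equality holds for the rank-two form given by a singular `a` and a nonsingular `b` orthogonal to `a`
such that the hyperplane orthogonal to `b` is of hyperbolic type (`exists_sum_fiberCount_eq`).
Below, `n = m + 2`.
-/

open Matrix

section Counting

open Finset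
open scoped Classical

set_option linter.unusedSectionVars false

variable {F V : Type*} [Field F] [Fintype F] [AddCommGroup V] [Module F V] [Fintype V]
  [FiniteDimensional F V]

/-! ### Singular vectors of a quadratic space -/

/-- The number of vectors `x` of the subspace `W` (zero included) that are singular, i.e.
satisfy `B x x = 0`. -/
noncomputable def nsing (B : V →ₗ[F] V →ₗ[F] F) (W : Submodule F V) : ℕ :=
  (univ.filter fun x : V => x ∈ W ∧ B x x = 0).card

/-- The restriction of the symmetric bilinear form `B` to the subspace `W` is nondegenerate. -/
def NonDeg (B : V →ₗ[F] V →ₗ[F] F) (W : Submodule F V) : Prop :=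
  ∀ w ∈ W, (∀ w' ∈ W, B w w' = 0) → w = 0

lemma finrank_inf_ker (W : Submodule F V) (f : V →ₗ[F] F) (w : V) (hw : w ∈ W)
    (h : f w ≠ 0) :
    Module.finrank F (W ⊓ LinearMap.ker f : Submodule F V) + 1 = Module.finrank F W := by
  have h1 := LinearMap.finrank_range_add_finrank_ker (f.domRestrict W)
  have h2 : Module.finrank F (LinearMap.range (f.domRestrict W)) = 1 := by
    have : LinearMap.range (f.domRestrict W) = ⊤ := by
      rw [LinearMap.range_eq_top]
      apply LinearMap.surjective
      intro h0
      exact h (by simpa using LinearMap.congr_fun h0 ⟨w, hw⟩)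
    rw [this]; simp
  have h3 : Module.finrank F (LinearMap.ker (f.domRestrict W)) =
      Module.finrank F (W ⊓ LinearMap.ker f : Submodule F V) := by
    rw [LinearMap.ker_domRestrict, ← Submodule.finrank_map_subtype_eq,
      Submodule.map_comap_subtype]
  omega

lemma finrank_le_inf_ker (W : Submodule F V) (f : V →ₗ[F] F) :
    Module.finrank F W ≤ Module.finrank F (W ⊓ LinearMap.ker f : Submodule F V) + 1 := by
  by_cases h : ∃ w ∈ W, f w ≠ 0
  · obtain ⟨w, hw, h⟩ := h
    exact (finrank_inf_ker W f w hw h).ge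
  · push Not at h
    have : W ⊓ LinearMap.ker f = W := inf_eq_left.mpr fun w hw => h w hw
    rw [this]; omega

lemma card_filter_mem (W : Submodule F V) :
    (univ.filter fun x : V => x ∈ W).card = Fintype.card F ^ Module.finrank F W := by
  rw [← Module.card_eq_pow_finrank (K := F) (V := W), Fintype.card_subtype]

lemma nsing_inf_ker_add (B : V →ₗ[F] V →ₗ[F] F) (W : Submodule F V) (f : V →ₗ[F] F) :
    nsing B W = nsing B (W ⊓ LinearMap.ker f) +
      (univ.filter fun x : V => (x ∈ W ∧ B x x = 0) ∧ f x ≠ 0).card := by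
  unfold nsing
  rw [← card_filter_add_card_filter_not (s := univ.filter fun x : V => x ∈ W ∧ B x x = 0)
    (fun x => f x = 0), filter_filter, filter_filter]
  congr 2
  ext x
  simp only [mem_filter, mem_univ, true_and, Submodule.mem_inf, LinearMap.mem_ker]
  tauto

/-- Every line `x + F a` with `a` singular and `B a x ≠ 0` carries exactly one singular vector,
so removing the hyperplane `a^⊥` removes a fixed number of singular vectors. -/
lemma nsing_perp (B : V →ₗ[F] V →ₗ[F] F) (hB : ∀ x y, B x y = B y x) (h2 : (2 : F) ≠ 0)
    (W : Submodule F V) (a w : V) (ha : a ∈ W) (haa : B a a = 0) (hw : w ∈ W)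
    (haw : B a w ≠ 0) (m : ℕ) (hm : Module.finrank F W = m + 2) :
    (nsing B W : ℤ) = nsing B (W ⊓ LinearMap.ker (B a)) +
      ((Fintype.card F : ℤ) - 1) * (Fintype.card F : ℤ) ^ m := by
  rw [nsing_inf_ker_add B W (B a)]
  push_cast
  congr 1
  set D0 := univ.filter fun x : V => (x ∈ W ∧ B x x = 0) ∧ B a x ≠ 0 with hD0
  set D := univ.filter fun x : V => x ∈ W ∧ B a x ≠ 0 with hD
  have e1 : (D0 ×ˢ (univ : Finset F)).card = D.card := by
    refine card_nbij' (fun p => p.1 + p.2 • a)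
      (fun y => (y - (B y y / (2 * B a y)) • a, B y y / (2 * B a y))) ?_ ?_ ?_ ?_
    · rintro ⟨x, t⟩ hx
      simp only [hD0, coe_product, coe_univ, Set.mem_prod, Set.mem_univ, and_true, mem_coe,
        mem_filter, mem_univ, true_and] at hx
      simp only [hD, mem_coe, mem_filter, mem_univ, true_and, map_add, map_smul, haa, smul_zero,
        add_zero]
      exact ⟨W.add_mem hx.1.1 (W.smul_mem _ ha), hx.2⟩
    · intro y hy
      simp only [hD, mem_coe, mem_filter, mem_univ, true_and] at hy
      simp only [hD0, coe_product, coe_univ, Set.mem_prod, Set.mem_univ, and_true, mem_coe,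
        mem_filter, mem_univ, true_and, map_sub, map_smul, haa, mul_zero, sub_zero,
        LinearMap.sub_apply, LinearMap.smul_apply, smul_eq_mul]
      refine ⟨⟨W.sub_mem hy.1 (W.smul_mem _ ha), ?_⟩, hy.2⟩
      have := hy.2
      rw [hB y a]
      field_simp
      ring
    · rintro ⟨x, t⟩ hx
      simp only [hD0, coe_product, coe_univ, Set.mem_prod, Set.mem_univ, and_true, mem_coe,
        mem_filter, mem_univ, true_and] at hx
      have : B (x + t • a) (x + t • a) / (2 * B a (x + t • a)) = t := by
        simp only [map_add, map_smul, haa, mul_zero, add_zero, zero_add, LinearMap.add_apply,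
          LinearMap.smul_apply, smul_eq_mul, hx.1.2, hB x a]
        have := hx.2
        field_simp
        ring
      simp only [this, add_sub_cancel_right]
    · intro y hy
      simp
  have e2 : D.card + Fintype.card F ^ (m + 1) = Fintype.card F ^ (m + 2) := by
    have := card_filter_add_card_filter_not (s := univ.filter fun x : V => x ∈ W)
      (fun x => B a x = 0)
    rw [filter_filter, filter_filter, card_filter_mem, hm] at this
    have h3 := card_filter_mem (F := F) (W ⊓ LinearMap.ker (B a))
    have h4 := finrank_inf_ker W (B a) w hw haw
    rw [show Module.finrank F (W ⊓ LinearMap.ker (B a) : Submodule F V) = m + 1 by omega] at h3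
    rw [← this, ← h3, add_comm]
    congr 2
    ext x
    simp
  have hq : (Fintype.card F : ℤ) ≠ 0 := by exact_mod_cast Fintype.card_ne_zero
  rw [card_product, card_univ] at e1
  rw [← e1] at e2
  apply mul_right_cancel₀ hq
  have e3 : ((D0.card * Fintype.card F + Fintype.card F ^ (m + 1) : ℕ) : ℤ) =
    ((Fintype.card F ^ (m + 2) : ℕ) : ℤ) := by rw [e2]
  push_cast at e3
  linear_combination e3

/-- The space `W ∩ a^⊥` is the orthogonal sum of the radical line `F a` and its intersection with
`a'^⊥`, so its singular vectors form a cone with vertex `F a`. -/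
lemma nsing_cone (B : V →ₗ[F] V →ₗ[F] F) (hB : ∀ x y, B x y = B y x)
    (W : Submodule F V) (a a' : V) (ha : a ∈ W) (haa : B a a = 0) (haa' : B a a' ≠ 0) :
    nsing B (W ⊓ LinearMap.ker (B a)) = Fintype.card F *
      nsing B (W ⊓ LinearMap.ker (B a) ⊓ LinearMap.ker (B a')) := by
  unfold nsing
  rw [mul_comm, ← card_univ (α := F), ← card_product]
  symm
  have h' : B a' a ≠ 0 := by rwa [hB]
  refine card_nbij' (fun p => p.1 + p.2 • a)
      (fun y => (y - (B a' y / B a' a) • a, B a' y / B a' a)) ?_ ?_ ?_ ?_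
  · rintro ⟨x, t⟩ hx
    simp only [coe_product, coe_univ, Set.mem_prod, Set.mem_univ, and_true, mem_coe,
        mem_filter, mem_univ, true_and, Submodule.mem_inf, LinearMap.mem_ker] at hx ⊢
    obtain ⟨⟨⟨h1, h3⟩, h4⟩, h5⟩ := hx
    refine ⟨⟨W.add_mem h1 (W.smul_mem _ ha), by simp [h3, haa]⟩, ?_⟩
    simp [h5, h3, haa, hB x a]
  · intro y hy
    simp only [coe_product, coe_univ, Set.mem_prod, Set.mem_univ, and_true, mem_coe,
        mem_filter, mem_univ, true_and, Submodule.mem_inf, LinearMap.mem_ker] at hy ⊢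
    obtain ⟨⟨h1, h3⟩, h5⟩ := hy
    refine ⟨⟨⟨W.sub_mem h1 (W.smul_mem _ ha), by simp [h3, haa]⟩, ?_⟩, ?_⟩
    · simp [h']
    · simp [h5, h3, haa, hB y a]
  · rintro ⟨x, t⟩ hx
    simp only [coe_product, coe_univ, Set.mem_prod, Set.mem_univ, and_true, mem_coe,
        mem_filter, mem_univ, true_and, Submodule.mem_inf, LinearMap.mem_ker] at hx
    obtain ⟨⟨⟨h1, h3⟩, h4⟩, h5⟩ := hx
    simp [h4, h']
  · intro y hy
    simp

lemma nsing_split (B : V →ₗ[F] V →ₗ[F] F) (hB : ∀ x y, B x y = B y x) (h2 : (2 : F) ≠ 0)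
    (W : Submodule F V) (a a' : V) (ha : a ∈ W) (haa : B a a = 0) (ha' : a' ∈ W)
    (haa' : B a a' ≠ 0) (m : ℕ) (hm : Module.finrank F W = m + 2) :
    (nsing B W : ℤ) = (Fintype.card F : ℤ) *
      nsing B (W ⊓ LinearMap.ker (B a) ⊓ LinearMap.ker (B a')) +
      ((Fintype.card F : ℤ) - 1) * (Fintype.card F : ℤ) ^ m := by
  rw [nsing_perp B hB h2 W a a' ha haa ha' haa' m hm, nsing_cone B hB W a a' ha haa haa']
  push_cast
  ring

lemma finrank_split (B : V →ₗ[F] V →ₗ[F] F) (hB : ∀ x y, B x y = B y x)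
    (W : Submodule F V) (a b : V) (ha : a ∈ W) (hb : b ∈ W)
    (hab : B a a * B b b - B a b ^ 2 ≠ 0) :
    Module.finrank F (W ⊓ LinearMap.ker (B a) ⊓ LinearMap.ker (B b) : Submodule F V) + 2 =
      Module.finrank F W := by
  have h1 : ∃ w ∈ W, B a w ≠ 0 := by
    by_contra! h
    exact hab (by rw [h a ha, h b hb]; ring)
  obtain ⟨w, hw, h1⟩ := h1
  have e1 := finrank_inf_ker W (B a) w hw h1
  have h2 : ∃ w ∈ W ⊓ LinearMap.ker (B a), B b w ≠ 0 := by
    by_contra! h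
    have t1 := h (B a b • a - B a a • b) ⟨W.sub_mem (W.smul_mem _ ha) (W.smul_mem _ hb), by
      simp; ring⟩
    apply hab
    simp only [map_sub, map_smul, smul_eq_mul, hB b a] at t1
    linear_combination -t1
  obtain ⟨w', hw', h2⟩ := h2
  have e2 := finrank_inf_ker _ (B b) w' hw' h2
  omega

lemma NonDeg.split {B : V →ₗ[F] V →ₗ[F] F} (hB : ∀ x y, B x y = B y x)
    {W : Submodule F V} (hW : NonDeg B W) (a b : V) (ha : a ∈ W) (hb : b ∈ W)
    (hab : B a a * B b b - B a b ^ 2 ≠ 0) :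
    NonDeg B (W ⊓ LinearMap.ker (B a) ⊓ LinearMap.ker (B b)) := by
  rintro y ⟨⟨hy, hya⟩, hyb⟩ h
  simp only [SetLike.mem_coe, LinearMap.mem_ker] at hya hyb
  refine hW y hy fun w hw => ?_
  set δ := B a a * B b b - B a b ^ 2
  -- the component of `δ • w` orthogonal to `a` and `b`, by Cramer's rule
  have := h (δ • w - (B a w * B b b - B b w * B a b) • a - (B b w * B a a - B a w * B a b) • b) (by
    refine ⟨⟨W.sub_mem (W.sub_mem (W.smul_mem _ hw) (W.smul_mem _ ha)) (W.smul_mem _ hb), ?_⟩, ?_⟩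
    · simp [δ]; ring
    · simp [δ, hB b a]; ring)
  simp only [map_sub, map_smul, hB y a, hB y b, hya, hyb, mul_zero, sub_zero, smul_eq_mul] at this
  exact (mul_eq_zero.mp this).resolve_left hab

lemma NonDeg.perp {B : V →ₗ[F] V →ₗ[F] F} (hB : ∀ x y, B x y = B y x)
    {W : Submodule F V} (hW : NonDeg B W) (z : V) (hz : z ∈ W) (hzz : B z z ≠ 0) :
    NonDeg B (W ⊓ LinearMap.ker (B z)) := by
  rintro y ⟨hy, hyz⟩ h
  simp only [SetLike.mem_coe, LinearMap.mem_ker] at hyz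
  refine hW y hy fun w hw => ?_
  have := h (w - (B z w / B z z) • z) ⟨W.sub_mem hw (W.smul_mem _ hz), by simp [hzz]⟩
  simpa [hB y z, hyz] using this

lemma exists_mem_ne_zero (W : Submodule F V) (h : 0 < Module.finrank F W) :
    ∃ v ∈ W, v ≠ 0 := by
  refine W.ne_bot_iff.mp ?_
  rintro rfl
  simp at h

/-- A quadratic form in at least three variables over a finite field of odd order is isotropic. -/
lemma exists_singular (B : V →ₗ[F] V →ₗ[F] F) (hB : ∀ x y, B x y = B y x)
    (hodd : Fintype.card F % 2 = 1) (W : Submodule F V) (hW : 3 ≤ Module.finrank F W) :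
    ∃ a ∈ W, a ≠ 0 ∧ B a a = 0 := by
  by_contra! h
  obtain ⟨v1, h1, n1⟩ := exists_mem_ne_zero W (by omega)
  have r1 := finrank_le_inf_ker W (B v1)
  obtain ⟨v2, h2, n2⟩ := exists_mem_ne_zero (W ⊓ LinearMap.ker (B v1)) (by omega)
  have r2 := finrank_le_inf_ker (W ⊓ LinearMap.ker (B v1)) (B v2)
  obtain ⟨v3, h3, n3⟩ :=
    exists_mem_ne_zero (W ⊓ LinearMap.ker (B v1) ⊓ LinearMap.ker (B v2)) (by omega)
  simp only [Submodule.mem_inf, LinearMap.mem_ker] at h2 h3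
  obtain ⟨x, y, hxy⟩ := FiniteField.exists_root_sum_quadratic (R := F)
    (f := Polynomial.C (B v1 v1) * Polynomial.X ^ 2)
    (g := Polynomial.C (B v2 v2) * Polynomial.X ^ 2 + Polynomial.C 0 * Polynomial.X +
      Polynomial.C (B v3 v3))
    (Polynomial.degree_C_mul_X_pow 2 (h v1 h1 n1))
    (Polynomial.degree_quadratic (h v2 h2.1 n2)) hodd
  simp only [Polynomial.eval_mul, Polynomial.eval_C, Polynomial.eval_pow, Polynomial.eval_X,
    Polynomial.eval_add] at hxy
  have e3 := h v3 h3.1.1 n3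
  have key : B (x • v1 + y • v2 + v3) (x • v1 + y • v2 + v3) = 0 := by
    simp only [map_add, map_smul, LinearMap.add_apply, LinearMap.smul_apply, smul_eq_mul,
      hB v2 v1, hB v3 v1, hB v3 v2, h2.2, h3.2, h3.1.2]
    linear_combination hxy
  refine h _ (W.add_mem (W.add_mem (W.smul_mem _ h1) (W.smul_mem _ h2.1)) h3.1.1) ?_ key
  intro h0
  have : B v3 (x • v1 + y • v2 + v3) = 0 := by rw [h0]; simp
  simp only [map_add, map_smul, smul_eq_mul, hB v3 v1, hB v3 v2, h3.2, h3.1.2] at this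
  exact e3 (by linear_combination this)

lemma nsing_anisotropic (B : V →ₗ[F] V →ₗ[F] F) (W : Submodule F V)
    (h : ∀ a ∈ W, B a a = 0 → a = 0) : nsing B W = 1 := by
  unfold nsing
  rw [card_eq_one]
  refine ⟨0, ?_⟩
  ext x
  simp only [mem_filter, mem_univ, true_and, mem_singleton]
  constructor
  · rintro ⟨h1, h2⟩; exact h x h1 h2
  · rintro rfl; simp

lemma NonDeg.exists_partner {B : V →ₗ[F] V →ₗ[F] F} {W : Submodule F V} (hW : NonDeg B W)
    {a : V} (ha : a ∈ W) (h0 : a ≠ 0) : ∃ w ∈ W, B a w ≠ 0 := by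
  by_contra! h
  exact h0 (hW a ha h)

lemma nsing_odd (B : V →ₗ[F] V →ₗ[F] F) (hB : ∀ x y, B x y = B y x) (h2 : (2 : F) ≠ 0)
    (hodd : Fintype.card F % 2 = 1) (n : ℕ) : ∀ (W : Submodule F V), NonDeg B W →
    Module.finrank F W = 2 * n + 1 → (nsing B W : ℤ) = (Fintype.card F : ℤ) ^ (2 * n) := by
  induction n with
  | zero =>
    intro W hW hd
    rw [nsing_anisotropic]
    · simp
    · intro a ha haa
      by_contra h0
      obtain ⟨w, hw, haw⟩ := hW.exists_partner ha h0
      have := finrank_inf_ker W (B a) w hw haw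
      have hbot : W ⊓ LinearMap.ker (B a) = ⊥ := by
        rw [← Submodule.finrank_eq_zero (R := F)]; omega
      exact h0 ((Submodule.mem_bot F).mp (hbot ▸ ⟨ha, haa⟩))
  | succ n ih =>
    intro W hW hd
    obtain ⟨a, ha, h0, haa⟩ := exists_singular B hB hodd W (by omega)
    obtain ⟨w, hw, haw⟩ := hW.exists_partner ha h0
    have hg : B a a * B w w - B a w ^ 2 ≠ 0 := by simp [haa, haw]
    have hf := finrank_split B hB W a w ha hw hg
    rw [nsing_split B hB h2 W a w ha haa hw haw (2 * n + 1) (by omega),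
      ih _ (hW.split hB a w ha hw hg) (by omega)]
    ring

/-- In dimension `2 n` the number of singular vectors is at most `q^(2n-1) + q^n - q^(n-1)`; the
inequality is multiplied by `q` to avoid the exponents `2 n - 1` and `n - 1`. -/
lemma nsing_even_le (B : V →ₗ[F] V →ₗ[F] F) (hB : ∀ x y, B x y = B y x) (h2 : (2 : F) ≠ 0)
    (n : ℕ) : ∀ (W : Submodule F V), NonDeg B W →
    Module.finrank F W = 2 * n →
    (Fintype.card F : ℤ) * nsing B W + (Fintype.card F : ℤ) ^ n ≤
      (Fintype.card F : ℤ) ^ (2 * n) + (Fintype.card F : ℤ) ^ (n + 1) := by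
  have hq1 : (1 : ℤ) ≤ Fintype.card F := by exact_mod_cast Fintype.card_pos
  have aniso : ∀ (n : ℕ) (W : Submodule F V), (∀ a ∈ W, B a a = 0 → a = 0) →
    (Fintype.card F : ℤ) * nsing B W + (Fintype.card F : ℤ) ^ n ≤
      (Fintype.card F : ℤ) ^ (2 * n) + (Fintype.card F : ℤ) ^ (n + 1) := by
    intro n W h
    rw [nsing_anisotropic B W h, two_mul, pow_add, pow_succ]
    have : (1 : ℤ) ≤ (Fintype.card F : ℤ) ^ n := one_le_pow₀ hq1
    push_cast
    nlinarith [mul_nonneg (sub_nonneg.mpr this) (sub_nonneg.mpr hq1)]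
  induction n with
  | zero =>
    intro W hW hd
    apply aniso
    intro a ha _
    rw [Submodule.finrank_eq_zero.mp hd] at ha
    simpa using ha
  | succ n ih =>
    intro W hW hd
    by_cases h : ∀ a ∈ W, B a a = 0 → a = 0
    · exact aniso _ W h
    push Not at h
    obtain ⟨a, ha, haa, h0⟩ := h
    obtain ⟨w, hw, haw⟩ := hW.exists_partner ha h0
    have hg : B a a * B w w - B a w ^ 2 ≠ 0 := by simp [haa, haw]
    have hf := finrank_split B hB W a w ha hw hg
    have hi := ih _ (hW.split hB a w ha hw hg) (by omega)
    rw [nsing_split B hB h2 W a w ha haa hw haw (2 * n) (by omega)]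
    have := mul_le_mul_of_nonneg_left hi (by omega : (0 : ℤ) ≤ Fintype.card F)
    ring_nf at this ⊢
    linarith

/-- A nondegenerate space of odd dimension contains a nonsingular vector `b` whose orthogonal
hyperplane is of hyperbolic type, i.e. attains the bound of `nsing_even_le`. -/
lemma exists_hyperbolic (B : V →ₗ[F] V →ₗ[F] F) (hB : ∀ x y, B x y = B y x) (h2 : (2 : F) ≠ 0)
    (hodd : Fintype.card F % 2 = 1) (n : ℕ) : ∀ (W : Submodule F V), NonDeg B W →
    Module.finrank F W = 2 * n + 1 → ∃ b ∈ W, B b b ≠ 0 ∧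
    (Fintype.card F : ℤ) * nsing B (W ⊓ LinearMap.ker (B b)) + (Fintype.card F : ℤ) ^ n =
      (Fintype.card F : ℤ) ^ (2 * n) + (Fintype.card F : ℤ) ^ (n + 1) := by
  induction n with
  | zero =>
    intro W hW hd
    obtain ⟨b, hb, h0⟩ := exists_mem_ne_zero W (by omega)
    obtain ⟨w, hw, hbw⟩ := hW.exists_partner hb h0
    have := finrank_inf_ker W (B b) w hw hbw
    have hbot : W ⊓ LinearMap.ker (B b) = ⊥ := by
      rw [← Submodule.finrank_eq_zero (R := F)]; omega
    refine ⟨b, hb, fun hbb => h0 ((Submodule.mem_bot F).mp (hbot ▸ ⟨hb, hbb⟩)), ?_⟩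
    rw [hbot, nsing_anisotropic]
    · simp; ring
    · intro a ha _; simpa using ha
  | succ n ih =>
    intro W hW hd
    obtain ⟨a, ha, h0, haa⟩ := exists_singular B hB hodd W (by omega)
    obtain ⟨w, hw, haw⟩ := hW.exists_partner ha h0
    have hg : B a a * B w w - B a w ^ 2 ≠ 0 := by simp [haa, haw]
    have hf := finrank_split B hB W a w ha hw hg
    obtain ⟨b, ⟨⟨hb, hab⟩, hwb⟩, hbb, hi⟩ := ih _ (hW.split hB a w ha hw hg) (by omega)
    simp only [SetLike.mem_coe, LinearMap.mem_ker] at hab hwb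
    refine ⟨b, hb, hbb, ?_⟩
    have hfb := finrank_inf_ker W (B b) b hb hbb
    rw [nsing_split B hB h2 (W ⊓ LinearMap.ker (B b)) a w ⟨ha, by simpa [hB b a] using hab⟩ haa
      ⟨hw, by simpa [hB b w] using hwb⟩ haw (2 * n) (by omega)]
    rw [show W ⊓ LinearMap.ker (B b) ⊓ LinearMap.ker (B a) ⊓ LinearMap.ker (B w) =
      W ⊓ LinearMap.ker (B a) ⊓ LinearMap.ker (B w) ⊓ LinearMap.ker (B b) by ac_rfl]
    linear_combination (Fintype.card F : ℤ) * hi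

lemma nsing_top (B : V →ₗ[F] V →ₗ[F] F) (hB : ∀ x y, B x y = B y x) (h2 : (2 : F) ≠ 0)
    (hodd : Fintype.card F % 2 = 1) (hnd : NonDeg B ⊤) {m : ℕ}
    (hd : Module.finrank F V = 2 * m + 5) :
    (nsing B ⊤ : ℤ) = (Fintype.card F : ℤ) ^ (2 * m + 4) := by
  rw [nsing_odd B hB h2 hodd (m + 2) ⊤ hnd (by rw [finrank_top]; omega)]
  ring_nf

lemma nsing_ker_singular (B : V →ₗ[F] V →ₗ[F] F) (hB : ∀ x y, B x y = B y x) (h2 : (2 : F) ≠ 0)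
    (hodd : Fintype.card F % 2 = 1) (hnd : NonDeg B ⊤) {m : ℕ}
    (hd : Module.finrank F V = 2 * m + 5) (x : V) (hx : x ≠ 0) (hxx : B x x = 0) :
    (nsing B (LinearMap.ker (B x)) : ℤ) = (Fintype.card F : ℤ) ^ (2 * m + 3) := by
  obtain ⟨w, hw, hxw⟩ := hnd.exists_partner (Submodule.mem_top (x := x)) hx
  have h := nsing_perp B hB h2 ⊤ x w Submodule.mem_top hxx hw hxw (2 * m + 3)
    (by rw [finrank_top]; omega)
  rw [nsing_top B hB h2 hodd hnd hd, top_inf_eq] at h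
  linear_combination -h

lemma finrank_ker_eq (B : V →ₗ[F] V →ₗ[F] F) (hnd : NonDeg B ⊤) {m : ℕ}
    (hd : Module.finrank F V = m + 1) (x : V) (hx : x ≠ 0) :
    Module.finrank F (LinearMap.ker (B x)) = m := by
  obtain ⟨w, hw, hxw⟩ := hnd.exists_partner (Submodule.mem_top (x := x)) hx
  have h := finrank_inf_ker ⊤ (B x) w hw hxw
  rw [top_inf_eq, finrank_top] at h
  omega

lemma exists_mem_ker (B : V →ₗ[F] V →ₗ[F] F) (hnd : NonDeg B ⊤) (x z : V) (hx : x ≠ 0)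
    (hz : ∀ c : F, z ≠ c • x) : ∃ w ∈ LinearMap.ker (B x), B z w ≠ 0 := by
  by_contra! h
  obtain ⟨w, hw, hxw⟩ := hnd.exists_partner (Submodule.mem_top (x := x)) hx
  apply hz (B z w / B x w)
  rw [← sub_eq_zero]
  refine hnd _ Submodule.mem_top fun y _ => ?_
  have := h (y - (B x y / B x w) • w) (by simp [hxw])
  simp only [map_sub, map_smul, smul_eq_mul, LinearMap.sub_apply, LinearMap.smul_apply] at this ⊢
  rw [← this]
  field_simp

lemma nsing_ker_ker_singular (B : V →ₗ[F] V →ₗ[F] F) (hB : ∀ x y, B x y = B y x)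
    (h2 : (2 : F) ≠ 0)
    (hodd : Fintype.card F % 2 = 1) (hnd : NonDeg B ⊤) {m : ℕ}
    (hd : Module.finrank F V = 2 * m + 5) (x z : V) (hx : x ≠ 0) (hxx : B x x = 0)
    (hxz : B x z = 0) (hz : ∀ c : F, z ≠ c • x) (hzz : B z z = 0) :
    (nsing B (LinearMap.ker (B x) ⊓ LinearMap.ker (B z)) : ℤ) =
      (Fintype.card F : ℤ) ^ (2 * m + 2) := by
  obtain ⟨w, hw, hzw⟩ := exists_mem_ker B hnd x z hx hz
  have h := nsing_perp B hB h2 (LinearMap.ker (B x)) z w hxz hzz hw hzw (2 * m + 2)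
    (finrank_ker_eq B hnd hd x hx)
  rw [nsing_ker_singular B hB h2 hodd hnd hd x hx hxx] at h
  linear_combination -h

lemma nsing_ker_ker_nonsingular (B : V →ₗ[F] V →ₗ[F] F) (hB : ∀ x y, B x y = B y x)
    (h2 : (2 : F) ≠ 0) (hnd : NonDeg B ⊤) {m : ℕ}
    (hd : Module.finrank F V = 2 * m + 5) (x z : V) (hx : x ≠ 0) (hxx : B x x = 0)
    (hxz : B x z = 0) (hzz : B z z ≠ 0) :
    (nsing B (LinearMap.ker (B x) ⊓ LinearMap.ker (B z)) : ℤ) =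
      nsing B (LinearMap.ker (B z)) -
        ((Fintype.card F : ℤ) - 1) * (Fintype.card F : ℤ) ^ (2 * m + 2) := by
  have hz0 : z ≠ 0 := by rintro rfl; simp at hzz
  obtain ⟨w, hw, hxw⟩ := exists_mem_ker B hnd z x hz0 (by
    rintro c rfl
    simp only [map_smul, LinearMap.smul_apply, smul_eq_mul] at hxz
    rcases mul_eq_zero.mp hxz with h | h
    · simp [h] at hx
    · exact hzz h)
  have h := nsing_perp B hB h2 (LinearMap.ker (B z)) x w (by simpa [hB z x] using hxz) hxx hw hxw
    (2 * m + 2) (finrank_ker_eq B hnd hd z hz0)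
  rw [inf_comm] at h
  linear_combination -h

lemma nsing_ker_ker_le (B : V →ₗ[F] V →ₗ[F] F) (hB : ∀ x y, B x y = B y x)
    (h2 : (2 : F) ≠ 0) (hnd : NonDeg B ⊤) {m : ℕ}
    (hd : Module.finrank F V = 2 * m + 5) (x z : V) (hx : x ≠ 0) (hxx : B x x = 0)
    (hxz : B x z = 0) (hzz : B z z ≠ 0) :
    (nsing B (LinearMap.ker (B x) ⊓ LinearMap.ker (B z)) : ℤ) ≤
      (Fintype.card F : ℤ) ^ (2 * m + 2) +
        ((Fintype.card F : ℤ) ^ (m + 2) - (Fintype.card F : ℤ) ^ (m + 1)) := by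
  have hz0 : z ≠ 0 := by rintro rfl; simp at hzz
  have hq : (0 : ℤ) < Fintype.card F := by exact_mod_cast Fintype.card_pos
  rw [nsing_ker_ker_nonsingular B hB h2 hnd hd x z hx hxx hxz hzz]
  have h := hnd.perp hB z Submodule.mem_top hzz
  rw [top_inf_eq] at h
  have h3 := nsing_even_le B hB h2 (m + 2) _ h (finrank_ker_eq B hnd hd z hz0)
  have h4 : (Fintype.card F : ℤ) * nsing B (LinearMap.ker (B z)) ≤ (Fintype.card F : ℤ) *
      ((Fintype.card F : ℤ) ^ (2 * m + 3) + (Fintype.card F : ℤ) ^ (m + 2)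
        - (Fintype.card F : ℤ) ^ (m + 1)) := by
    ring_nf at h3 ⊢
    linarith
  have h5 := le_of_mul_le_mul_left h4 hq
  ring_nf at h5 ⊢
  linarith

/-! ### Counting pairs of orthogonal singular vectors -/

/-- For a fixed `x`, the number of singular vectors `y` orthogonal to `x` on which the alternating
form `(x, y) ↦ B (A x) y` does not vanish. -/
noncomputable def fiberCount (B : V →ₗ[F] V →ₗ[F] F) (A : V →ₗ[F] V) (x : V) : ℕ :=
  (univ.filter fun y : V => (y ∈ LinearMap.ker (B x) ∧ B y y = 0) ∧ B (A x) y ≠ 0).card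

/-- The number of singular vectors that are eigenvectors of `A` (zero included). -/
noncomputable def eigCount (B : V →ₗ[F] V →ₗ[F] F) (A : V →ₗ[F] V) : ℕ :=
  (univ.filter fun x : V => B x x = 0 ∧ ∃ c : F, A x = c • x).card

/-- The number of singular vectors whose image under `A` is nonsingular. -/
noncomputable def nonsingCount (B : V →ₗ[F] V →ₗ[F] F) (A : V →ₗ[F] V) : ℕ :=
  (univ.filter fun x : V => B x x = 0 ∧ B (A x) (A x) ≠ 0).card

lemma fiberCount_add (B : V →ₗ[F] V →ₗ[F] F) (A : V →ₗ[F] V) (x : V) :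
    (fiberCount B A x : ℤ) = nsing B (LinearMap.ker (B x)) -
      nsing B (LinearMap.ker (B x) ⊓ LinearMap.ker (B (A x))) := by
  rw [nsing_inf_ker_add B (LinearMap.ker (B x)) (B (A x)), fiberCount]
  push_cast
  ring

/-- A lower bound for the number of pairs of orthogonal singular vectors on which the alternating
form does not vanish, in terms of the two counts `eigCount` and `nonsingCount`. -/
lemma sum_fiberCount_ge (B : V →ₗ[F] V →ₗ[F] F) (hB : ∀ x y, B x y = B y x)
    (h2 : (2 : F) ≠ 0) (hodd : Fintype.card F % 2 = 1) (hnd : NonDeg B ⊤) {m : ℕ}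
    (hd : Module.finrank F V = 2 * m + 5) (A : V →ₗ[F] V) (hA : ∀ x, B (A x) x = 0) :
    ((Fintype.card F : ℤ) ^ (2 * m + 3) - (Fintype.card F : ℤ) ^ (2 * m + 2)) *
        ((Fintype.card F : ℤ) ^ (2 * m + 4) - eigCount B A) -
      ((Fintype.card F : ℤ) ^ (m + 2) - (Fintype.card F : ℤ) ^ (m + 1)) * nonsingCount B A ≤
    ∑ x ∈ univ.filter (fun x : V => B x x = 0), (fiberCount B A x : ℤ) := by
  set q : ℤ := (Fintype.card F : ℤ) with hq
  have hs : (univ.filter (fun x : V => B x x = 0)).card = nsing B ⊤ := by simp [nsing]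
  have hN : (nonsingCount B A : ℤ) = ∑ x ∈ univ.filter (fun x : V => B x x = 0),
      if B (A x) (A x) ≠ 0 then (1 : ℤ) else 0 := by
    rw [sum_boole, filter_filter, nonsingCount]
  have hE : (eigCount B A : ℤ) = ∑ x ∈ univ.filter (fun x : V => B x x = 0),
      if ∃ c : F, A x = c • x then (1 : ℤ) else 0 := by
    rw [sum_boole, filter_filter, eigCount]
  have hT : q ^ (2 * m + 4) = ∑ x ∈ univ.filter (fun x : V => B x x = 0), (1 : ℤ) := by
    rw [sum_const, hs, nsmul_eq_mul, nsing_top B hB h2 hodd hnd hd]; simp [hq]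
  rw [hN, hE, hT, ← sum_sub_distrib, mul_sum, mul_sum, ← sum_sub_distrib]
  refine sum_le_sum fun x hx => ?_
  have hxx : B x x = 0 := by simpa using hx
  by_cases he : ∃ c : F, A x = c • x
  · have : B (A x) (A x) = 0 := by
      obtain ⟨c, hc⟩ := he
      rw [hc]; simp [hxx]
    simp [he, this]
  · have hx0 : x ≠ 0 := by rintro rfl; exact he ⟨0, by simp⟩
    have hxz : B x (A x) = 0 := by rw [hB]; exact hA x
    rw [fiberCount_add, nsing_ker_singular B hB h2 hodd hnd hd x hx0 hxx]
    by_cases hz : B (A x) (A x) = 0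
    · rw [nsing_ker_ker_singular B hB h2 hodd hnd hd x (A x) hx0 hxx hxz
        (fun c hc => he ⟨c, hc⟩) hz]
      simp [he, hz, hq]
    · have := nsing_ker_ker_le B hB h2 hnd hd x (A x) hx0 hxx hxz hz
      simp only [he, hz, if_false, if_true, ne_eq, not_false_eq_true]
      linarith

/-! ### The key inequality: reductions and rank at least four -/

lemma eigCount_add_nonsingCount_le (B : V →ₗ[F] V →ₗ[F] F) (A : V →ₗ[F] V) :
    eigCount B A + nonsingCount B A ≤ nsing B ⊤ := by
  unfold eigCount nonsingCount nsing
  rw [← card_union_of_disjoint]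
  · apply card_le_card
    intro x hx
    simp only [mem_union, mem_filter, mem_univ, true_and, Submodule.mem_top] at hx ⊢
    tauto
  · rw [disjoint_left]
    intro x hx hx'
    simp only [mem_filter, mem_univ, true_and] at hx hx'
    obtain ⟨h, c, hc⟩ := hx
    apply hx'.2
    rw [hc]; simp [h]

/-- The inequality between the two counts that yields the lower bound on the weight. -/
def KeyIneq (B : V →ₗ[F] V →ₗ[F] F) (A : V →ₗ[F] V) (m : ℕ) : Prop :=
  (Fintype.card F : ℤ) ^ (m + 1) * (eigCount B A - (Fintype.card F : ℤ) ^ (2 * m + 2)) ≤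
    (Fintype.card F : ℤ) ^ (2 * m + 4) - (Fintype.card F : ℤ) ^ (2 * m + 2) - nonsingCount B A

lemma keyIneq_of_eigCount_le (B : V →ₗ[F] V →ₗ[F] F) (hB : ∀ x y, B x y = B y x)
    (h2 : (2 : F) ≠ 0) (hodd : Fintype.card F % 2 = 1) (hnd : NonDeg B ⊤) {m : ℕ}
    (hd : Module.finrank F V = 2 * m + 5) (A : V →ₗ[F] V)
    (hE : (eigCount B A : ℤ) ≤ (Fintype.card F : ℤ) ^ (2 * m + 2)) : KeyIneq B A m := by
  unfold KeyIneq
  have h := eigCount_add_nonsingCount_le B A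
  have h' : (eigCount B A : ℤ) + nonsingCount B A ≤ nsing B ⊤ := by exact_mod_cast h
  rw [nsing_top B hB h2 hodd hnd hd] at h'
  have hq1 : (1 : ℤ) ≤ (Fintype.card F : ℤ) ^ (m + 1) :=
    one_le_pow₀ (by exact_mod_cast Fintype.card_pos)
  nlinarith

lemma skew_of_alt {B : V →ₗ[F] V →ₗ[F] F} {A : V →ₗ[F] V}
    (hA : ∀ x, B (A x) x = 0) (x y : V) : B (A x) y = - B (A y) x := by
  have := hA (x + y)
  simp only [map_add, LinearMap.add_apply, hA] at this
  linear_combination this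

lemma nonDeg_top_iff {B : V →ₗ[F] V →ₗ[F] F} (hB : ∀ x y, B x y = B y x) (hnd : NonDeg B ⊤) :
    LinearMap.BilinForm.Nondegenerate B := by
  constructor
  · intro x hx
    exact hnd x Submodule.mem_top fun y _ => hx y
  · intro x hx
    exact hnd x Submodule.mem_top fun y _ => by rw [hB]; exact hx y

lemma finrank_isotropic_le {B : V →ₗ[F] V →ₗ[F] F} (hB : ∀ x y, B x y = B y x)
    (hnd : NonDeg B ⊤) (T : Submodule F V) (hT : ∀ x ∈ T, ∀ y ∈ T, B x y = 0) :
    2 * Module.finrank F T ≤ Module.finrank F V := by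
  have h := LinearMap.BilinForm.finrank_orthogonal (nonDeg_top_iff hB hnd) T
  have h1 : T ≤ LinearMap.BilinForm.orthogonal B T := by
    intro x hx
    rw [LinearMap.BilinForm.mem_orthogonal_iff]
    intro y hy
    exact hT y hy x hx
  have h2 := Submodule.finrank_mono h1
  have h3 := Submodule.finrank_le T
  omega

/-- The eigenspace of `A` for the eigenvalue `c`. -/
def eigSpace (A : V →ₗ[F] V) (c : F) : Submodule F V := LinearMap.ker (A - c • LinearMap.id)

lemma mem_eigSpace {A : V →ₗ[F] V} {c : F} {x : V} : x ∈ eigSpace A c ↔ A x = c • x := by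
  simp [eigSpace, sub_eq_zero]

lemma eigSpace_isotropic {B : V →ₗ[F] V →ₗ[F] F} (hB : ∀ x y, B x y = B y x)
    (h2 : (2 : F) ≠ 0) {A : V →ₗ[F] V} (hA : ∀ x, B (A x) x = 0) {c : F} (hc : c ≠ 0) :
    ∀ x ∈ eigSpace A c, ∀ y ∈ eigSpace A c, B x y = 0 := by
  intro x hx y hy
  rw [mem_eigSpace] at hx hy
  have h := skew_of_alt hA x y
  rw [hx, hy] at h
  simp only [map_smul, LinearMap.smul_apply, smul_eq_mul, hB y x] at h
  have : 2 * c * B x y = 0 := by linear_combination h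
  simpa [h2, hc] using this

lemma eigCount_le (B : V →ₗ[F] V →ₗ[F] F) (A : V →ₗ[F] V) (e : ℕ)
    (he : ∀ c : F, Module.finrank F (eigSpace A c) ≤ e) :
    eigCount B A ≤ Fintype.card F ^ (e + 1) := by
  have h1 : (univ.filter fun x : V => B x x = 0 ∧ ∃ c : F, A x = c • x) ⊆
      (univ : Finset F).biUnion fun c => univ.filter fun x : V => x ∈ eigSpace A c := by
    intro x hx
    simp only [mem_filter, mem_univ, true_and, mem_biUnion, mem_eigSpace] at hx ⊢
    exact hx.2
  refine (card_le_card h1).trans (card_biUnion_le.trans ?_)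
  calc ∑ c : F, (univ.filter fun x : V => x ∈ eigSpace A c).card
      ≤ ∑ c : F, Fintype.card F ^ e := by
        refine sum_le_sum fun c _ => ?_
        rw [card_filter_mem]
        exact Nat.pow_le_pow_right Fintype.card_pos (he c)
    _ = Fintype.card F ^ (e + 1) := by simp [pow_succ, mul_comm]

/-- If the Pfaffian of the alternating form on `u, v, x, y` is nonzero then `A` has rank at
least four. -/
lemma finrank_ker_of_pfaffian {B : V →ₗ[F] V →ₗ[F] F} {A : V →ₗ[F] V}
    (hA : ∀ x, B (A x) x = 0) (u v x y : V)
    (hp : B (A u) v * B (A x) y - B (A u) x * B (A v) y + B (A v) x * B (A u) y ≠ 0) :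
    Module.finrank F (LinearMap.ker A) + 4 ≤ Module.finrank F V := by
  have hli : LinearIndependent F ![A u, A v, A x, A y] := by
    rw [Fintype.linearIndependent_iff]
    intro g hg
    simp only [Fin.sum_univ_four, Matrix.cons_val] at hg
    have hs := skew_of_alt hA
    have e : ∀ w, g 0 * B (A u) w + g 1 * B (A v) w + g 2 * B (A x) w + g 3 * B (A y) w = 0 := by
      intro w
      have := congrArg (fun t => B t w) hg
      simpa using this
    have eu := e u
    have ev := e v
    have ex := e x
    have ey := e y
    simp only [hA, hs v u, hs x u, hs x v, hs y u, hs y v, hs y x] at eu ev ex ey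
    have k0 : g 0 * (B (A u) v * B (A x) y - B (A u) x * B (A v) y + B (A v) x * B (A u) y) = 0 := by
      linear_combination B (A x) y * ev - B (A v) y * ex + B (A v) x * ey
    have k1 : g 1 * (B (A u) v * B (A x) y - B (A u) x * B (A v) y + B (A v) x * B (A u) y) = 0 := by
      linear_combination - B (A x) y * eu + B (A u) y * ex - B (A u) x * ey
    have k2 : g 2 * (B (A u) v * B (A x) y - B (A u) x * B (A v) y + B (A v) x * B (A u) y) = 0 := by
      linear_combination B (A v) y * eu - B (A u) y * ev + B (A u) v * ey
    have k3 : g 3 * (B (A u) v * B (A x) y - B (A u) x * B (A v) y + B (A v) x * B (A u) y) = 0 := by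
      linear_combination - B (A v) x * eu + B (A u) x * ev - B (A u) v * ex
    intro i
    fin_cases i
    · exact (mul_eq_zero.mp k0).resolve_right hp
    · exact (mul_eq_zero.mp k1).resolve_right hp
    · exact (mul_eq_zero.mp k2).resolve_right hp
    · exact (mul_eq_zero.mp k3).resolve_right hp
  have h1 := LinearMap.finrank_range_add_finrank_ker A
  have h3 : Module.finrank F (Submodule.span F (Set.range ![A u, A v, A x, A y])) = 4 := by
    rw [finrank_span_eq_card hli]; simp
  have h4 : Submodule.span F (Set.range ![A u, A v, A x, A y]) ≤ LinearMap.range A := by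
    rw [Submodule.span_le]
    rintro _ ⟨i, rfl⟩
    fin_cases i <;> simp
  have h5 := Submodule.finrank_mono h4
  omega

/-- The exceptional configuration in dimension five: `A` has an eigenvalue `c ≠ 0` whose
eigenspace is a totally singular plane. Then the eigenspace of `-c` is also a plane, and together
with the kernel the two planes span the whole space. -/
lemma keyIneq_special (B : V →ₗ[F] V →ₗ[F] F) (hB : ∀ x y, B x y = B y x)
    (h2 : (2 : F) ≠ 0) (hodd : Fintype.card F % 2 = 1) (hnd : NonDeg B ⊤)
    (hd : Module.finrank F V = 5) (A : V →ₗ[F] V) (hA : ∀ x, B (A x) x = 0)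
    (z : V) (hz0 : z ≠ 0) (hz : A z = 0) (c : F) (hc : c ≠ 0)
    (hT : 2 ≤ Module.finrank F (eigSpace A c)) : KeyIneq B A 0 := by
  have hs := skew_of_alt hA
  have hc' : -c ≠ 0 := neg_ne_zero.mpr hc
  have hTi := eigSpace_isotropic hB h2 hA hc
  have hTi' := eigSpace_isotropic hB h2 hA hc'
  have hT1 := finrank_isotropic_le hB hnd _ hTi
  have hT1' := finrank_isotropic_le hB hnd _ hTi'
  have hT2 : Module.finrank F (eigSpace A c) = 2 := by omega
  have hT2' : Module.finrank F (eigSpace A (-c)) = 2 := by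
    have h3 := LinearMap.finrank_range_add_finrank_ker (A - (-c) • LinearMap.id)
    have h4 := LinearMap.BilinForm.finrank_orthogonal (nonDeg_top_iff hB hnd) (eigSpace A c)
    have h5 : LinearMap.range (A - (-c) • LinearMap.id) ≤
        LinearMap.BilinForm.orthogonal B (eigSpace A c) := by
      rintro _ ⟨y, rfl⟩
      rw [LinearMap.BilinForm.mem_orthogonal_iff]
      intro t ht
      rw [mem_eigSpace] at ht
      have := hs t y
      rw [ht] at this
      simp only [map_smul, LinearMap.smul_apply, smul_eq_mul, hB (A y) t] at this
      change B t _ = 0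
      simp only [neg_smul, sub_neg_eq_add, LinearMap.add_apply, LinearMap.smul_apply,
        LinearMap.id_coe, id_eq, map_add, map_smul, smul_eq_mul]
      linear_combination this
    have h6 := Submodule.finrank_mono h5
    change _ + Module.finrank F (eigSpace A (-c)) = _ at h3
    omega
  set T := eigSpace A c with hTdef
  set T' := eigSpace A (-c) with hTdef'
  have hinf : T ⊓ T' = ⊥ := by
    rw [Submodule.eq_bot_iff]
    rintro x ⟨h, h'⟩
    simp only [SetLike.mem_coe, hTdef, hTdef', mem_eigSpace] at h h'
    rw [h] at h'
    have : (2 * c) • x = 0 := by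
      rw [two_mul, add_smul]; nth_rewrite 1 [h']; simp
    rcases smul_eq_zero.mp this with h | h
    · simp [h2, hc] at h
    · exact h
  have hdis : ∀ x, x ∈ T → x ∈ T' → x = 0 := fun x h h' =>
    (Submodule.mem_bot F).mp (hinf ▸ ⟨h, h'⟩)
  have hzc : ∀ (e : F), e ≠ 0 → ∀ t, A t = e • t → B z t = 0 := by
    intro e he t ht
    have := hs z t
    rw [hz, ht] at this
    simp only [map_zero, LinearMap.zero_apply, map_smul, LinearMap.smul_apply, smul_eq_mul,
      hB t z, zero_eq_neg] at this
    exact (mul_eq_zero.mp this).resolve_left he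
  have hsup : T ⊔ T' = LinearMap.ker (B z) := by
    apply Submodule.eq_of_le_of_finrank_eq
    · apply sup_le
      · intro t ht; exact hzc c hc t (mem_eigSpace.mp ht)
      · intro t ht; exact hzc (-c) hc' t (mem_eigSpace.mp ht)
    · have := Submodule.finrank_sup_add_finrank_inf_eq T T'
      rw [hinf, finrank_bot] at this
      rw [finrank_ker_eq B hnd (m := 4) hd z hz0]
      omega
  have hdec : ∀ x, B z x = 0 → ∃ t ∈ T, ∃ t' ∈ T', x = t + t' ∧ A x = c • t - c • t' := by
    intro x hx
    have : x ∈ T ⊔ T' := by rw [hsup]; exact hx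
    obtain ⟨t, ht, t', ht', rfl⟩ := Submodule.mem_sup.mp this
    refine ⟨t, ht, t', ht', rfl, ?_⟩
    rw [map_add, mem_eigSpace.mp ht, mem_eigSpace.mp ht']
    simp [sub_eq_add_neg]
  have hzz : B z z ≠ 0 := by
    intro h
    obtain ⟨t, ht, t', ht', e1, e2⟩ := hdec z h
    rw [hz, ← smul_sub, eq_comm, smul_eq_zero] at e2
    have e3 : t = t' := sub_eq_zero.mp (e2.resolve_left hc)
    have := hdis t ht (e3 ▸ ht')
    apply hz0
    rw [e1, ← e3, this, add_zero]
  have hN : nonsingCount B A + nsing B (LinearMap.ker (B z)) ≤ nsing B ⊤ := by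
    unfold nonsingCount nsing
    rw [← card_union_of_disjoint]
    · apply card_le_card
      intro x hx
      simp only [mem_union, mem_filter, mem_univ, true_and, Submodule.mem_top] at hx ⊢
      tauto
    · rw [disjoint_left]
      intro x hx hx'
      simp only [mem_filter, mem_univ, true_and, LinearMap.mem_ker] at hx hx'
      obtain ⟨t, ht, t', ht', e1, e2⟩ := hdec x hx'.1
      apply hx.2
      have h3 := hx.1
      rw [e1] at h3
      rw [e2]
      simp only [map_add, map_sub, map_smul, LinearMap.add_apply, LinearMap.sub_apply,
        LinearMap.smul_apply, smul_eq_mul, hTi t ht t ht, hTi' t' ht' t' ht', hB t' t] at h3 ⊢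
      linear_combination - c ^ 2 * h3
  have hE : (eigCount B A : ℤ) ≤ 2 * (Fintype.card F : ℤ) ^ 2 - 1 := by
    have h3 : (univ.filter fun x : V => B x x = 0 ∧ ∃ c : F, A x = c • x) ⊆
        (univ.filter fun x : V => x ∈ T) ∪ (univ.filter fun x : V => x ∈ T') := by
      intro x hx
      simp only [mem_union, mem_filter, mem_univ, true_and] at hx ⊢
      obtain ⟨hxx, e, he⟩ := hx
      by_cases he0 : e = 0
      · -- a kernel vector differs from a multiple of `z` by a kernel vector in `T ⊔ T'`, where `A`
        -- is injective; so it is a multiple of the nonsingular vector `z`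
        subst he0
        rw [zero_smul] at he
        obtain ⟨t, ht, t', ht', e1, e2⟩ := hdec (x - (B z x / B z z) • z) (by simp [hzz])
        rw [map_sub, he, map_smul, hz, smul_zero, sub_zero, ← smul_sub, eq_comm,
          smul_eq_zero] at e2
        have e3 : t = t' := sub_eq_zero.mp (e2.resolve_left hc)
        have e4 := hdis t ht (e3 ▸ ht')
        rw [← e3, e4, add_zero, sub_eq_zero] at e1
        rw [e1] at hxx
        simp only [map_smul, LinearMap.smul_apply, smul_eq_mul, mul_eq_zero, hzz, or_false,
          or_self] at hxx
        left
        rw [e1, div_eq_zero_iff.mpr (by simpa [hzz] using hxx), zero_smul]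
        exact T.zero_mem
      · obtain ⟨t, ht, t', ht', e1, e2⟩ := hdec x (hzc e he0 x he)
        rw [he, e1] at e2
        have e3 : (c - e) • t = (c + e) • t' := by
          rw [sub_smul, add_smul]
          rw [smul_add] at e2
          rw [← sub_eq_zero] at e2 ⊢
          rw [← neg_eq_zero, ← e2]
          abel
        have e4 : (c - e) • t = 0 := hdis _ (T.smul_mem _ ht) (e3 ▸ T'.smul_mem _ ht')
        rcases smul_eq_zero.mp e4 with h | h
        · left
          rw [e4, ← sub_eq_zero.mp h, ← two_mul, eq_comm, smul_eq_zero] at e3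
          have : t' = 0 := e3.resolve_left (mul_ne_zero h2 hc)
          rw [e1, this, add_zero]; exact ht
        · right
          rw [e1, h, zero_add]; exact ht'
    have h4 := card_le_card h3
    have h5 := card_union_add_card_inter (univ.filter fun x : V => x ∈ T)
      (univ.filter fun x : V => x ∈ T')
    rw [card_filter_mem, card_filter_mem, hT2, hT2'] at h5
    have h6 : 0 < ((univ.filter fun x : V => x ∈ T) ∩ (univ.filter fun x : V => x ∈ T')).card := by
      apply card_pos.mpr
      exact ⟨0, by simp⟩
    change (((univ.filter fun x : V => B x x = 0 ∧ ∃ c : F, A x = c • x).card : ℕ) : ℤ) ≤ _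
    zify at h4 h5 h6
    linarith
  have hW : NonDeg B (LinearMap.ker (B z)) := by
    have := hnd.perp hB z Submodule.mem_top hzz
    rwa [top_inf_eq] at this
  have hK : (nsing B (LinearMap.ker (B z)) : ℤ) = (Fintype.card F : ℤ) ^ 3 +
      (Fintype.card F : ℤ) ^ 2 - Fintype.card F := by
    have hTW : T ≤ LinearMap.ker (B z) := hsup ▸ le_sup_left
    have hWd := finrank_ker_eq B hnd (m := 4) hd z hz0
    obtain ⟨t, ht, ht0⟩ := exists_mem_ne_zero T (by omega)
    obtain ⟨w, hw, htw⟩ := hW.exists_partner (hTW ht) ht0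
    have htt := hTi t ht t ht
    have hg : B t t * B w w - B t w ^ 2 ≠ 0 := by simp [htt, htw]
    have hf := finrank_split B hB _ t w (hTW ht) hw hg
    have hW2 := hW.split hB t w (hTW ht) hw hg
    have r := finrank_le_inf_ker T (B w)
    obtain ⟨s, hsT, hs0⟩ := exists_mem_ne_zero (T ⊓ LinearMap.ker (B w)) (by omega)
    have hsW : s ∈ LinearMap.ker (B z) ⊓ LinearMap.ker (B t) ⊓ LinearMap.ker (B w) :=
      ⟨⟨hTW hsT.1, hTi t ht s hsT.1⟩, hsT.2⟩
    obtain ⟨w', hw', hsw⟩ := hW2.exists_partner hsW hs0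
    have hss := hTi s hsT.1 s hsT.1
    have hg' : B s s * B w' w' - B s w' ^ 2 ≠ 0 := by simp [hss, hsw]
    have hf' := finrank_split B hB _ s w' hsW hw' hg'
    rw [nsing_split B hB h2 _ t w (hTW ht) htt hw htw 2 hWd,
      nsing_split B hB h2 _ s w' hsW hss hw' hsw 0 (by omega), nsing_anisotropic]
    · push_cast; ring
    · intro a ha _
      rw [Submodule.finrank_eq_zero.mp (by omega : Module.finrank F
        (LinearMap.ker (B z) ⊓ LinearMap.ker (B t) ⊓ LinearMap.ker (B w) ⊓ LinearMap.ker (B s) ⊓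
          LinearMap.ker (B w') : Submodule F V) = 0)] at ha
      simpa using ha
  have hN' : (nonsingCount B A : ℤ) + nsing B (LinearMap.ker (B z)) ≤ nsing B ⊤ := by
    exact_mod_cast hN
  rw [hK, nsing_top B hB h2 hodd hnd (m := 0) hd] at hN'
  unfold KeyIneq
  have hq1 : (0 : ℤ) ≤ (Fintype.card F : ℤ) := by positivity
  have := mul_le_mul_of_nonneg_left hE hq1
  norm_num at hN' ⊢
  nlinarith

/-! ### The key inequality: rank two, and conclusion -/

lemma eigCount_le_ker (B : V →ₗ[F] V →ₗ[F] F) (A : V →ₗ[F] V)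
    (h : ∀ x, B x x = 0 → (∃ c : F, A x = c • x) → A x = 0) :
    eigCount B A ≤ nsing B (LinearMap.ker A) := by
  apply card_le_card
  intro x hx
  simp only [mem_filter, mem_univ, true_and, LinearMap.mem_ker] at hx ⊢
  exact ⟨h x hx.1 hx.2, hx.1⟩

/-- The vanishing of all Pfaffians `hp` says that the alternating form `B (A x) y` has rank at most
two. -/
lemma keyIneq_of_rank_two (B : V →ₗ[F] V →ₗ[F] F) (hB : ∀ x y, B x y = B y x)
    (h2 : (2 : F) ≠ 0) (hodd : Fintype.card F % 2 = 1) (hnd : NonDeg B ⊤) {m : ℕ}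
    (hd : Module.finrank F V = 2 * m + 5) (A : V →ₗ[F] V) (hA : ∀ x, B (A x) x = 0)
    (hA0 : A ≠ 0)
    (hp : ∀ u v x y,
      B (A u) v * B (A x) y - B (A u) x * B (A v) y + B (A v) x * B (A u) y = 0) :
    KeyIneq B A m := by
  have hs := skew_of_alt hA
  have hq3 : (3 : ℤ) ≤ Fintype.card F := by
    have : 1 < Fintype.card F := Fintype.one_lt_card
    omega
  -- any `u ∉ ker A` extends to a symplectic pair `u, v`, which describes `A` completely
  have hrep : ∀ u, A u ≠ 0 → ∃ v, B (A u) v = 1 ∧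
      (∀ x, A x = B (A u) x • A v - B (A v) x • A u) := by
    intro u hu
    obtain ⟨w, -, hw⟩ := hnd.exists_partner (Submodule.mem_top (x := A u)) hu
    refine ⟨(B (A u) w)⁻¹ • w, by simp [hw], fun x => ?_⟩
    have h1 : B (A u) ((B (A u) w)⁻¹ • w) = 1 := by simp [hw]
    generalize (B (A u) w)⁻¹ • w = v at h1 ⊢
    rw [← sub_eq_zero]
    refine hnd _ Submodule.mem_top fun y _ => ?_
    have := hp u v x y
    rw [h1] at this
    simp only [map_sub, map_smul, LinearMap.sub_apply, LinearMap.smul_apply, smul_eq_mul]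
    linear_combination this
  have hker : ∀ u v, (∀ x, A x = B (A u) x • A v - B (A v) x • A u) →
      LinearMap.ker A = LinearMap.ker (B (A u)) ⊓ LinearMap.ker (B (A v)) := by
    intro u v h
    ext x
    simp only [LinearMap.mem_ker, Submodule.mem_inf]
    constructor
    · intro hx
      rw [hs u, hs v, hx]; simp
    · rintro ⟨h1, h3⟩
      rw [h x, h1, h3]; simp
  have hNbound : ∀ u v, (∀ x, A x = B (A u) x • A v - B (A v) x • A u) → A u ≠ 0 →
      B (A u) (A u) = 0 → (nonsingCount B A : ℤ) ≤
        (Fintype.card F : ℤ) ^ (2 * m + 4) - (Fintype.card F : ℤ) ^ (2 * m + 3) := by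
    intro u v h hu huu
    rw [← nsing_top B hB h2 hodd hnd hd, ← nsing_ker_singular B hB h2 hodd hnd hd _ hu huu,
      nsing_inf_ker_add B ⊤ (B (A u)), top_inf_eq]
    push_cast
    rw [add_sub_cancel_left]
    norm_cast
    apply card_le_card
    intro x hx
    simp only [mem_filter, mem_univ, true_and, Submodule.mem_top] at hx ⊢
    refine ⟨hx.1, fun h0 => hx.2 ?_⟩
    rw [h x, h0]
    simp [huu]
  by_cases hcase : ∃ u, A u ≠ 0 ∧ B (A u) (A u) = 0
  · obtain ⟨u, hu, huu⟩ := hcase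
    obtain ⟨v, huv, hr⟩ := hrep u hu
    have hN := hNbound u v hr hu huu
    have hk := hker u v hr
    by_cases hab : B (A u) (A v) = 0
    · have hE : (eigCount B A : ℤ) ≤ nsing B (LinearMap.ker A) := by
        exact_mod_cast eigCount_le_ker B A (by
          rintro x - ⟨c, hc⟩
          by_cases hc0 : c = 0
          · rw [hc, hc0, zero_smul]
          -- `A x` is orthogonal to `A u`, hence so is the eigenvector `x`; then `A x` is a multiple
          -- of `A u`, so `x` is orthogonal to `A v` too
          have e1 : B (A u) x = 0 := by
            have : B (A u) (A x) = 0 := by rw [hr x]; simp [huu, hab]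
            rw [hc] at this
            simpa [hc0] using this
          have e2 : B (A v) x = 0 := by
            have : B (A v) (A x) = 0 := by
              rw [hr x, e1]; simp [hB (A v) (A u), hab]
            rw [hc] at this
            simpa [hc0] using this
          rw [hr x, e1, e2]; simp)
      by_cases hbb : B (A v) (A v) = 0
      · apply keyIneq_of_eigCount_le B hB h2 hodd hnd hd
        rw [← nsing_ker_ker_singular B hB h2 hodd hnd hd (A u) (A v) hu huu hab ?_ hbb, ← hk]
        · exact hE
        · intro c hc
          have e1 : B (A v) u = -1 := by rw [hs v u, huv]
          rw [hc] at e1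
          simp [hA] at e1
      · have h3 := nsing_ker_ker_le B hB h2 hnd hd (A u) (A v) hu huu hab hbb
        rw [← hk] at h3
        unfold KeyIneq
        have h4 : (eigCount B A : ℤ) - (Fintype.card F : ℤ) ^ (2 * m + 2) ≤
          (Fintype.card F : ℤ) ^ (m + 2) - (Fintype.card F : ℤ) ^ (m + 1) := by linarith
        have h5 := mul_le_mul_of_nonneg_left h4
          (by positivity : (0 : ℤ) ≤ (Fintype.card F : ℤ) ^ (m + 1))
        refine h5.trans ?_
        have h6 : (Fintype.card F : ℤ) ^ (m + 1) *
          ((Fintype.card F : ℤ) ^ (m + 2) - (Fintype.card F : ℤ) ^ (m + 1)) =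
          (Fintype.card F : ℤ) ^ (2 * m + 3) - (Fintype.card F : ℤ) ^ (2 * m + 2) := by ring
        linarith
    · have hg : B (A u) (A u) * B (A v) (A v) - B (A u) (A v) ^ 2 ≠ 0 := by simp [huu, hab]
      have hKn := hnd.split hB (A u) (A v) Submodule.mem_top Submodule.mem_top hg
      have hKf := finrank_split B hB ⊤ (A u) (A v) Submodule.mem_top Submodule.mem_top hg
      rw [top_inf_eq] at hKn hKf
      rw [← hk] at hKn hKf
      rw [finrank_top] at hKf
      have hKc := nsing_odd B hB h2 hodd (m + 1) _ hKn (by omega)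
      have hE : eigCount B A ≤ nsing B (LinearMap.ker A) +
          (Fintype.card F + Fintype.card F) := by
        have hsub : (univ.filter fun x : V => B x x = 0 ∧ ∃ c : F, A x = c • x) ⊆
            (univ.filter fun x : V => x ∈ LinearMap.ker A ∧ B x x = 0) ∪
            (((univ : Finset F).image fun p : F => p • A u) ∪
             ((univ : Finset F).image fun p : F =>
              p • (B (A v) (A v) • A u - (2 * B (A u) (A v)) • A v))) := by
          intro x hx
          simp only [mem_union, mem_filter, mem_univ, true_and, mem_image,
            LinearMap.mem_ker] at hx ⊢
          obtain ⟨hxx, c, hc⟩ := hx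
          by_cases hc0 : c = 0
          · left; exact ⟨by rw [hc, hc0, zero_smul], hxx⟩
          right
          obtain ⟨p, r, hx⟩ : ∃ p r : F, x = p • A u + r • A v := by
            refine ⟨-(c⁻¹ * B (A v) x), c⁻¹ * B (A u) x, ?_⟩
            calc x = c⁻¹ • A x := by rw [hc, smul_smul, inv_mul_cancel₀ hc0, one_smul]
              _ = c⁻¹ • (B (A u) x • A v - B (A v) x • A u) := congrArg _ (hr x)
              _ = _ := by module
          rw [hx] at hxx
          simp only [map_add, map_smul, LinearMap.add_apply, LinearMap.smul_apply, smul_eq_mul,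
            huu, hB (A v) (A u)] at hxx
          have h3 : r * (2 * B (A u) (A v) * p + r * B (A v) (A v)) = 0 := by
            linear_combination hxx
          rcases mul_eq_zero.mp h3 with h4 | h4
          · left; exact ⟨p, by rw [hx, h4]; simp⟩
          · right
            refine ⟨-r / (2 * B (A u) (A v)), ?_⟩
            rw [hx, smul_sub, smul_smul, smul_smul,
              show -r / (2 * B (A u) (A v)) * B (A v) (A v) = p by
                field_simp; linear_combination -h4,
              show -r / (2 * B (A u) (A v)) * (2 * B (A u) (A v)) = -r by field_simp]
            module
        refine (card_le_card hsub).trans ((card_union_le _ _).trans ?_)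
        refine Nat.add_le_add_left ((card_union_le _ _).trans ?_) _
        exact Nat.add_le_add card_image_le card_image_le
      have hE' : (eigCount B A : ℤ) ≤ nsing B (LinearMap.ker A) +
          (Fintype.card F + Fintype.card F) := by exact_mod_cast hE
      rw [hKc] at hE'
      unfold KeyIneq
      have h4 : (eigCount B A : ℤ) - (Fintype.card F : ℤ) ^ (2 * m + 2) ≤
          2 * Fintype.card F := by ring_nf at hE' ⊢; linarith
      have h5 := mul_le_mul_of_nonneg_left h4
          (by positivity : (0 : ℤ) ≤ (Fintype.card F : ℤ) ^ (m + 1))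
      refine h5.trans ?_
      have h6 : (Fintype.card F : ℤ) ^ (m + 1) * (2 * Fintype.card F) ≤
          (Fintype.card F : ℤ) ^ (2 * m + 3) - (Fintype.card F : ℤ) ^ (2 * m + 2) := by
        have h7 : (1 : ℤ) ≤ (Fintype.card F : ℤ) ^ m := one_le_pow₀ (by linarith)
        have h8 : (2 : ℤ) ≤ (Fintype.card F : ℤ) ^ m * (Fintype.card F - 1) := by nlinarith
        have h9 := mul_le_mul_of_nonneg_left h8
          (by positivity : (0 : ℤ) ≤ (Fintype.card F : ℤ) ^ (m + 2))
        ring_nf at h9 ⊢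
        linarith
      linarith
  · push Not at hcase
    have hu : ∃ u, A u ≠ 0 := by
      by_contra! h
      exact hA0 (LinearMap.ext h)
    obtain ⟨u, hu⟩ := hu
    obtain ⟨v, huv, hr⟩ := hrep u hu
    have huu := hcase u hu
    have hk := hker u v hr
    have hg : B (A u) (A u) * B (A v) (A v) - B (A u) (A v) ^ 2 ≠ 0 := by
      intro h
      have e1 : A (B (A u) (A u) • v - B (A u) (A v) • u) = 0 := by
        by_contra h0
        apply hcase _ h0
        simp only [map_sub, map_smul, LinearMap.sub_apply, LinearMap.smul_apply, smul_eq_mul,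
          hB (A v) (A u)]
        linear_combination B (A u) (A u) * h
      have e2 := hs u (B (A u) (A u) • v - B (A u) (A v) • u)
      rw [e1] at e2
      simp only [map_sub, map_smul, huv, hA, smul_eq_mul, map_zero, LinearMap.zero_apply] at e2
      exact huu (by linear_combination e2)
    have hKn := hnd.split hB (A u) (A v) Submodule.mem_top Submodule.mem_top hg
    have hKf := finrank_split B hB ⊤ (A u) (A v) Submodule.mem_top Submodule.mem_top hg
    rw [top_inf_eq] at hKn hKf
    rw [← hk] at hKn hKf
    rw [finrank_top] at hKf
    have hKc := nsing_odd B hB h2 hodd (m + 1) _ hKn (by omega)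
    apply keyIneq_of_eigCount_le B hB h2 hodd hnd hd
    have hE : (eigCount B A : ℤ) ≤ nsing B (LinearMap.ker A) := by
      exact_mod_cast eigCount_le_ker B A (by
        rintro x hxx ⟨c, hc⟩
        by_contra h0
        apply hcase x h0
        rw [hc]; simp [hxx])
    rw [hKc] at hE
    exact hE

theorem keyIneq (B : V →ₗ[F] V →ₗ[F] F) (hB : ∀ x y, B x y = B y x)
    (h2 : (2 : F) ≠ 0) (hodd : Fintype.card F % 2 = 1) (hnd : NonDeg B ⊤) {m : ℕ}
    (hd : Module.finrank F V = 2 * m + 5) (A : V →ₗ[F] V) (hA : ∀ x, B (A x) x = 0)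
    (hA0 : A ≠ 0) (hz : ∃ z, z ≠ 0 ∧ A z = 0) :
    KeyIneq B A m := by
  by_cases hp : ∀ u v x y,
      B (A u) v * B (A x) y - B (A u) x * B (A v) y + B (A v) x * B (A u) y = 0
  · exact keyIneq_of_rank_two B hB h2 hodd hnd hd A hA hA0 hp
  push Not at hp
  obtain ⟨u, v, x, y, hp⟩ := hp
  have hk := finrank_ker_of_pfaffian hA u v x y hp
  by_cases he : ∀ c : F, Module.finrank F (eigSpace A c) ≤ 2 * m + 1
  · apply keyIneq_of_eigCount_le B hB h2 hodd hnd hd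
    exact_mod_cast eigCount_le B A _ he
  push Not at he
  obtain ⟨c, he⟩ := he
  have hc : c ≠ 0 := by
    rintro rfl
    have : eigSpace A 0 = LinearMap.ker A := by simp [eigSpace]
    rw [this] at he
    omega
  have hi := finrank_isotropic_le hB hnd _ (eigSpace_isotropic hB h2 hA hc)
  have hm : m = 0 := by omega
  subst hm
  obtain ⟨z, hz0, hz⟩ := hz
  exact keyIneq_special B hB h2 hodd hnd hd A hA z hz0 hz c hc (by omega)

theorem sum_fiberCount_lower (B : V →ₗ[F] V →ₗ[F] F) (hB : ∀ x y, B x y = B y x)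
    (h2 : (2 : F) ≠ 0) (hodd : Fintype.card F % 2 = 1) (hnd : NonDeg B ⊤) {m : ℕ}
    (hd : Module.finrank F V = 2 * m + 5) (A : V →ₗ[F] V) (hA : ∀ x, B (A x) x = 0)
    (hA0 : A ≠ 0) (hz : ∃ z, z ≠ 0 ∧ A z = 0) :
    (((Fintype.card F : ℤ) ^ 2 - 1) * ((Fintype.card F : ℤ) ^ 2 - Fintype.card F)) *
      ((Fintype.card F : ℤ) ^ (4 * m + 3) - (Fintype.card F : ℤ) ^ (3 * m + 2)) ≤
    ∑ x ∈ univ.filter (fun x : V => B x x = 0), (fiberCount B A x : ℤ) := by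
  refine le_trans ?_ (sum_fiberCount_ge B hB h2 hodd hnd hd A hA)
  have hk := keyIneq B hB h2 hodd hnd hd A hA hA0 hz
  unfold KeyIneq at hk
  have hq : (1 : ℤ) ≤ Fintype.card F := by exact_mod_cast Fintype.card_pos
  have hd0 : (0 : ℤ) ≤ (Fintype.card F : ℤ) ^ (m + 1) * (Fintype.card F - 1) :=
    mul_nonneg (by positivity) (by linarith)
  have := mul_le_mul_of_nonneg_left hk hd0
  generalize (eigCount B A : ℤ) = E at *
  generalize (nonsingCount B A : ℤ) = N at *
  ring_nf at this ⊢
  linarith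

/-! ### The minimum is attained -/

/-- The minimum is attained by the rank-two form determined by a singular vector `a` and a
nonsingular vector `b ∈ a^⊥` with `b^⊥` of hyperbolic type. -/
theorem exists_sum_fiberCount_eq (B : V →ₗ[F] V →ₗ[F] F) (hB : ∀ x y, B x y = B y x)
    (h2 : (2 : F) ≠ 0) (hodd : Fintype.card F % 2 = 1) (hnd : NonDeg B ⊤) {m : ℕ}
    (hd : Module.finrank F V = 2 * m + 5) : ∃ (a b : V) (A : V →ₗ[F] V),
    (∀ x, A x = B a x • b - B b x • a) ∧ A ≠ 0 ∧
    ∑ x ∈ univ.filter (fun x : V => B x x = 0), (fiberCount B A x : ℤ) =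
    (((Fintype.card F : ℤ) ^ 2 - 1) * ((Fintype.card F : ℤ) ^ 2 - Fintype.card F)) *
      ((Fintype.card F : ℤ) ^ (4 * m + 3) - (Fintype.card F : ℤ) ^ (3 * m + 2)) := by
  have hq0 : (Fintype.card F : ℤ) ≠ 0 := by exact_mod_cast Fintype.card_ne_zero
  obtain ⟨b, -, hbb, hb⟩ := exists_hyperbolic B hB h2 hodd (m + 2) ⊤ hnd (by
    rw [finrank_top]; omega)
  rw [top_inf_eq] at hb
  have hb0 : b ≠ 0 := by rintro rfl; simp at hbb
  obtain ⟨a, hba, ha0, haa⟩ := exists_singular B hB hodd (LinearMap.ker (B b)) (by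
    rw [finrank_ker_eq B hnd hd b hb0]; omega)
  rw [LinearMap.mem_ker] at hba
  have hab : B a b = 0 := by rw [hB, hba]
  have hbN : (nsing B (LinearMap.ker (B b)) : ℤ) = (Fintype.card F : ℤ) ^ (2 * m + 3) +
      (Fintype.card F : ℤ) ^ (m + 2) - (Fintype.card F : ℤ) ^ (m + 1) := by
    apply mul_left_cancel₀ hq0
    linear_combination hb
  let A : V →ₗ[F] V := (B a).smulRight b - (B b).smulRight a
  have hAx : ∀ x, A x = B a x • b - B b x • a := fun x => by simp [A]
  have hA : ∀ x, B (A x) x = 0 := by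
    intro x
    rw [hAx]
    simp only [map_sub, map_smul, LinearMap.sub_apply, LinearMap.smul_apply, smul_eq_mul]
    ring
  refine ⟨a, b, A, hAx, ?_, ?_⟩
  · intro h0
    have := hAx b
    rw [h0, hab] at this
    simp [hbb, ha0] at this
  set q : ℤ := (Fintype.card F : ℤ) with hq
  have hK : (nsing B (LinearMap.ker (B a) ⊓ LinearMap.ker (B b)) : ℤ) =
      q ^ (2 * m + 2) + (q ^ (m + 2) - q ^ (m + 1)) := by
    rw [nsing_ker_ker_nonsingular B hB h2 hnd hd a b ha0 haa hab hbb, hbN]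
    ring
  have hAa := nsing_ker_singular B hB h2 hodd hnd hd a ha0 haa
  have hT := nsing_top B hB h2 hodd hnd hd
  have hval : ∀ x ∈ univ.filter (fun x : V => B x x = 0), (fiberCount B A x : ℤ) =
      (q ^ (2 * m + 3) - q ^ (2 * m + 2)) *
        (1 - if B a x = 0 ∧ B b x = 0 then (1 : ℤ) else 0) -
      (q ^ (m + 2) - q ^ (m + 1)) * (1 - if B a x = 0 then (1 : ℤ) else 0) := by
    intro x hx
    have hxx : B x x = 0 := by simpa using hx
    have hxz : B x (A x) = 0 := by rw [hB]; exact hA x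
    rw [fiberCount_add]
    by_cases h1 : B a x = 0
    · by_cases h3 : B b x = 0
      · have : A x = 0 := by rw [hAx, h1, h3]; simp
        rw [this]
        simp [h1, h3]
      · have hx0 : x ≠ 0 := by rintro rfl; simp at h3
        have hAx' : A x = -(B b x • a) := by rw [hAx, h1]; simp
        rw [nsing_ker_singular B hB h2 hodd hnd hd x hx0 hxx,
          nsing_ker_ker_singular B hB h2 hodd hnd hd x (A x) hx0 hxx hxz ?_ ?_]
        · simp [h1, h3, hq]
        · -- if `A x` were a multiple of `x`, then `B b x` would vanish
          intro c hc
          rw [hAx'] at hc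
          have hc0 : c ≠ 0 := by
            rintro rfl
            simp [h3, ha0] at hc
          have := congrArg (B b) hc
          simp [hba, hc0, h3] at this
        · rw [hAx']; simp [haa]
    · have hx0 : x ≠ 0 := by rintro rfl; simp at h1
      have hzz : B (A x) (A x) ≠ 0 := by
        rw [hAx]
        simp [haa, hab, hba, h1, hbb]
      have haz : B a (A x) = 0 := by rw [hAx]; simp [haa, hab]
      have e1 := nsing_ker_ker_nonsingular B hB h2 hnd hd x (A x) hx0 hxx hxz hzz
      have e2 := nsing_ker_ker_nonsingular B hB h2 hnd hd a (A x) ha0 haa haz hzz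
      have e3 : LinearMap.ker (B a) ⊓ LinearMap.ker (B (A x)) =
          LinearMap.ker (B a) ⊓ LinearMap.ker (B b) := by
        ext y
        simp only [Submodule.mem_inf, LinearMap.mem_ker, hAx, map_sub, map_smul,
          LinearMap.sub_apply, LinearMap.smul_apply, smul_eq_mul]
        constructor
        · rintro ⟨h3, h4⟩
          rw [h3] at h4
          exact ⟨h3, by simpa [h1] using h4⟩
        · rintro ⟨h3, h4⟩
          exact ⟨h3, by rw [h3, h4]; ring⟩
      rw [e3, hK] at e2
      rw [e1, nsing_ker_singular B hB h2 hodd hnd hd x hx0 hxx]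
      simp only [h1, false_and, if_false]
      linear_combination e2
  rw [sum_congr rfl hval, sum_sub_distrib, ← mul_sum, ← mul_sum, sum_sub_distrib, sum_sub_distrib,
    sum_boole, sum_boole, filter_filter, filter_filter, sum_const, nsmul_eq_mul]
  have c1 : (univ.filter (fun x : V => B x x = 0)).card = nsing B ⊤ := by simp [nsing]
  have c2 : (univ.filter (fun x : V => B x x = 0 ∧ B a x = 0 ∧ B b x = 0)).card =
      nsing B (LinearMap.ker (B a) ⊓ LinearMap.ker (B b)) := by
    unfold nsing
    congr 1
    ext x
    simp [and_comm]
  have c3 : (univ.filter (fun x : V => B x x = 0 ∧ B a x = 0)).card =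
      nsing B (LinearMap.ker (B a)) := by
    unfold nsing
    congr 1
    ext x
    simp [and_comm]
  rw [c1, c2, c3, hK, hAa, hT]
  ring

/-! ### From pairs of vectors to lines -/

lemma linearIndependent_of_ne {B : V →ₗ[F] V →ₗ[F] F} {A : V →ₗ[F] V}
    (hA : ∀ x, B (A x) x = 0) {x y : V} (h : B (A x) y ≠ 0) :
    LinearIndependent F ![x, y] := by
  rw [LinearIndependent.pair_iff]
  intro s t hst
  have e1 := congrArg (B (A x)) hst
  have e2 := congrArg (B (A y)) hst
  simp only [map_add, map_smul, hA, smul_eq_mul, mul_zero, zero_add, add_zero, map_zero,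
    mul_eq_zero] at e1 e2
  refine ⟨e2.resolve_right ?_, e1.resolve_right h⟩
  rw [skew_of_alt hA]
  simpa using h

/-- Double counting: every totally singular line on which the alternating form `B (A x) y` does
not vanish has `(q² - 1)(q² - q)` ordered bases, and these are exactly the pairs counted by the
numbers `fiberCount B A x`. -/
theorem sum_fiberCount_eq_lines [Fintype (Submodule F V)] (B : V →ₗ[F] V →ₗ[F] F)
    (hB : ∀ x y, B x y = B y x) (h2 : (2 : F) ≠ 0) (A : V →ₗ[F] V) (hA : ∀ x, B (A x) x = 0) :
    ∑ x ∈ univ.filter (fun x : V => B x x = 0), fiberCount B A x =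
      (univ.filter fun W : Submodule F V => (Module.finrank F W = 2 ∧ ∀ v ∈ W, B v v = 0) ∧
        ¬ ∀ u ∈ W, ∀ v ∈ W, B (A u) v = 0).card *
      ((Fintype.card F ^ 2 - 1) * (Fintype.card F ^ 2 - Fintype.card F)) := by
  set R := univ.filter fun W : Submodule F V => (Module.finrank F W = 2 ∧ ∀ v ∈ W, B v v = 0) ∧
        ¬ ∀ u ∈ W, ∀ v ∈ W, B (A u) v = 0 with hR
  set P := univ.filter fun p : V × V =>
    B p.1 p.1 = 0 ∧ B p.1 p.2 = 0 ∧ B p.2 p.2 = 0 ∧ B (A p.1) p.2 ≠ 0 with hP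
  have h1 : ∑ x ∈ univ.filter (fun x : V => B x x = 0), fiberCount B A x = P.card := by
    unfold fiberCount
    rw [← card_sigma]
    refine card_nbij' (fun p => (p.1, p.2)) (fun p => ⟨p.1, p.2⟩) ?_ ?_ ?_ ?_
    · rintro ⟨x, y⟩ h
      simp only [coe_sigma, coe_filter, Set.mem_sigma_iff, Set.mem_ofPred_eq, mem_univ, true_and,
        LinearMap.mem_ker, hP] at h ⊢
      tauto
    · rintro ⟨x, y⟩ h
      simp only [coe_sigma, coe_filter, Set.mem_sigma_iff, Set.mem_ofPred_eq, mem_univ, true_and,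
        LinearMap.mem_ker, hP] at h ⊢
      tauto
    · intro x _; rfl
    · intro x _; rfl
  have hrange : ∀ x y : V, Set.range ![x, y] = {x, y} := by
    intro x y
    ext v
    simp only [Set.mem_range, Fin.exists_fin_two, Matrix.cons_val_zero, Matrix.cons_val_one,
      Set.mem_insert_iff, Set.mem_singleton_iff, eq_comm]
  have hmaps : ∀ p ∈ P, Submodule.span F {p.1, p.2} ∈ R := by
    rintro ⟨x, y⟩ hp
    simp only [hP, hR, mem_filter, mem_univ, true_and] at hp ⊢
    obtain ⟨hxx, hxy, hyy, hne⟩ := hp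
    refine ⟨⟨?_, ?_⟩, ?_⟩
    · have := finrank_span_eq_card (linearIndependent_of_ne hA hne)
      rwa [hrange, Fintype.card_fin] at this
    · intro v hv
      obtain ⟨s, t, rfl⟩ := Submodule.mem_span_pair.mp hv
      simp [hxx, hxy, hyy, hB y x]
    · intro h
      exact hne (h x (Submodule.subset_span (by simp)) y (Submodule.subset_span (by simp)))
  rw [h1, card_eq_sum_card_fiberwise hmaps]
  rw [sum_congr rfl (g := fun _ =>
    (Fintype.card F ^ 2 - 1) * (Fintype.card F ^ 2 - Fintype.card F)), sum_const, smul_eq_mul]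
  intro W hW
  simp only [hR, mem_filter, mem_univ, true_and] at hW
  obtain ⟨⟨hW2, hWs⟩, hWn⟩ := hW
  have hWo : ∀ x ∈ W, ∀ y ∈ W, B x y = 0 := by
    intro x hx y hy
    have := hWs (x + y) (W.add_mem hx hy)
    simp only [map_add, LinearMap.add_apply, hWs x hx, hWs y hy, hB y x] at this
    have h3 : 2 * B x y = 0 := by linear_combination this
    exact (mul_eq_zero.mp h3).resolve_left h2
  have hc := card_linearIndependent (K := F) (V := W) (k := 2) hW2.ge
  rw [hW2, Fin.prod_univ_two] at hc
  simp only [Fin.val_zero, pow_zero, Fin.val_one, pow_one] at hc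
  rw [← hc, Nat.card_eq_fintype_card, ← card_univ]
  symm
  have hspan : ∀ s : Fin 2 → W, LinearIndependent F s →
      Submodule.span F {(s 0 : V), (s 1 : V)} = W := by
    intro s hs
    have hs' : LinearIndependent F ![(s 0 : V), (s 1 : V)] := by
      have := hs.map' W.subtype W.ker_subtype
      have e : ![(s 0 : V), (s 1 : V)] = W.subtype ∘ s := by
        ext i
        fin_cases i <;> rfl
      rw [e]
      exact this
    apply Submodule.eq_of_le_of_finrank_eq
    · rw [Submodule.span_le]
      rintro v (rfl | rfl) <;> simp
    · have := finrank_span_eq_card hs'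
      rw [hrange, Fintype.card_fin] at this
      exact this.trans hW2.symm
  refine card_bij (fun s _ => ((s.1 0 : V), (s.1 1 : V))) ?_ ?_ ?_
  · rintro ⟨s, hs⟩ -
    have hsp := hspan s hs
    simp only [hP, mem_filter, mem_univ, true_and]
    refine ⟨⟨hWs _ (s 0).2, hWo _ (s 0).2 _ (s 1).2, hWs _ (s 1).2, ?_⟩, hsp⟩
    intro h0
    apply hWn
    intro u hu v hv
    rw [← hsp] at hu hv
    obtain ⟨a, b, rfl⟩ := Submodule.mem_span_pair.mp hu
    obtain ⟨c, d, rfl⟩ := Submodule.mem_span_pair.mp hv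
    simp [hA, h0, skew_of_alt hA (s 1 : V) (s 0 : V)]
  · rintro ⟨s, hs⟩ - ⟨s', hs'⟩ - h
    simp only [Prod.mk.injEq] at h
    ext i
    fin_cases i
    · exact h.1
    · exact h.2
  · rintro ⟨x, y⟩ hp
    simp only [hP, mem_filter, mem_univ, true_and] at hp
    obtain ⟨⟨-, -, -, hne⟩, hsp⟩ := hp
    have hx : x ∈ W := hsp ▸ Submodule.subset_span (by simp)
    have hy : y ∈ W := hsp ▸ Submodule.subset_span (by simp)
    refine ⟨⟨![⟨x, hx⟩, ⟨y, hy⟩], ?_⟩, mem_univ _, rfl⟩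
    apply LinearIndependent.of_comp W.subtype
    convert linearIndependent_of_ne hA hne using 1
    ext i
    fin_cases i <;> rfl

/-- The weight, as a difference of two numbers of lines, is the number of totally singular lines
that are not totally isotropic; rewritten through `sum_fiberCount_eq_lines`. -/
theorem weight_eq (B : V →ₗ[F] V →ₗ[F] F)
    (hB : ∀ x y, B x y = B y x) (h2 : (2 : F) ≠ 0) (A : V →ₗ[F] V) (hA : ∀ x, B (A x) x = 0) :
    ∑ x ∈ univ.filter (fun x : V => B x x = 0), (fiberCount B A x : ℤ) =
      (((Fintype.card F : ℤ) ^ 2 - 1) * ((Fintype.card F : ℤ) ^ 2 - Fintype.card F)) *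
      ((Nat.card {W : Submodule F V // Module.finrank F W = 2 ∧ (∀ v ∈ W, B v v = 0)} : ℤ) -
       (Nat.card {W : Submodule F V // Module.finrank F W = 2 ∧ (∀ v ∈ W, B v v = 0) ∧
          (∀ u ∈ W, ∀ v ∈ W, B (A u) v = 0)} : ℤ)) := by
  have : Finite (Submodule F V) := Finite.of_injective _ (SetLike.coe_injective (A := Submodule F V))
  have : Fintype (Submodule F V) := Fintype.ofFinite _
  have h := sum_fiberCount_eq_lines B hB h2 A hA
  have h3 := card_filter_add_card_filter_not
    (s := univ.filter fun W : Submodule F V => Module.finrank F W = 2 ∧ ∀ v ∈ W, B v v = 0)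
    (fun W => ∀ u ∈ W, ∀ v ∈ W, B (A u) v = 0)
  rw [filter_filter, filter_filter] at h3
  have h4 : Nat.card {W : Submodule F V // Module.finrank F W = 2 ∧ (∀ v ∈ W, B v v = 0)} =
      (univ.filter fun W : Submodule F V =>
        Module.finrank F W = 2 ∧ ∀ v ∈ W, B v v = 0).card := by
    rw [Nat.card_eq_fintype_card, Fintype.card_subtype]
  have h5 : Nat.card {W : Submodule F V // Module.finrank F W = 2 ∧ (∀ v ∈ W, B v v = 0) ∧
          (∀ u ∈ W, ∀ v ∈ W, B (A u) v = 0)} =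
      (univ.filter fun W : Submodule F V =>
        (Module.finrank F W = 2 ∧ ∀ v ∈ W, B v v = 0) ∧
          ∀ u ∈ W, ∀ v ∈ W, B (A u) v = 0).card := by
    rw [Nat.card_eq_fintype_card, Fintype.card_subtype]
    congr 1
    ext W
    simp only [mem_filter, mem_univ, true_and, and_assoc]
  rw [h4, h5, ← h3, ← Nat.cast_sum, h]
  have hq1 : 1 ≤ Fintype.card F := Fintype.card_pos
  have hq2 : 1 ≤ Fintype.card F ^ 2 := Nat.one_le_pow _ _ hq1
  have hq3 : Fintype.card F ≤ Fintype.card F ^ 2 := Nat.le_self_pow (by norm_num) _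
  push_cast [Nat.cast_sub hq2, Nat.cast_sub hq3]
  ring

end Counting

/-! ### The statement for matrices -/

/-- The minimum, over all nonzero antisymmetric matrices `S`, of the number
of 2-dimensional totally singular subspaces minus the number of 2-dimensional subspaces
both totally singular for `M` and totally isotropic for `S`, equals `q^{4n-5} − q^{3n-4}`.
(This is the minimum distance of the line polar Grassmann code of orthogonal type.) -/
theorem stmt_2 (q : ℕ) (F : Type) [Field F] [Fintype F]
    (hcard : Fintype.card F = q) (hodd : Odd q)
    (n : ℕ) (hn : 2 ≤ n)
    (M : Matrix (Fin (2 * n + 1)) (Fin (2 * n + 1)) F)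
    (hMsymm : M.IsSymm) (hMinv : IsUnit M) :
    IsLeast {w : ℤ | ∃ S : Matrix (Fin (2 * n + 1)) (Fin (2 * n + 1)) F,
        S ≠ 0 ∧ Sᵀ = -S ∧
        w = (Nat.card {W : Submodule F (Fin (2 * n + 1) → F) //
              Module.finrank F W = 2 ∧
              (∀ v ∈ W, v ⬝ᵥ M.mulVec v = 0)} : ℤ)
          - (Nat.card {W : Submodule F (Fin (2 * n + 1) → F) //
              Module.finrank F W = 2 ∧
              (∀ v ∈ W, v ⬝ᵥ M.mulVec v = 0) ∧
              (∀ u ∈ W, ∀ v ∈ W, u ⬝ᵥ S.mulVec v = 0)} : ℤ)}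
      ((q : ℤ) ^ (4 * n - 5) - (q : ℤ) ^ (3 * n - 4)) := by
  classical
  obtain ⟨m, rfl⟩ : ∃ m, n = m + 2 := ⟨n - 2, by omega⟩
  subst hcard
  have hodd' : Fintype.card F % 2 = 1 := Nat.odd_iff.mp hodd
  have h2 : (2 : F) ≠ 0 := by
    intro h
    have hc : ringChar F = 2 := CharP.ringChar_of_prime_eq_zero Nat.prime_two (by exact_mod_cast h)
    have := FiniteField.even_card_of_char_two hc
    omega
  rw [show 4 * (m + 2) - 5 = 4 * m + 3 by omega, show 3 * (m + 2) - 4 = 3 * m + 2 by omega]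
  have hdet : IsUnit M.det := (Matrix.isUnit_iff_isUnit_det M).mp hMinv
  set B : (Fin (2 * (m + 2) + 1) → F) →ₗ[F] (Fin (2 * (m + 2) + 1) → F) →ₗ[F] F :=
    Matrix.toLinearMap₂' F M with hBdef
  have hBa : ∀ x y, B x y = x ⬝ᵥ M *ᵥ y := fun x y => Matrix.toLinearMap₂'_apply' M x y
  have hB : ∀ x y, B x y = B y x := by
    intro x y
    rw [hBa, hBa, Matrix.dotProduct_mulVec, ← Matrix.mulVec_transpose, hMsymm.eq,
      dotProduct_comm]
  have hnd : NonDeg B ⊤ := by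
    intro x _ hx
    have h0 : M *ᵥ x = 0 := by
      apply dotProduct_eq_zero
      intro y
      have := hx y Submodule.mem_top
      rw [hB, hBa, dotProduct_comm] at this
      exact this
    have := congrArg (M⁻¹ *ᵥ ·) h0
    simpa [Matrix.mulVec_mulVec, Matrix.nonsing_inv_mul M hdet] using this
  have hd : Module.finrank F (Fin (2 * (m + 2) + 1) → F) = 2 * m + 5 := by simp; ring
  have hq3 : (3 : ℤ) ≤ Fintype.card F := by
    have : 1 < Fintype.card F := Fintype.one_lt_card
    omega
  have hpos : (0 : ℤ) < ((Fintype.card F : ℤ) ^ 2 - 1) *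
      ((Fintype.card F : ℤ) ^ 2 - Fintype.card F) :=
    mul_pos (by nlinarith) (by nlinarith)
  constructor
  · obtain ⟨a, b, A, hA, hA0, hsum⟩ := exists_sum_fiberCount_eq B hB h2 hodd' hnd hd
    have halt : ∀ x, B (A x) x = 0 := by
      intro x
      rw [hA]
      simp only [map_sub, map_smul, LinearMap.sub_apply, LinearMap.smul_apply, smul_eq_mul]
      ring
    have hS : ∀ u v, u ⬝ᵥ (M * LinearMap.toMatrix' A)ᵀ *ᵥ v = B (A u) v := by
      intro u v
      rw [hB, hBa, dotProduct_mulVec, vecMul_transpose, ← mulVec_mulVec, LinearMap.toMatrix'_mulVec,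
        dotProduct_comm]
    refine ⟨(M * LinearMap.toMatrix' A)ᵀ, ?_, ?_, ?_⟩
    · intro h0
      apply hA0
      refine LinearMap.ext fun x => ?_
      change A x = 0
      refine hnd _ Submodule.mem_top fun y _ => ?_
      rw [← hS, h0]; simp
    · ext i j
      have h := skew_of_alt halt (Pi.single j 1) (Pi.single i 1)
      rw [← hS, ← hS] at h
      simpa using h
    · have hw := weight_eq B hB h2 A halt
      rw [hsum] at hw
      have := mul_left_cancel₀ hpos.ne' hw
      simp only [hS, ← hBa]
      exact this
  · rintro w ⟨S, hS0, hST, rfl⟩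
    set A : (Fin (2 * (m + 2) + 1) → F) →ₗ[F] (Fin (2 * (m + 2) + 1) → F) :=
      Matrix.toLin' (M⁻¹ * Sᵀ) with hAdef
    have hS : ∀ u v, u ⬝ᵥ S *ᵥ v = B (A u) v := by
      intro u v
      rw [hB, hBa, hAdef, toLin'_apply, mulVec_mulVec, ← Matrix.mul_assoc,
        Matrix.mul_nonsing_inv M hdet, Matrix.one_mul, dotProduct_mulVec, ← mulVec_transpose,
        dotProduct_comm]
    have halt : ∀ x, B (A x) x = 0 := by
      intro x
      rw [← hS]
      have h : x ⬝ᵥ S *ᵥ x = - (x ⬝ᵥ S *ᵥ x) := by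
        conv_lhs => rw [dotProduct_mulVec, ← mulVec_transpose, hST, neg_mulVec, neg_dotProduct,
          dotProduct_comm]
      have h3 : 2 * (x ⬝ᵥ S *ᵥ x) = 0 := by linear_combination h
      exact (mul_eq_zero.mp h3).resolve_left h2
    have hA0 : A ≠ 0 := by
      intro h0
      apply hS0
      ext i j
      have := hS (Pi.single i 1) (Pi.single j 1)
      rw [h0] at this
      simpa using this
    have hker : ∃ z, z ≠ 0 ∧ A z = 0 := by
      have hdS : Sᵀ.det = 0 := by
        have h : S.det = - S.det := by
          conv_lhs => rw [← det_transpose, hST, det_neg]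
          simp [pow_succ, pow_mul]
        have h3 : 2 * S.det = 0 := by linear_combination h
        rw [det_transpose]
        exact (mul_eq_zero.mp h3).resolve_left h2
      obtain ⟨z, hz0, hz⟩ := Matrix.exists_mulVec_eq_zero_iff.mpr hdS
      refine ⟨z, hz0, ?_⟩
      rw [hAdef, toLin'_apply, ← mulVec_mulVec, hz, mulVec_zero]
    have hlow := sum_fiberCount_lower B hB h2 hodd' hnd hd A halt hA0 hker
    rw [weight_eq B hB h2 A halt] at hlow
    have := le_of_mul_le_mul_left hlow hpos
    simp only [hS, ← hBa]
    exact this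
end

section
/- Let q be an odd prime power, M an invertible symmetric (2n+1)×(2n+1) matrix over F_q, and S an antisymmetric (2n+1)×(2n+1) matrix over F_q. If μ ∈ F_q is nonzero and u, v ∈ F_q^{2n+1} satisfy (M⁻¹S)·u = μ·u and (M⁻¹S)·v = μ·v, then uᵀMv = 0 and uᵀSv = 0. That is, the eigenspace of M⁻¹S of eigenvalue μ is totally singular for M and totally isotropic for S. -/
/-!
Multiplying the eigenvector equations by `M` gives `S u = μ M u` and `S v = μ M v`. Hence
`uᵀSv = μ uᵀMv` and `vᵀSu = μ vᵀMu`. Since `S` is antisymmetric and `M` symmetric, the second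
equation reads `-uᵀSv = μ uᵀMv`, so `2 μ uᵀMv = 0`; as `2` and `μ` are invertible, both
`uᵀMv` and `uᵀSv` vanish.
-/

open Matrix

/-- If `u, v` both lie in the eigenspace of `M⁻¹S` of nonzero eigenvalue
`μ`, then `uᵀMv = 0` and `uᵀSv = 0`: such an eigenspace is totally singular for `M`
and totally isotropic for `S`. -/
theorem stmt_6 (q : ℕ) (F : Type) [Field F] [Fintype F]
    (hcard : Fintype.card F = q) (hodd : Odd q)
    (n : ℕ)
    (M : Matrix (Fin (2 * n + 1)) (Fin (2 * n + 1)) F)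
    (hMsymm : M.IsSymm) (hMinv : IsUnit M)
    (S : Matrix (Fin (2 * n + 1)) (Fin (2 * n + 1)) F)
    (hSanti : Sᵀ = -S)
    (mu : F) (hmu : mu ≠ 0)
    (u v : Fin (2 * n + 1) → F)
    (hu : (M⁻¹ * S).mulVec u = mu • u)
    (hv : (M⁻¹ * S).mulVec v = mu • v) :
    u ⬝ᵥ M.mulVec v = 0 ∧ u ⬝ᵥ S.mulVec v = 0 := by
  have h2 : (2 : F) ≠ 0 := by
    apply Ring.two_ne_zero
    intro h
    have := FiniteField.even_card_iff_char_two.mp h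
    rw [hcard] at this
    have := Nat.odd_iff.mp hodd
    omega
  have hdet : IsUnit M.det := (Matrix.isUnit_iff_isUnit_det M).mp hMinv
  have key : ∀ w : Fin (2 * n + 1) → F, (M⁻¹ * S).mulVec w = mu • w →
      S.mulVec w = mu • M.mulVec w := by
    intro w hw
    have h := congrArg M.mulVec hw
    rwa [Matrix.mulVec_mulVec, Matrix.mul_nonsing_inv_cancel_left _ _ hdet,
      Matrix.mulVec_smul] at h
  have hM : v ⬝ᵥ M.mulVec u = u ⬝ᵥ M.mulVec v := by
    rw [Matrix.dotProduct_mulVec, ← Matrix.mulVec_transpose, hMsymm.eq, dotProduct_comm]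
  have hS : v ⬝ᵥ S.mulVec u = -(u ⬝ᵥ S.mulVec v) := by
    rw [Matrix.dotProduct_mulVec, ← Matrix.mulVec_transpose, hSanti, Matrix.neg_mulVec,
      neg_dotProduct, dotProduct_comm]
  have e1 : u ⬝ᵥ S.mulVec v = mu * (u ⬝ᵥ M.mulVec v) := by
    rw [key v hv, dotProduct_smul, smul_eq_mul]
  have e2 : v ⬝ᵥ S.mulVec u = mu * (v ⬝ᵥ M.mulVec u) := by
    rw [key u hu, dotProduct_smul, smul_eq_mul]
  have h0 : u ⬝ᵥ M.mulVec v = 0 := by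
    have h : (2 * mu) * (u ⬝ᵥ M.mulVec v) = 0 := by
      rw [hM, hS, e1] at e2
      linear_combination -e2
    exact (mul_eq_zero.mp h).resolve_left (mul_ne_zero h2 hmu)
  exact ⟨h0, by rw [e1, h0, mul_zero]⟩
end

section
/- Let q be an odd prime power, M an invertible symmetric (2n+1)×(2n+1) matrix over F_q, and S an antisymmetric (2n+1)×(2n+1) matrix over F_q. Let λ, μ ∈ F_q be nonzero eigenvalues of M⁻¹S with λ ≠ −μ, and let V_λ, V_μ be the corresponding eigenspaces. Then for all w, w′ ∈ V_λ + V_μ one has wᵀMw′ = 0 and wᵀSw′ = 0; that is, V_λ ⊕ V_μ is both totally singular for M and totally isotropic for S. -/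
open Matrix

/-!
On an eigenspace of `M⁻¹S` with eigenvalue `b` one has `S v = b M v`. For `u ∈ V_a`, `v ∈ V_b`,
evaluating `uᵀSv` on the right gives `b uᵀMv`, and on the left, by antisymmetry of `S` and symmetry
of `M`, gives `-a uᵀMv`. Hence `(a + b) uᵀMv = 0`, so `uᵀMv = 0` and `uᵀSv = 0` as soon as
`a + b ≠ 0`. The sums arising from `V_λ + V_μ` are `2λ`, `2μ` (nonzero in odd characteristic) and
`λ + μ`; the claim follows by bilinearity.
-/

lemma mulVec_eq_of_mem_eigenspace {F ι : Type*} [Field F] [Fintype ι] [DecidableEq ι]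
    {M S : Matrix ι ι F} (hM : IsUnit M) {a : F} {v : ι → F}
    (hv : v ∈ Module.End.eigenspace (Matrix.mulVecLin (M⁻¹ * S)) a) :
    S *ᵥ v = a • M *ᵥ v := by
  rw [Module.End.mem_eigenspace_iff, Matrix.mulVecLin_apply] at hv
  have hdet : IsUnit M.det := (Matrix.isUnit_iff_isUnit_det M).1 hM
  rw [← Matrix.mulVec_smul, ← hv, Matrix.mulVec_mulVec, ← Matrix.mul_assoc,
    Matrix.mul_nonsing_inv M hdet, Matrix.one_mul]

lemma orthogonal_of_mem_eigenspace {F ι : Type*} [Field F] [Fintype ι] [DecidableEq ι]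
    {M S : Matrix ι ι F} (hMsymm : M.IsSymm) (hM : IsUnit M) (hS : Sᵀ = -S)
    {a b : F} (hab : a + b ≠ 0) {u v : ι → F}
    (hu : u ∈ Module.End.eigenspace (Matrix.mulVecLin (M⁻¹ * S)) a)
    (hv : v ∈ Module.End.eigenspace (Matrix.mulVecLin (M⁻¹ * S)) b) :
    u ⬝ᵥ M *ᵥ v = 0 ∧ u ⬝ᵥ S *ᵥ v = 0 := by
  have hSu := mulVec_eq_of_mem_eigenspace hM hu
  have hSv := mulVec_eq_of_mem_eigenspace hM hv
  have hright : u ⬝ᵥ S *ᵥ v = b * (u ⬝ᵥ M *ᵥ v) := by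
    rw [hSv, dotProduct_smul, smul_eq_mul]
  have hleft : u ⬝ᵥ S *ᵥ v = -(a * (u ⬝ᵥ M *ᵥ v)) := by
    rw [dotProduct_mulVec, ← mulVec_transpose, hS, neg_mulVec, hSu, neg_dotProduct,
      smul_dotProduct, smul_eq_mul, dotProduct_mulVec u M v, ← mulVec_transpose, hMsymm.eq]
  have hzero : u ⬝ᵥ M *ᵥ v = 0 := by
    refine (mul_eq_zero.1 ?_).resolve_left hab
    linear_combination hleft - hright
  exact ⟨hzero, by rw [hright, hzero, mul_zero]⟩

/-- If `λ, μ` are nonzero eigenvalues of `M⁻¹S` with `λ ≠ −μ`, then the sum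
`V_λ + V_μ` of the corresponding eigenspaces is both totally singular for `M` and totally
isotropic for `S`. -/
theorem stmt_8 (q : ℕ) (F : Type) [Field F] [Fintype F]
    (hcard : Fintype.card F = q) (hodd : Odd q)
    (n : ℕ)
    (M : Matrix (Fin (2 * n + 1)) (Fin (2 * n + 1)) F)
    (hMsymm : M.IsSymm) (hMinv : IsUnit M)
    (S : Matrix (Fin (2 * n + 1)) (Fin (2 * n + 1)) F)
    (hSanti : Sᵀ = -S)
    (lam mu : F) (hlam : lam ≠ 0) (hmu : mu ≠ 0) (hne : lam ≠ -mu)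
    (hlamEig : Module.End.HasEigenvalue (Matrix.mulVecLin (M⁻¹ * S)) lam)
    (hmuEig : Module.End.HasEigenvalue (Matrix.mulVecLin (M⁻¹ * S)) mu) :
    ∀ w ∈ Module.End.eigenspace (Matrix.mulVecLin (M⁻¹ * S)) lam ⊔
          Module.End.eigenspace (Matrix.mulVecLin (M⁻¹ * S)) mu,
    ∀ w' ∈ Module.End.eigenspace (Matrix.mulVecLin (M⁻¹ * S)) lam ⊔
          Module.End.eigenspace (Matrix.mulVecLin (M⁻¹ * S)) mu,
      w ⬝ᵥ M.mulVec w' = 0 ∧ w ⬝ᵥ S.mulVec w' = 0 := by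
  have h2 : (2 : F) ≠ 0 := by
    refine Ring.two_ne_zero fun h => ?_
    have := FiniteField.even_card_iff_char_two.1 h
    rw [hcard] at this
    exact absurd (Nat.odd_iff.1 hodd) (by omega)
  have hll : lam + lam ≠ 0 := by rw [← two_mul]; exact mul_ne_zero h2 hlam
  have hmm : mu + mu ≠ 0 := by rw [← two_mul]; exact mul_ne_zero h2 hmu
  have hlm : lam + mu ≠ 0 := fun h => hne (eq_neg_of_add_eq_zero_left h)
  have hml : mu + lam ≠ 0 := by rwa [add_comm]
  intro w hw w' hw'
  obtain ⟨x, hx, y, hy, rfl⟩ := Submodule.mem_sup.1 hw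
  obtain ⟨x', hx', y', hy', rfl⟩ := Submodule.mem_sup.1 hw'
  have h₁ := orthogonal_of_mem_eigenspace hMsymm hMinv hSanti hll hx hx'
  have h₂ := orthogonal_of_mem_eigenspace hMsymm hMinv hSanti hlm hx hy'
  have h₃ := orthogonal_of_mem_eigenspace hMsymm hMinv hSanti hml hy hx'
  have h₄ := orthogonal_of_mem_eigenspace hMsymm hMinv hSanti hmm hy hy'
  constructor <;> simp [mulVec_add, h₁, h₂, h₃, h₄]
end

section
/- Let q be an odd prime power, M an invertible symmetric (2n+1)×(2n+1) matrix over F_q, and S an antisymmetric (2n+1)×(2n+1) matrix over F_q. For every nonzero μ ∈ F_q, the eigenspace {v ∈ F_q^{2n+1} : (M⁻¹S)·v = μ·v} has dimension at most n. -/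
/-!
For `u, v` in the eigenspace `W`, one has `S v = μ M v` and `S u = μ M u`. Antisymmetry of `S` and
symmetry of `M` then give `μ uᵀMv = uᵀSv = -(S u)ᵀv = -μ uᵀMv`, so `uᵀMv = 0` since the
characteristic is odd and `μ ≠ 0`. Hence `W` is contained in its own orthogonal complement for the
nondegenerate form `M`, which has dimension `2n + 1 - dim W`, so `2 dim W ≤ 2n + 1`.
-/

open Matrix

/-- For every nonzero `μ`, the eigenspace of `M⁻¹S` of eigenvalue `μ`
has dimension at most `n`. -/
theorem stmt_10 (q : ℕ) (F : Type) [Field F] [Fintype F]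
    (hcard : Fintype.card F = q) (hodd : Odd q)
    (n : ℕ)
    (M : Matrix (Fin (2 * n + 1)) (Fin (2 * n + 1)) F)
    (hMsymm : M.IsSymm) (hMinv : IsUnit M)
    (S : Matrix (Fin (2 * n + 1)) (Fin (2 * n + 1)) F)
    (hSanti : Sᵀ = -S)
    (mu : F) (hmu : mu ≠ 0) :
    Module.finrank F
      (Module.End.eigenspace (Matrix.mulVecLin (M⁻¹ * S)) mu) ≤ n := by
  have hdet : IsUnit M.det := (Matrix.isUnit_iff_isUnit_det M).1 hMinv
  have h2 : (2 : F) ≠ 0 := by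
    apply Ring.two_ne_zero
    intro h
    have := FiniteField.even_card_of_char_two h
    rw [hcard, Nat.odd_iff] at *
    omega
  have hS : ∀ v ∈ Module.End.eigenspace (Matrix.mulVecLin (M⁻¹ * S)) mu,
      S *ᵥ v = mu • (M *ᵥ v) := by
    intro v hv
    rw [Module.End.mem_eigenspace_iff, Matrix.mulVecLin_apply] at hv
    rw [← Matrix.mulVec_smul, ← hv, Matrix.mulVec_mulVec, Matrix.mul_nonsing_inv_cancel_left _ _ hdet]
  set W := Module.End.eigenspace (Matrix.mulVecLin (M⁻¹ * S)) mu
  have hiso : ∀ u ∈ W, ∀ v ∈ W, u ⬝ᵥ M *ᵥ v = 0 := by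
    intro u hu v hv
    have h1 : u ⬝ᵥ S *ᵥ v = mu * (u ⬝ᵥ M *ᵥ v) := by
      rw [hS v hv, dotProduct_smul, smul_eq_mul]
    have h3 : u ⬝ᵥ S *ᵥ v = - (mu * (u ⬝ᵥ M *ᵥ v)) := by
      rw [Matrix.dotProduct_mulVec, ← Matrix.mulVec_transpose, hSanti, Matrix.neg_mulVec, hS u hu,
        neg_dotProduct, smul_dotProduct, smul_eq_mul, Matrix.dotProduct_mulVec u M,
        ← Matrix.mulVec_transpose, hMsymm.eq]
    have h4 : 2 * mu * (u ⬝ᵥ M *ᵥ v) = 0 := by linear_combination h3 - h1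
    simpa [h2, hmu] using h4
  have hnd : (Matrix.toBilin' M).Nondegenerate :=
    LinearMap.BilinForm.nondegenerate_toBilin'_of_det_ne_zero' M hdet.ne_zero
  have hle : W ≤ (Matrix.toBilin' M).orthogonal W := by
    intro v hv u hu
    rw [Matrix.toBilin'_apply']
    exact hiso u hu v hv
  have hfin := Submodule.finrank_mono hle
  rw [LinearMap.BilinForm.finrank_orthogonal hnd, Module.finrank_fin_fun] at hfin
  omega
end

section
/- Let q be an odd prime power and let M be an invertible symmetric N×N matrix over F_q. Let G₊ and G₋ be m-dimensional subspaces of F_q^N with G₊ ∩ G₋ = {0}, such that vᵀMv = 0 for all v ∈ G₊ and for all v ∈ G₋, and such that the bilinear form (u,v) ↦ uᵀMv is nondegenerate on G₊ ⊕ G₋. Then there exists an antisymmetric N×N matrix S over F_q such that S·v = M·v for all v ∈ G₊, S·v = −M·v for all v ∈ G₋, and ker S = {w ∈ F_q^N : wᵀMv = 0 for all v ∈ G₊ ⊕ G₋}. In particular G₊ and G₋ are eigenspaces of M⁻¹S of eigenvalues 1 and −1 respectively, and the radical of the alternating form given by S has dimension N − 2m. -/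
open Matrix

/-!
Write `B` for the bilinear form of `M` and `W = G₊ ⊕ G₋`. Since `B` is nondegenerate on `W`, the
whole space is the direct sum `G₊ ⊕ G₋ ⊕ W^⊥` (`exists_decomp_equiv`). Let `T` be the endomorphism
acting as `1`, `-1`, `0` on the three summands, and take `S = M T`. As `G₊` and `G₋` are totally
isotropic (polarization, using that `2` is invertible), both `B (x, T y)` and `-B (T x, y)` equal
`B (n, p') - B (p, n')` for `x = p + n + w`, `y = p' + n' + w'`, so `T` is skew for `B` and `S` is
antisymmetric. The remaining claims are read off from the eigenspaces of `T = M⁻¹ S`.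
-/

/-- Polarization: where `2 ≠ 0`, a subspace on which the quadratic form of `M` vanishes is totally
isotropic for the bilinear form of `M`. -/
lemma isotropic_of_singular {F : Type} [Field F] (h2 : (2 : F) ≠ 0) {N : ℕ}
    {M : Matrix (Fin N) (Fin N) F} (hsymm : ∀ u v, u ⬝ᵥ M.mulVec v = v ⬝ᵥ M.mulVec u)
    {G : Submodule F (Fin N → F)} (hG : ∀ v ∈ G, v ⬝ᵥ M.mulVec v = 0)
    {u v : Fin N → F} (hu : u ∈ G) (hv : v ∈ G) : u ⬝ᵥ M.mulVec v = 0 := by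
  have h := hG _ (G.add_mem hu hv)
  simp only [Matrix.mulVec_add, dotProduct_add, add_dotProduct, hG u hu, hG v hv,
    hsymm v u] at h
  have h' : 2 * (u ⬝ᵥ M.mulVec v) = 0 := by linear_combination h
  exact (mul_eq_zero.mp h').resolve_left h2

/-- The decomposition of the space as `G₊ ⊕ G₋ ⊕ (G₊ ⊕ G₋)^⊥`. -/
lemma exists_decomp_equiv {F : Type} [Field F] {N : ℕ}
    {M : Matrix (Fin N) (Fin N) F} (hsymm : ∀ u v, u ⬝ᵥ M.mulVec v = v ⬝ᵥ M.mulVec u)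
    {Gp Gm : Submodule F (Fin N → F)} (hint : Gp ⊓ Gm = ⊥)
    (hnd : ∀ u ∈ Gp ⊔ Gm, (∀ v ∈ Gp ⊔ Gm, u ⬝ᵥ M.mulVec v = 0) → u = 0) :
    ∃ (K : Submodule F (Fin N → F)) (e : (Gp × Gm × K) ≃ₗ[F] (Fin N → F)),
      (∀ w, w ∈ K ↔ ∀ v ∈ Gp ⊔ Gm, w ⬝ᵥ M.mulVec v = 0) ∧
      ∀ x, e x = (x.1 : Fin N → F) + x.2.1 + x.2.2 := by
  have hBapp : ∀ u v, Matrix.toBilin' M u v = u ⬝ᵥ M.mulVec v := fun u v =>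
    Matrix.toBilin'_apply' M u v
  have hrefl : (Matrix.toBilin' M).IsRefl := by
    intro u v h
    rw [hBapp] at h ⊢
    rw [hsymm, h]
  have hmem : ∀ w, w ∈ (Matrix.toBilin' M).orthogonal (Gp ⊔ Gm) ↔
      ∀ v ∈ Gp ⊔ Gm, w ⬝ᵥ M.mulVec v = 0 := by
    intro w
    rw [LinearMap.BilinForm.mem_orthogonal_iff]
    refine forall₂_congr fun v _ => ?_
    rw [hBapp, hsymm]
  have hcompl : IsCompl (Gp ⊔ Gm) ((Matrix.toBilin' M).orthogonal (Gp ⊔ Gm)) := by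
    refine (LinearMap.BilinForm.isCompl_orthogonal_iff_disjoint hrefl).mpr ?_
    rw [Submodule.disjoint_def]
    exact fun x hx hx' => hnd x hx ((hmem x).mp hx')
  set K := (Matrix.toBilin' M).orthogonal (Gp ⊔ Gm) with hK
  let f : (Gp × Gm × K) →ₗ[F] (Fin N → F) :=
    Gp.subtype.coprod (Gm.subtype.coprod K.subtype)
  have hf : ∀ x, f x = (x.1 : Fin N → F) + x.2.1 + x.2.2 := by
    intro x
    simp [f, add_assoc]
  have hinj : Function.Injective f := by
    rw [← LinearMap.ker_eq_bot, LinearMap.ker_eq_bot']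
    rintro ⟨p, n, w⟩ h
    rw [hf] at h
    have hw : (w : Fin N → F) = 0 := by
      refine Submodule.disjoint_def.mp hcompl.disjoint _ ?_ w.2
      have : (w : Fin N → F) = -((p : Fin N → F) + n) := (neg_eq_of_add_eq_zero_right h).symm
      rw [this]
      exact Submodule.neg_mem _ (Submodule.add_mem_sup p.2 n.2)
    simp only [hw, add_zero] at h
    have hp : (p : Fin N → F) = 0 := by
      have : (p : Fin N → F) ∈ Gp ⊓ Gm :=
        ⟨p.2, by rw [eq_neg_of_add_eq_zero_left h]; exact Gm.neg_mem n.2⟩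
      rwa [hint, Submodule.mem_bot] at this
    have hn : (n : Fin N → F) = 0 := by simpa [hp] using h
    ext1
    · exact Subtype.ext hp
    · ext1
      · exact Subtype.ext hn
      · exact Subtype.ext hw
  have hsurj : Function.Surjective f := by
    intro x
    have hx : x ∈ (Gp ⊔ Gm) ⊔ K := by rw [hcompl.sup_eq_top]; trivial
    obtain ⟨y, hy, w, hw, rfl⟩ := Submodule.mem_sup.mp hx
    obtain ⟨p, hp, n, hn, rfl⟩ := Submodule.mem_sup.mp hy
    exact ⟨(⟨p, hp⟩, ⟨n, hn⟩, ⟨w, hw⟩), hf _⟩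
  exact ⟨K, LinearEquiv.ofBijective f ⟨hinj, hsurj⟩, hmem, hf⟩

/-- Given two trivially-intersecting `m`-dimensional subspaces `G₊, G₋`
which are totally singular for the invertible symmetric matrix `M` and such that the
bilinear form of `M` is nondegenerate on `G₊ ⊕ G₋`, there is an antisymmetric matrix `S`
with `S·v = M·v` on `G₊`, `S·v = −M·v` on `G₋`, whose kernel is the `M`-orthogonal
complement of `G₊ ⊕ G₋`; in particular `G₊`, `G₋` are the eigenspaces of `M⁻¹S` of
eigenvalues `1`, `−1`, and the radical of `S` has dimension `N − 2m`. -/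
theorem stmt_11 (q : ℕ) (F : Type) [Field F] [Fintype F]
    (hcard : Fintype.card F = q) (hodd : Odd q)
    (N m : ℕ)
    (M : Matrix (Fin N) (Fin N) F)
    (hMsymm : M.IsSymm) (hMinv : IsUnit M)
    (Gp Gm : Submodule F (Fin N → F))
    (hGp : Module.finrank F Gp = m) (hGm : Module.finrank F Gm = m)
    (hint : Gp ⊓ Gm = ⊥)
    (hGpSing : ∀ v ∈ Gp, v ⬝ᵥ M.mulVec v = 0)
    (hGmSing : ∀ v ∈ Gm, v ⬝ᵥ M.mulVec v = 0)
    (hnd : ∀ u ∈ Gp ⊔ Gm, (∀ v ∈ Gp ⊔ Gm, u ⬝ᵥ M.mulVec v = 0) → u = 0) :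
    ∃ S : Matrix (Fin N) (Fin N) F, Sᵀ = -S ∧
      (∀ v ∈ Gp, S.mulVec v = M.mulVec v) ∧
      (∀ v ∈ Gm, S.mulVec v = -(M.mulVec v)) ∧
      (∀ w : Fin N → F, S.mulVec w = 0 ↔ ∀ v ∈ Gp ⊔ Gm, w ⬝ᵥ M.mulVec v = 0) ∧
      Module.End.eigenspace (Matrix.mulVecLin (M⁻¹ * S)) 1 = Gp ∧
      Module.End.eigenspace (Matrix.mulVecLin (M⁻¹ * S)) (-1) = Gm ∧
      Module.finrank F (LinearMap.ker (Matrix.mulVecLin S)) = N - 2 * m := by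
  have h2 : (2 : F) ≠ 0 := by
    refine Ring.two_ne_zero fun h => ?_
    have := FiniteField.even_card_iff_char_two.mp h
    rw [hcard] at this
    have := Nat.odd_iff.mp hodd
    omega
  have hsymm : ∀ u v, u ⬝ᵥ M.mulVec v = v ⬝ᵥ M.mulVec u := by
    intro u v
    rw [Matrix.dotProduct_mulVec, ← Matrix.mulVec_transpose, hMsymm.eq, dotProduct_comm]
  obtain ⟨K, e, hK, he⟩ := exists_decomp_equiv hsymm hint hnd
  -- `D` acts as `1`, `-1`, `0` on the three summands; `T` is its transport to `F^N`.
  let D : (Gp × Gm × K) →ₗ[F] (Gp × Gm × K) :=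
    LinearMap.prodMap LinearMap.id (LinearMap.prodMap (-LinearMap.id) 0)
  have hD : ∀ x, D x = (x.1, -x.2.1, 0) := fun x => rfl
  let T : (Fin N → F) →ₗ[F] (Fin N → F) := e.toLinearMap ∘ₗ D ∘ₗ e.symm.toLinearMap
  have hT : ∀ x, T (e x) = e (D x) := fun x => by simp [T]
  have hDp : ∀ v (hv : v ∈ Gp), e (⟨v, hv⟩, 0, 0) = v := fun v hv => by simp [he]
  have hDm : ∀ v (hv : v ∈ Gm), e (0, ⟨v, hv⟩, 0) = v := fun v hv => by simp [he]
  have hDk : ∀ v (hv : v ∈ K), e (0, 0, ⟨v, hv⟩) = v := fun v hv => by simp [he]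
  have hTp : ∀ v ∈ Gp, T v = v := by
    intro v hv
    conv_lhs => rw [← hDp v hv, hT, hD]
    simp [he]
  have hTm : ∀ v ∈ Gm, T v = -v := by
    intro v hv
    conv_lhs => rw [← hDm v hv, hT, hD]
    simp [he]
  have hTk : ∀ v, T v = 0 ↔ v ∈ K := by
    intro v
    constructor
    · intro h
      obtain ⟨⟨p, n, w⟩, rfl⟩ := e.surjective v
      rw [hT, hD, LinearEquiv.map_eq_zero_iff] at h
      simp only [Prod.mk_eq_zero, neg_eq_zero, and_true] at h
      simp [he, h.1, h.2]
    · intro hv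
      rw [← hDk v hv, hT, hD]
      simp
  have hskew : ∀ x y, x ⬝ᵥ M.mulVec (T y) = -(T x ⬝ᵥ M.mulVec y) := by
    intro x y
    obtain ⟨⟨p, n, w⟩, rfl⟩ := e.surjective x
    obtain ⟨⟨p', n', w'⟩, rfl⟩ := e.surjective y
    have hpp := isotropic_of_singular h2 hsymm hGpSing p.2 p'.2
    have hnn := isotropic_of_singular h2 hsymm hGmSing n.2 n'.2
    have hwp := (hK w).mp w.2 p' (Submodule.mem_sup_left p'.2)
    have hwn := (hK w).mp w.2 n' (Submodule.mem_sup_right n'.2)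
    have hpw := (hK w').mp w'.2 p (Submodule.mem_sup_left p.2)
    have hnw := (hK w').mp w'.2 n (Submodule.mem_sup_right n.2)
    rw [hsymm] at hpw hnw
    rw [hT, hT, hD, hD]
    simp only [he, Matrix.mulVec_add, dotProduct_add, add_dotProduct, Submodule.coe_neg,
      Matrix.mulVec_neg, dotProduct_neg, neg_dotProduct, Submodule.coe_zero, Matrix.mulVec_zero,
      dotProduct_zero, zero_dotProduct, hpp, hnn, hwp, hwn, hpw, hnw]
    ring
  have hdet : IsUnit M.det := (Matrix.isUnit_iff_isUnit_det M).mp hMinv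
  have hS : ∀ v, (M * LinearMap.toMatrix' T).mulVec v = M.mulVec (T v) := by
    intro v
    rw [← Matrix.mulVec_mulVec, LinearMap.toMatrix'_mulVec]
  have hS0 : ∀ v, (M * LinearMap.toMatrix' T).mulVec v = 0 ↔ v ∈ K := by
    intro v
    rw [hS, ← hTk]
    refine ⟨fun h => ?_, fun h => by rw [h, Matrix.mulVec_zero]⟩
    exact Matrix.mulVec_injective_of_isUnit hMinv (by rw [h, Matrix.mulVec_zero])
  have hTS : Matrix.mulVecLin (M⁻¹ * (M * LinearMap.toMatrix' T)) = T := by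
    rw [Matrix.nonsing_inv_mul_cancel_left _ _ hdet]
    exact Matrix.toLin'_toMatrix' T
  refine ⟨M * LinearMap.toMatrix' T, ?_, fun v hv => by rw [hS, hTp v hv],
    fun v hv => by rw [hS, hTm v hv, Matrix.mulVec_neg], fun w => (hS0 w).trans (hK w), ?_, ?_, ?_⟩
  · refine Matrix.ext_of_mulVec_single fun j => ?_
    refine dotProduct_eq _ _ fun x => ?_
    rw [Matrix.mulVec_transpose, ← Matrix.dotProduct_mulVec, hS, hskew, Matrix.neg_mulVec, hS,
      neg_dotProduct, dotProduct_comm _ x, hskew, neg_neg, hsymm, hskew, neg_neg]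
  · rw [hTS]
    ext v
    rw [Module.End.mem_eigenspace_iff, one_smul]
    refine ⟨fun h => ?_, hTp v⟩
    obtain ⟨⟨p, n, w⟩, rfl⟩ := e.surjective v
    rw [hT, hD] at h
    have h := e.injective h
    simp only [Prod.mk.injEq, true_and] at h
    have hn : n = 0 := by
      have : (2 : F) • n = 0 := by
        rw [two_smul]; nth_rewrite 1 [← h.1]; simp
      exact (smul_eq_zero.mp this).resolve_left h2
    simp [he, hn, ← h.2]
  · rw [hTS]
    ext v
    rw [Module.End.mem_eigenspace_iff, neg_one_smul]
    refine ⟨fun h => ?_, hTm v⟩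
    obtain ⟨⟨p, n, w⟩, rfl⟩ := e.surjective v
    rw [hT, hD, ← map_neg] at h
    have h := e.injective h
    simp only [Prod.neg_mk, Prod.mk.injEq, true_and] at h
    have hp : p = 0 := by
      have : (2 : F) • p = 0 := by
        rw [two_smul]; nth_rewrite 1 [h.1]; simp
      exact (smul_eq_zero.mp this).resolve_left h2
    have hw : w = 0 := by simpa using h.2.symm
    simp [he, hp, hw]
  · have hker : LinearMap.ker (Matrix.mulVecLin (M * LinearMap.toMatrix' T)) = K := by
      ext v
      rw [LinearMap.mem_ker, Matrix.mulVecLin_apply, hS0]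
    have hdim := e.finrank_eq
    rw [Module.finrank_prod, Module.finrank_prod, hGp, hGm, Module.finrank_fin_fun] at hdim
    rw [hker]
    omega
end

section
/- Let q be an odd prime power, n ≥ 2 an integer, M an invertible symmetric (2n+1)×(2n+1) matrix over F_q, and S an antisymmetric (2n+1)×(2n+1) matrix over F_q. Let p ∈ F_q^{2n+1} be nonzero with pᵀMp = 0, and suppose S·p = λ·(M·p) for some λ ∈ F_q (this includes the case S·p = 0). Then the number of 2-dimensional subspaces of F_q^{2n+1} containing p that are totally singular for M and totally isotropic for S equals (q^{2n-2}−1)/(q−1). -/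
/-!
Since `S p = λ M p`, every vector of `p^⊥` (for `M`) is also `S`-orthogonal to `p`, and `S` is
alternating because `q` is odd. Hence every totally singular plane through `p` is totally
isotropic for `S`, and the task is to count the totally singular planes through `p`.

These planes partition the singular vectors of `p^⊥` outside `⟨p⟩` into classes of size `q² - q`
(`card_planes`), so it suffices to show that `p^⊥` has `q^(2n-1)` singular vectors
(`card_zeros_perp`). Outside `p^⊥` each line parallel to `p` has exactly one singular vector
(`card_off_perp`), which reduces this to the count `q^(2n)` of all singular vectors
(`card_zeros`). For that the form is diagonalized as `∑ wᵢ xᵢ²` and its zeros are counted by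
additive characters: for `t ≠ 0` the sum `∑ₓ ψ(t ∑ wᵢ xᵢ²)` is a product of an odd number of
quadratic Gauss sums, hence proportional to the quadratic character of `t`, so these terms cancel
on summing over `t` and only `t = 0` contributes.
-/

open Matrix

/-- The quadratic exponential sum `∑ ψ(s x²)` depends on `s ≠ 0` only through the
quadratic character of `s`, up to the Gauss sum as a constant factor. -/
lemma sum_addChar_mul_sq {F : Type} [Field F] [Fintype F] [DecidableEq F]
    (hF : ringChar F ≠ 2) (ψ : AddChar F ℂ) (hψ : ψ.IsPrimitive) {s : F} (hs : s ≠ 0) :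
    ∑ x : F, ψ (s * x ^ 2) =
      (quadraticChar F s : ℂ) * ∑ y : F, (quadraticChar F y : ℂ) * ψ y := by
  have h1 : ∑ x : F, ψ (s * x ^ 2) = ∑ y : F, ((quadraticChar F y : ℂ) + 1) * ψ (s * y) := by
    rw [← Finset.sum_fiberwise (s := Finset.univ) (g := fun x : F => x ^ 2)]
    refine Finset.sum_congr rfl fun y _ => ?_
    have hc := quadraticChar_card_sqrts hF y
    have hc' : ((Finset.univ.filter fun x : F => x ^ 2 = y).card : ℂ)
        = (quadraticChar F y : ℂ) + 1 := by
      rw [Set.toFinset_ofPred] at hc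
      exact_mod_cast hc
    rw [Finset.sum_congr rfl (g := fun _ => ψ (s * y)), Finset.sum_const, nsmul_eq_mul, hc']
    intro x hx
    rw [(Finset.mem_filter.mp hx).2]
  have h2 : ∑ y : F, ψ (s * y) = 0 := by
    have := AddChar.sum_mulShift s hψ
    simpa [hs, mul_comm] using this
  have h3 : ((quadraticChar F s : ℤ) : ℂ) * (quadraticChar F s : ℂ) = 1 := by
    have := quadraticChar_sq_one hs
    rw [sq] at this
    exact_mod_cast this
  rw [h1]
  simp only [add_mul, one_mul, Finset.sum_add_distrib, h2, add_zero]
  rw [Finset.mul_sum]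
  refine Fintype.sum_bijective (fun y => s * y) (mulLeft_bijective₀ s hs) _ _ fun y => ?_
  rw [map_mul (quadraticChar F)]
  push_cast
  linear_combination (-(quadraticChar F y : ℂ) * ψ (s * y)) * h3

lemma map_sum_addChar {F ι : Type} [Field F] (ψ : AddChar F ℂ) (s : Finset ι) (f : ι → F) :
    ψ (∑ i ∈ s, f i) = ∏ i ∈ s, ψ (f i) := by
  classical
  induction s using Finset.induction_on with
  | empty => simp
  | insert a s ha ih => rw [Finset.sum_insert ha, Finset.prod_insert ha, AddChar.map_add_eq_mul, ih]

/-- A diagonal form in an odd number of variables with nonzero coefficients vanishes on exactly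
one `q`-th of all vectors. -/
lemma card_zeros_diagonal {F : Type} [Field F] [Fintype F] (hF : ringChar F ≠ 2)
    {ι : Type} [Fintype ι] (hι : Odd (Fintype.card ι)) (w : ι → F) (hw : ∀ i, w i ≠ 0) :
    Nat.card {x : ι → F // ∑ i, w i * x i ^ 2 = 0} * Fintype.card F
      = Fintype.card F ^ Fintype.card ι := by
  classical
  let ψ := AddChar.FiniteField.primitiveChar_to_Complex F
  have hψ : ψ.IsPrimitive := AddChar.FiniteField.primitiveChar_to_Complex_isPrimitive F
  set G : ℂ := ∑ y : F, (quadraticChar F y : ℂ) * ψ y with hG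
  have key : ∀ t : F, ∑ x : ι → F, ψ (t * ∑ i, w i * x i ^ 2)
      = (if t = 0 then (Fintype.card F : ℂ) ^ Fintype.card ι else 0) +
        (quadraticChar F t : ℂ) * ∏ i, ((quadraticChar F (w i) : ℂ) * G) := by
    intro t
    by_cases ht : t = 0
    · simp [ht]
    have e1 : ∀ x : ι → F, ψ (t * ∑ i, w i * x i ^ 2) = ∏ i, ψ (t * w i * x i ^ 2) := by
      intro x
      rw [Finset.mul_sum, map_sum_addChar]
      simp only [mul_assoc]
    simp only [e1]
    have e2 := Finset.prod_univ_sum (fun _ : ι => (Finset.univ : Finset F))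
      (fun i y => ψ (t * w i * y ^ 2))
    rw [Fintype.piFinset_univ] at e2
    rw [← e2]
    have e3 : ∀ i, ∑ y : F, ψ (t * w i * y ^ 2)
        = (quadraticChar F t : ℂ) * ((quadraticChar F (w i) : ℂ) * G) := by
      intro i
      rw [sum_addChar_mul_sq hF ψ hψ (mul_ne_zero ht (hw i)), map_mul]
      push_cast
      ring
    simp only [e3, Finset.prod_mul_distrib, Finset.prod_const, Finset.card_univ, ht, if_false,
      zero_add]
    -- an odd power of `±1` is itself
    have e4 : (quadraticChar F t : ℂ) ^ Fintype.card ι = (quadraticChar F t : ℂ) := by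
      rcases quadraticChar_dichotomy ht with h | h
      · simp [h]
      · simp [h, hι.neg_one_pow]
    rw [e4]
  have hsum : ∑ t : F, ∑ x : ι → F, ψ (t * ∑ i, w i * x i ^ 2)
      = (Fintype.card F : ℂ) ^ Fintype.card ι := by
    simp only [key, Finset.sum_add_distrib, ← Finset.sum_mul]
    have : ∑ t : F, (quadraticChar F t : ℂ) = 0 := by
      exact_mod_cast quadraticChar_sum_zero hF
    rw [this, zero_mul, add_zero, Finset.sum_ite_eq' Finset.univ (0 : F)]
    simp
  rw [Finset.sum_comm] at hsum
  simp only [AddChar.sum_mulShift _ hψ] at hsum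
  have : ((Nat.card {x : ι → F // ∑ i, w i * x i ^ 2 = 0} * Fintype.card F : ℕ) : ℂ)
      = ((Fintype.card F ^ Fintype.card ι : ℕ) : ℂ) := by
    push_cast
    rw [← hsum, Nat.card_eq_fintype_card, Fintype.card_subtype]
    push_cast
    rw [← Finset.sum_filter, Finset.sum_const, nsmul_eq_mul]
  exact_mod_cast this

/-- A nondegenerate quadratic form in odd dimension vanishes on exactly one `q`-th of all vectors,
by diagonalization. -/
lemma card_zeros {F : Type} [Field F] [Fintype F] (hF : ringChar F ≠ 2)
    {V : Type} [AddCommGroup V] [Module F V] [FiniteDimensional F V]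
    (hV : Odd (Module.finrank F V)) (B : LinearMap.BilinForm F V)
    (hB : ∀ x y, B x y = B y x) (hnd : B.SeparatingLeft) :
    Nat.card {v : V // B v v = 0} * Fintype.card F = Fintype.card F ^ Module.finrank F V := by
  classical
  have : Invertible (2 : F) := invertibleOfNonzero (Ring.two_ne_zero hF)
  have hass : QuadraticMap.associated (R := F) (LinearMap.BilinMap.toQuadraticMap B) = B :=
    QuadraticMap.associated_left_inverse _ hB
  obtain ⟨w, ⟨e⟩⟩ := QuadraticForm.equivalent_weightedSumSquares_units_of_nondegenerate'
    (LinearMap.BilinMap.toQuadraticMap B) (by rw [hass]; exact hnd)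
  have h := card_zeros_diagonal hF (ι := Fin (Module.finrank F V)) (by simpa using hV)
    (fun i => (w i : F)) (fun i => (w i).ne_zero)
  rw [Fintype.card_fin] at h
  rw [← h]
  congr 1
  refine Nat.card_congr (e.toLinearEquiv.toEquiv.subtypeEquiv fun v => ?_)
  have := e.map_app v
  rw [QuadraticMap.weightedSumSquares_apply] at this
  simp only [LinearMap.BilinMap.toQuadraticMap_apply] at this
  rw [← this]
  simp [sq, Units.smul_def]

/-- Off `p^⊥`, every line `v + F p` parallel to the singular vector `p` meets the quadric
exactly once. -/
lemma card_off_perp {F : Type} [Field F] [Fintype F] (hF : ringChar F ≠ 2)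
    {V : Type} [AddCommGroup V] [Module F V]
    (B : LinearMap.BilinForm F V)
    (hB : ∀ x y, B x y = B y x) (p : V) (hp : B p p = 0) :
    Nat.card {v : V // B v v = 0 ∧ B v p ≠ 0} * Fintype.card F = Nat.card {v : V // B v p ≠ 0} := by
  have h2 : (2 : F) ≠ 0 := Ring.two_ne_zero hF
  rw [← Nat.card_eq_fintype_card, ← Nat.card_prod]
  refine Nat.card_congr
    { toFun := fun x => ⟨x.1.1 + x.2 • p, by simpa [hp] using x.1.2.2⟩
      invFun := fun v => (⟨v.1 - (B v.1 v.1 / (2 * B v.1 p)) • p, ?_, ?_⟩,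
        B v.1 v.1 / (2 * B v.1 p))
      left_inv := ?_
      right_inv := ?_ }
  · have := v.2
    simp only [map_sub, map_smul, LinearMap.sub_apply, LinearMap.smul_apply, smul_eq_mul, hp,
      hB p v.1]
    field_simp
    ring
  · simpa [hp] using v.2
  · rintro ⟨⟨v, hv0, hvp⟩, t⟩
    have ht : B (v + t • p) (v + t • p) / (2 * B (v + t • p) p) = t := by
      simp only [map_add, map_smul, LinearMap.add_apply, LinearMap.smul_apply, smul_eq_mul, hp,
        hB p v, hv0, mul_zero, add_zero, zero_add]
      field_simp
      ring
    simp only [ht, add_sub_cancel_right]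
  · rintro ⟨v, hv⟩
    simp

/-- The number of singular vectors in `p^⊥`, for `p` a nonzero singular vector of a nondegenerate
form in odd dimension `d`, is `q ^ (d - 2)`. -/
lemma card_zeros_perp {F : Type} [Field F] [Fintype F] (hF : ringChar F ≠ 2)
    {V : Type} [AddCommGroup V] [Module F V] [FiniteDimensional F V]
    (d : ℕ) (hd : Module.finrank F V = d + 2) (hV : Odd d)
    (B : LinearMap.BilinForm F V) (hB : ∀ x y, B x y = B y x) (hnd : B.SeparatingLeft)
    (p : V) (hp0 : p ≠ 0) (hp : B p p = 0) :
    Nat.card {v : V // B v v = 0 ∧ B v p = 0} = Fintype.card F ^ d := by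
  classical
  have : Finite V := Module.finite_of_finite F
  have : Fintype V := Fintype.ofFinite V
  have hz := card_zeros hF (by rw [hd]; exact hV.add_even even_two) B hB hnd
  have ho := card_off_perp hF B hB p hp
  have hker : Nat.card {v : V // B v p = 0} = Fintype.card F ^ (d + 1) := by
    have hne : B p ≠ 0 := fun h => hp0 (hnd p fun y => by rw [h]; rfl)
    have := Module.Dual.finrank_ker_add_one_of_ne_zero (f := B p) hne
    have h3 : Module.finrank F (LinearMap.ker (B p)) = d + 1 := by omega
    rw [← h3, ← Nat.card_eq_fintype_card, ← Module.natCard_eq_pow_finrank]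
    refine Nat.card_congr (Equiv.subtypeEquivRight fun v => ?_)
    rw [LinearMap.mem_ker, hB]
  have hV' : Nat.card V = Fintype.card F ^ (d + 2) := by
    rw [← hd, ← Nat.card_eq_fintype_card]
    exact Module.natCard_eq_pow_finrank
  have s1 : Nat.card {v : V // B v p = 0} + Nat.card {v : V // B v p ≠ 0} = Nat.card V := by
    rw [← Nat.card_sum]
    exact Nat.card_congr (Equiv.sumCompl fun v => B v p = 0)
  have s2 : Nat.card {v : V // B v v = 0 ∧ B v p = 0} + Nat.card {v : V // B v v = 0 ∧ B v p ≠ 0}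
      = Nat.card {v : V // B v v = 0} := by
    simp only [Nat.card_eq_fintype_card, Fintype.card_subtype]
    simp only [← Finset.filter_filter]
    exact Finset.card_filter_add_card_filter_not _
  rw [hd] at hz
  have hq : 0 < Fintype.card F := Fintype.card_pos
  refine Nat.eq_of_mul_eq_mul_right hq ?_
  rw [← pow_succ, ← hker]
  have : (Nat.card {v : V // B v v = 0 ∧ B v p = 0}
      + Nat.card {v : V // B v v = 0 ∧ B v p ≠ 0}) * Fintype.card F = Nat.card V := by
    rw [s2, hz, hV']
  rw [add_mul, ho] at this
  omega

lemma finrank_span_pair {F : Type} [Field F] {V : Type} [AddCommGroup V] [Module F V]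
    {p v : V} (hp0 : p ≠ 0) (hv : v ∉ Submodule.span F {p}) :
    Module.finrank F (Submodule.span F {p, v}) = 2 := by
  have hind : LinearIndependent F ![p, v] := by
    rw [LinearIndependent.pair_iff' hp0]
    intro a ha
    exact hv (Submodule.mem_span_singleton.mpr ⟨a, ha⟩)
  have := finrank_span_eq_card hind
  rwa [Matrix.range_cons_cons_empty, Fintype.card_fin] at this

lemma span_pair_eq {F : Type} [Field F] {V : Type} [AddCommGroup V] [Module F V]
    [FiniteDimensional F V] {W : Submodule F V} {p v : V} (hp0 : p ≠ 0) (hpW : p ∈ W)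
    (hW2 : Module.finrank F W = 2) (hv : v ∈ W) (hvp : v ∉ Submodule.span F {p}) :
    Submodule.span F {p, v} = W := by
  refine Submodule.eq_of_le_of_finrank_eq ?_ ?_
  · rw [Submodule.span_le]
    rintro x (rfl | rfl) <;> assumption
  · rw [finrank_span_pair hp0 hvp, hW2]

/-- In odd characteristic, totally singular subspaces are totally isotropic for the polar form. -/
lemma apply_eq_zero_of_singular {F : Type} [Field F] (hF : ringChar F ≠ 2)
    {V : Type} [AddCommGroup V] [Module F V] (B : LinearMap.BilinForm F V)
    (hB : ∀ x y, B x y = B y x) {W : Submodule F V} (hW : ∀ v ∈ W, B v v = 0)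
    {u v : V} (hu : u ∈ W) (hv : v ∈ W) : B u v = 0 := by
  have h := hW (u + v) (W.add_mem hu hv)
  simp only [map_add, LinearMap.add_apply, hW u hu, hW v hv, hB v u, zero_add, add_zero] at h
  rw [← two_mul] at h
  exact (mul_eq_zero.mp h).resolve_left (Ring.two_ne_zero hF)

/-- A totally singular plane through `p` is spanned by `p` and any of its `q² - q` vectors off
`⟨p⟩`, so these planes partition the singular vectors of `p^⊥` lying off `⟨p⟩`. -/
lemma card_planes {F : Type} [Field F] [Fintype F] (hF : ringChar F ≠ 2)
    {V : Type} [AddCommGroup V] [Module F V] [FiniteDimensional F V]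
    (B : LinearMap.BilinForm F V) (hB : ∀ x y, B x y = B y x)
    (p : V) (hp0 : p ≠ 0) (hp : B p p = 0) :
    Nat.card {W : Submodule F V // p ∈ W ∧ Module.finrank F W = 2 ∧ ∀ v ∈ W, B v v = 0}
        * (Fintype.card F ^ 2 - Fintype.card F) + Fintype.card F
      = Nat.card {v : V // B v v = 0 ∧ B v p = 0} := by
  classical
  have : Finite V := Module.finite_of_finite F
  have : Fintype V := Fintype.ofFinite V
  set L := {W : Submodule F V // p ∈ W ∧ Module.finrank F W = 2 ∧ ∀ v ∈ W, B v v = 0} with hL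
  have : Finite (Submodule F V) := Finite.of_injective _ (SetLike.coe_injective (A := Submodule F V))
  have : Fintype L := Fintype.ofFinite L
  have hcp : Nat.card (Submodule.span F {p}) = Fintype.card F := by
    rw [Module.natCard_eq_pow_finrank (K := F), finrank_span_singleton hp0, pow_one,
      Nat.card_eq_fintype_card]
  -- each plane contributes `q² - q` vectors
  have hfib : ∀ W : L, Nat.card {v : V // v ∈ W.1 ∧ v ∉ Submodule.span F {p}}
      = Fintype.card F ^ 2 - Fintype.card F := by
    rintro ⟨W, hpW, hW2, hW⟩
    have hle : Submodule.span F {p} ≤ W := by simpa using hpW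
    have hcW : Nat.card W = Fintype.card F ^ 2 := by
      rw [Module.natCard_eq_pow_finrank (K := F), hW2, Nat.card_eq_fintype_card]
    have : Nat.card {v : V // v ∈ W ∧ v ∉ Submodule.span F {p}} + Nat.card (Submodule.span F {p})
        = Nat.card W := by
      have := Set.ncard_sdiff_add_ncard_of_subset (s := (Submodule.span F {p} : Set V))
        (t := (W : Set V)) hle (Set.toFinite _)
      simp only [← Nat.card_coe_set_eq] at this
      exact this
    rw [hcp, hcW] at this
    simp only
    omega
  have hE : Nat.card (Σ W : L, {v : V // v ∈ W.1 ∧ v ∉ Submodule.span F {p}})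
      = Nat.card {v : V // (B v v = 0 ∧ B v p = 0) ∧ v ∉ Submodule.span F {p}} := by
    refine Nat.card_congr (Equiv.ofBijective
      (fun x => ⟨x.2.1, ⟨x.1.2.2.2 _ x.2.2.1, apply_eq_zero_of_singular hF B hB
        x.1.2.2.2 x.2.2.1 x.1.2.1⟩, x.2.2.2⟩) ⟨?_, ?_⟩)
    · rintro ⟨W, v, hv, hvp⟩ ⟨W', v', hv', hvp'⟩ h
      obtain rfl : v = v' := congrArg Subtype.val h
      obtain rfl : W = W' := Subtype.ext ((span_pair_eq hp0 W.2.1 W.2.2.1 hv hvp).symm.trans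
        (span_pair_eq hp0 W'.2.1 W'.2.2.1 hv' hvp))
      rfl
    · rintro ⟨v, ⟨hv, hvB⟩, hvp⟩
      refine ⟨⟨⟨Submodule.span F {p, v}, Submodule.subset_span (by simp), finrank_span_pair hp0 hvp, ?_⟩,
        ⟨v, Submodule.subset_span (by simp), hvp⟩⟩, rfl⟩
      intro u hu
      obtain ⟨a, b, rfl⟩ := Submodule.mem_span_pair.mp hu
      simp [hp, hv, hvB, hB p v]
  have hsub : Nat.card {v : V // (B v v = 0 ∧ B v p = 0) ∧ v ∉ Submodule.span F {p}}
      + Nat.card (Submodule.span F {p}) = Nat.card {v : V // B v v = 0 ∧ B v p = 0} := by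
    have := Set.ncard_sdiff_add_ncard_of_subset (s := (Submodule.span F {p} : Set V))
      (t := {v : V | B v v = 0 ∧ B v p = 0}) (by
        intro x hx
        obtain ⟨a, rfl⟩ := Submodule.mem_span_singleton.mp hx
        simp [hp]) (Set.toFinite _)
    simp only [← Nat.card_coe_set_eq] at this
    exact this
  rw [← hsub, ← hE, hcp, Nat.card_sigma]
  simp only [hfib, Finset.sum_const, Finset.card_univ, smul_eq_mul, Nat.card_eq_fintype_card]

/-- If `p ≠ 0` is singular for `M` and `S·p = λ·(M·p)` for some scalar `λ`
(including `S·p = 0`), then the number of 2-dimensional subspaces through `p` which are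
totally singular for `M` and totally isotropic for `S` equals `(q^{2n-2}−1)/(q−1)`
(stated multiplied through by `q − 1`). -/
theorem stmt_12 (q : ℕ) (F : Type) [Field F] [Fintype F]
    (hcard : Fintype.card F = q) (hodd : Odd q)
    (n : ℕ) (hn : 2 ≤ n)
    (M : Matrix (Fin (2 * n + 1)) (Fin (2 * n + 1)) F)
    (hMsymm : M.IsSymm) (hMinv : IsUnit M)
    (S : Matrix (Fin (2 * n + 1)) (Fin (2 * n + 1)) F)
    (hSanti : Sᵀ = -S)
    (p : Fin (2 * n + 1) → F) (hp : p ≠ 0) (hpsing : p ⬝ᵥ M.mulVec p = 0)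
    (lam : F) (hplam : S.mulVec p = lam • M.mulVec p) :
    (Nat.card {W : Submodule F (Fin (2 * n + 1) → F) //
        p ∈ W ∧ Module.finrank F W = 2 ∧
        (∀ v ∈ W, v ⬝ᵥ M.mulVec v = 0) ∧
        (∀ u ∈ W, ∀ v ∈ W, u ⬝ᵥ S.mulVec v = 0)} : ℤ) * ((q : ℤ) - 1) =
      (q : ℤ) ^ (2 * n - 2) - 1 := by
  have hF : ringChar F ≠ 2 := by
    intro h
    have := FiniteField.even_card_iff_char_two.mp h
    rw [hcard] at this
    exact (Nat.not_even_iff_odd.mpr hodd) (Nat.even_iff.mpr this)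
  have h2 : (2 : F) ≠ 0 := Ring.two_ne_zero hF
  let B : LinearMap.BilinForm F (Fin (2 * n + 1) → F) := Matrix.toBilin' M
  have hBa : ∀ u v, B u v = u ⬝ᵥ M.mulVec v := Matrix.toBilin'_apply' M
  have hB : ∀ x y, B x y = B y x := by
    intro x y
    rw [hBa, hBa, Matrix.dotProduct_mulVec, ← Matrix.mulVec_transpose, hMsymm.eq, dotProduct_comm]
  have hnd : B.SeparatingLeft := by
    have hdet : M.det ≠ 0 := ((Matrix.isUnit_iff_isUnit_det M).mp hMinv).ne_zero
    exact (LinearMap.BilinForm.nondegenerate_toBilin'_of_det_ne_zero' M hdet).1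
  have hS : ∀ x y : Fin (2 * n + 1) → F, x ⬝ᵥ S.mulVec y = -(y ⬝ᵥ S.mulVec x) := by
    intro x y
    rw [Matrix.dotProduct_mulVec, ← Matrix.mulVec_transpose, hSanti, Matrix.neg_mulVec,
      neg_dotProduct, dotProduct_comm]
  have hSd : ∀ x : Fin (2 * n + 1) → F, x ⬝ᵥ S.mulVec x = 0 := by
    intro x
    have h := hS x x
    rw [eq_neg_iff_add_eq_zero, ← two_mul] at h
    exact (mul_eq_zero.mp h).resolve_left h2
  -- isotropy for `S` is automatic
  have hcongr : Nat.card {W : Submodule F (Fin (2 * n + 1) → F) //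
        p ∈ W ∧ Module.finrank F W = 2 ∧
        (∀ v ∈ W, v ⬝ᵥ M.mulVec v = 0) ∧
        (∀ u ∈ W, ∀ v ∈ W, u ⬝ᵥ S.mulVec v = 0)} =
      Nat.card {W : Submodule F (Fin (2 * n + 1) → F) //
        p ∈ W ∧ Module.finrank F W = 2 ∧ ∀ v ∈ W, B v v = 0} := by
    refine Nat.card_congr (Equiv.subtypeEquivRight fun W => ?_)
    simp only [hBa]
    refine ⟨fun h => ⟨h.1, h.2.1, h.2.2.1⟩, fun ⟨hpW, hW2, hW⟩ => ⟨hpW, hW2, hW, ?_⟩⟩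
    -- write `W = ⟨p, z⟩`
    obtain ⟨z, hz, hzp⟩ : ∃ z ∈ W, z ∉ Submodule.span F {p} := by
      by_contra! hcon
      have := Submodule.finrank_mono (show W ≤ Submodule.span F {p} from hcon)
      rw [hW2, finrank_span_singleton hp] at this
      omega
    have hspan := span_pair_eq hp hpW hW2 hz hzp
    have hzB : B z p = 0 :=
      apply_eq_zero_of_singular hF B hB (fun v hv => (hBa v v).trans (hW v hv)) hz hpW
    have hzS : z ⬝ᵥ S.mulVec p = 0 := by
      rw [hplam, dotProduct_smul, ← hBa, hzB, smul_zero]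
    have hpS : p ⬝ᵥ S.mulVec z = 0 := by rw [hS, hzS, neg_zero]
    intro u hu v hv
    rw [← hspan] at hu hv
    obtain ⟨a, b, rfl⟩ := Submodule.mem_span_pair.mp hu
    obtain ⟨c, e, rfl⟩ := Submodule.mem_span_pair.mp hv
    simp [Matrix.mulVec_add, Matrix.mulVec_smul, hSd, hzS, hpS]
  have hpB : B p p = 0 := by rw [hBa, hpsing]
  have hP := card_planes hF B hB p hp hpB
  have hN := card_zeros_perp hF (2 * n - 1) (by rw [Module.finrank_fin_fun]; omega)
    ⟨n - 1, by omega⟩ B hB hnd p hp hpB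
  rw [hN, hcard] at hP
  rw [hcongr]
  have hq0 : 0 < q := hodd.pos
  have hq : q ≤ q ^ 2 := Nat.le_self_pow two_ne_zero q
  have hP' := congrArg (Nat.cast : ℕ → ℤ) hP
  rw [Nat.cast_add, Nat.cast_mul, Nat.cast_sub hq, show 2 * n - 1 = (2 * n - 2) + 1 by omega] at hP'
  push_cast at hP'
  have hqz : (q : ℤ) ≠ 0 := by exact_mod_cast hq0.ne'
  refine mul_right_cancel₀ hqz ?_
  linear_combination hP'
end
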